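/- The number β₂ = √3 · arctan(√3) (which equals π·√3/3) has irrationality measure at most 4.60106; that is, for every real κ > 4.60106, there exist only finitely many pairs (p, q) with p ∈ ℤ and q a positive integer such that |β₂ − p/q| < q^(−κ). -/

import Mathlib

section
open MeasureTheory Filter Topology Set

namespace PB

noncomputable def a (u : ℝ) : ℝ := Chebyshev.psi (Real.exp u) * Real.exp (-u)

noncomputable def CC : ℝ := Real.log 4 + 4

lemma CC_pos : 0 < CC := by
  have := Real.log_pos (show (1:ℝ) < 4 by norm_num)
  unfold CC; linarith

lemma a_nonneg (u : ℝ) : 0 ≤ a u :=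
  mul_nonneg (Chebyshev.psi_nonneg _) (Real.exp_pos _).le

lemma a_le (u : ℝ) : a u ≤ CC := by
  have h := Chebyshev.psi_le_const_mul_self (Real.exp_pos u).le
  calc a u ≤ (Real.log 4 + 4) * Real.exp u * Real.exp (-u) :=
        mul_le_mul_of_nonneg_right h (Real.exp_pos _).le
    _ = CC := by rw [mul_assoc, ← Real.exp_add]; simp [CC]

lemma a_neg {u : ℝ} (hu : u ≤ 0) : a u = 0 := by
  unfold a
  rw [Chebyshev.psi_eq_zero_of_le_one (by simpa using hu)]; simp

lemma a_meas : Measurable a := by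
  unfold a
  exact (Chebyshev.psi_mono.measurable.comp Real.measurable_exp).mul
    (Real.measurable_exp.comp measurable_neg)

lemma a_mono {u v : ℝ} (h : u ≤ v) : a u ≤ a v * Real.exp (v - u) := by
  unfold a
  rw [mul_assoc, ← Real.exp_add]
  have : -v + (v - u) = -u := by ring
  rw [this]
  exact mul_le_mul_of_nonneg_right (Chebyshev.psi_mono (Real.exp_le_exp.mpr h)) (Real.exp_pos _).le

noncomputable def g (s : ℂ) : ℂ :=
  (ArithmeticFunction.vonMangoldt.LFunctionResidueClassAux (1 : ZMod 1) s - 1) / s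

lemma g_cont : ContinuousOn g {s | 1 ≤ s.re} := by
  unfold g
  refine ((ArithmeticFunction.vonMangoldt.continuousOn_LFunctionResidueClassAux (1 : ZMod 1)).sub
    continuousOn_const).div continuousOn_id ?_
  intro s hs h0
  have h0 : s = 0 := h0
  rw [h0] at hs
  have : (1:ℝ) ≤ (0:ℂ).re := hs
  norm_num at this

lemma residue_one (n : ℕ) : ArithmeticFunction.vonMangoldt.residueClass (1 : ZMod 1) n
    = ArithmeticFunction.vonMangoldt n := by
  unfold ArithmeticFunction.vonMangoldt.residueClass
  apply Set.indicator_of_mem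
  simp only [Set.mem_ofPred_eq]
  exact Subsingleton.elim _ _

lemma psi_Icc (x : ℝ) : Chebyshev.psi x
    = ∑ k ∈ Finset.Icc 1 ⌊x⌋₊, (ArithmeticFunction.vonMangoldt k : ℝ) := by
  unfold Chebyshev.psi
  apply Finset.sum_congr _ fun _ _ => rfl
  ext k; simp [Nat.succ_le_iff]

lemma laplace_psi {s : ℂ} (hs : 1 < s.re) :
    LSeries (fun n => ((ArithmeticFunction.vonMangoldt n : ℝ) : ℂ)) s
      = s * ∫ u in Ioi (0:ℝ), (a u : ℂ) * Complex.exp (-(s - 1) * u) := by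
  rw [LSeries_eq_mul_integral_of_nonneg _ zero_le_one hs ?_ ?_]
  · congr 1
    have himg : Real.exp '' Ioi 0 = Ioi 1 := by
      ext x; constructor
      · rintro ⟨y, hy, rfl⟩; simpa using hy
      · intro hx
        have hx' : (1:ℝ) < x := hx
        exact ⟨Real.log x, Real.log_pos hx, Real.exp_log (by linarith)⟩
    rw [← himg, integral_image_eq_integral_abs_deriv_smul measurableSet_Ioi
      (fun x _ => (Real.hasDerivAt_exp x).hasDerivWithinAt) Real.exp_injective.injOn]
    refine setIntegral_congr_fun measurableSet_Ioi fun u hu => ?_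
    simp only [abs_of_pos (Real.exp_pos u)]
    have h1 : ((∑ k ∈ Finset.Icc 1 ⌊Real.exp u⌋₊, ((ArithmeticFunction.vonMangoldt k : ℝ) : ℂ)))
        = ((Chebyshev.psi (Real.exp u) : ℝ) : ℂ) := by
      rw [psi_Icc]; push_cast; rfl
    rw [h1]
    unfold a
    rw [Complex.real_smul, Complex.ofReal_exp, Complex.cpow_def_of_ne_zero (Complex.exp_ne_zero _),
      ← Complex.ofReal_exp u, ← Complex.ofReal_log (Real.exp_pos u).le, Real.log_exp]
    push_cast
    rw [mul_left_comm, ← Complex.exp_add, mul_assoc, ← Complex.exp_add]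
    congr 2
    ring
  · have h2 : ∀ n : ℕ, ∑ k ∈ Finset.Icc 1 n, (ArithmeticFunction.vonMangoldt k : ℝ)
        = Chebyshev.psi n := by
      intro n
      rw [psi_Icc, Nat.floor_natCast]
    simp only [h2, Real.rpow_one]
    refine Asymptotics.IsBigO.of_bound CC (Eventually.of_forall fun n => ?_)
    rw [Real.norm_of_nonneg (Chebyshev.psi_nonneg _), Real.norm_of_nonneg (Nat.cast_nonneg _)]
    exact Chebyshev.psi_le_const_mul_self (Nat.cast_nonneg _)
  · intro n; exact ArithmeticFunction.vonMangoldt_nonneg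

noncomputable def b (u : ℝ) : ℝ := if 0 < u then a u - 1 else 0

lemma b_meas : Measurable b :=
  Measurable.ite measurableSet_Ioi (a_meas.sub measurable_const) measurable_const

lemma b_le (u : ℝ) : |b u| ≤ CC + 1 := by
  unfold b
  split_ifs
  · rw [abs_le]; constructor <;> linarith [a_nonneg u, a_le u, CC_pos]
  · simp; linarith [CC_pos]

lemma exp_int {w : ℂ} (hw : 0 < w.re) :
    IntegrableOn (fun u : ℝ => Complex.exp (-w * u)) (Ioi 0) := by
  apply integrableOn_exp_mul_complex_Ioi
  simpa using hw

lemma b_exp_int {w : ℂ} (hw : 0 < w.re) :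
    Integrable (fun u : ℝ => (b u : ℂ) * Complex.exp (-w * u)) := by
  have h1 : IntegrableOn (fun u : ℝ => (b u : ℂ) * Complex.exp (-w * u)) (Ioi 0) := by
    refine Integrable.bdd_mul (c := CC + 1) (exp_int hw)
      (Complex.measurable_ofReal.comp b_meas).aestronglyMeasurable (ae_of_all _ fun u => ?_)
    rw [Complex.norm_real]; exact b_le u
  rw [← integrable_indicator_iff measurableSet_Ioi] at h1
  refine h1.congr (ae_of_all _ fun u => ?_)
  by_cases hu : 0 < u
  · rw [Set.indicator_of_mem (show u ∈ Ioi (0:ℝ) from hu)]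
  · rw [Set.indicator_of_notMem (show u ∉ Ioi (0:ℝ) from hu)]; simp [b, hu]

lemma laplace_b {s : ℂ} (hs : 1 < s.re) :
    ∫ u : ℝ, (b u : ℂ) * Complex.exp (-(s - 1) * u) = g s := by
  have hw : 0 < (s - 1).re := by simpa using hs
  have h0 : ∫ u : ℝ, (b u : ℂ) * Complex.exp (-(s - 1) * u)
      = ∫ u in Ioi (0:ℝ), ((a u : ℂ) * Complex.exp (-(s - 1) * u) - Complex.exp (-(s - 1) * u)) := by
    rw [← integral_indicator measurableSet_Ioi]
    congr 1; ext u
    by_cases hu : 0 < u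
    · rw [Set.indicator_of_mem (show u ∈ Ioi (0:ℝ) from hu)]; simp [b, hu]; ring
    · rw [Set.indicator_of_notMem (show u ∉ Ioi (0:ℝ) from hu)]; simp [b, hu]
  have hA : IntegrableOn (fun u : ℝ => (a u : ℂ) * Complex.exp (-(s - 1) * u)) (Ioi 0) := by
    refine Integrable.bdd_mul (c := CC) (exp_int hw)
      (Complex.measurable_ofReal.comp a_meas).aestronglyMeasurable (ae_of_all _ fun u => ?_)
    rw [Complex.norm_real, Real.norm_of_nonneg (a_nonneg u)]; exact a_le u
  rw [h0, integral_sub hA (exp_int hw), integral_exp_mul_complex_Ioi (by simpa using hs)]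
  have hs0 : s ≠ 0 := by rintro rfl; norm_num at hs
  have hs1 : s - 1 ≠ 0 := by intro h; rw [h] at hw; simp at hw
  have h3 := ArithmeticFunction.vonMangoldt.eqOn_LFunctionResidueClassAux (q := 1) (a := 1)
    isUnit_one hs
  simp only [residue_one] at h3
  rw [laplace_psi hs] at h3
  unfold g
  rw [h3]
  simp only [Complex.ofReal_zero, mul_zero, Complex.exp_zero, Nat.totient_one, Nat.cast_one, inv_one]
  field_simp
  ring

end PB

end

section
open MeasureTheory Filter Topology Set

namespace PB

noncomputable def K (v : ℝ) : ℝ := 2 * (1 - Real.cos v) / v ^ 2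
noncomputable def w (t : ℝ) : ℝ := max (1 - |t|) 0

lemma w_cont : Continuous w := by unfold w; fun_prop
lemma w_nonneg (t : ℝ) : 0 ≤ w t := le_max_right _ _
lemma w_zero {t : ℝ} (h : t ∉ Icc (-1:ℝ) 1) : w t = 0 := by
  unfold w
  apply max_eq_right
  by_contra h'
  push Not at h'
  have : |t| < 1 := by linarith
  rw [abs_lt] at this
  exact h ⟨this.1.le, this.2.le⟩
lemma w_supp : HasCompactSupport w := HasCompactSupport.intro isCompact_Icc fun _ h => w_zero h
lemma w_int : Integrable w := w_cont.integrable_of_hasCompactSupport w_supp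
lemma w_le (t : ℝ) : w t ≤ 1 := max_le (by linarith [abs_nonneg t]) zero_le_one

lemma K_nonneg (v : ℝ) : 0 ≤ K v := by
  unfold K
  have := Real.cos_le_one v
  apply div_nonneg _ (sq_nonneg _); linarith

lemma K_meas : Measurable K := by unfold K; fun_prop

lemma K_le (v : ℝ) : K v ≤ 5 * (1 + v ^ 2)⁻¹ := by
  unfold K
  rcases eq_or_ne v 0 with rfl | hv
  · simp
  have h2 : 0 < v ^ 2 := by positivity
  rw [← div_eq_mul_inv, div_le_div_iff₀ h2 (by positivity)]
  have h3 := Real.one_sub_sq_div_two_le_cos (x := v)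
  have h4 := Real.neg_one_le_cos v
  nlinarith

lemma K_int : Integrable K := by
  refine (integrable_inv_one_add_sq.const_mul 5).mono' K_meas.aestronglyMeasurable
    (ae_of_all _ fun v => ?_)
  rw [Real.norm_of_nonneg (K_nonneg v)]; exact K_le v

lemma K_eq {v : ℝ} (hv : v ≠ 0) :
    ∫ t : ℝ, (w t : ℂ) * Complex.exp (Complex.I * v * t) = K v := by
  have hv' : (v:ℂ) ≠ 0 := by exact_mod_cast hv
  have hiv : Complex.I * v ≠ 0 := mul_ne_zero Complex.I_ne_zero (by exact_mod_cast hv)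
  have hc : Continuous fun t : ℝ => (w t : ℂ) * Complex.exp (Complex.I * v * t) := by
    have := w_cont; fun_prop
  have h1 : ∫ t : ℝ, (w t : ℂ) * Complex.exp (Complex.I * v * t)
      = ∫ t in (-1:ℝ)..1, (w t : ℂ) * Complex.exp (Complex.I * v * t) := by
    rw [intervalIntegral.integral_of_le (by norm_num), ← integral_Icc_eq_integral_Ioc]
    symm
    apply setIntegral_eq_integral_of_forall_compl_eq_zero
    intro t ht; rw [w_zero ht]; simp
  rw [h1, ← intervalIntegral.integral_add_adjacent_intervals (b := 0)
    (hc.intervalIntegrable _ _) (hc.intervalIntegrable _ _)]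
  have hE : ∀ t : ℝ, HasDerivAt (fun t : ℝ => Complex.exp (Complex.I * v * t))
      (Complex.exp (Complex.I * v * t) * (Complex.I * v)) t := by
    intro t
    have := (((hasDerivAt_id (t:ℂ)).const_mul (Complex.I * v)).cexp).comp_ofReal
    simpa using this
  have hL : ∫ t in (-1:ℝ)..0, (w t : ℂ) * Complex.exp (Complex.I * v * t)
     = ((1 + ((0:ℝ):ℂ)) * Complex.exp (Complex.I * v * (0:ℝ)) / (Complex.I * v) - Complex.exp (Complex.I * v * (0:ℝ)) / (Complex.I * v)^2)
      - ((1 + ((-1:ℝ):ℂ)) * Complex.exp (Complex.I * v * (-1:ℝ)) / (Complex.I * v) - Complex.exp (Complex.I * v * (-1:ℝ)) / (Complex.I * v)^2) := by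
    rw [intervalIntegral.integral_congr (g := fun t : ℝ => (1 + (t:ℂ)) * Complex.exp (Complex.I * v * t))]
    · refine intervalIntegral.integral_eq_sub_of_hasDerivAt
        (f := fun t : ℝ => (1 + (t:ℂ)) * Complex.exp (Complex.I * v * t) / (Complex.I * v) - Complex.exp (Complex.I * v * t) / (Complex.I * v)^2) (fun t _ => ?_)
        (Continuous.intervalIntegrable (by fun_prop) _ _)
      have h2 : HasDerivAt (fun t : ℝ => (1 + (t:ℂ))) 1 t := by
        simpa using (hasDerivAt_id (t:ℂ)).comp_ofReal.const_add 1
      have h3 := ((h2.mul (hE t)).div_const (Complex.I * v)).sub ((hE t).div_const ((Complex.I * v)^2))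
      refine h3.congr_deriv ?_
      field_simp
      ring
    · intro t ht
      rw [uIcc_of_le (by norm_num)] at ht
      have : w t = 1 + t := by
        unfold w; rw [abs_of_nonpos ht.2, max_eq_left] <;> linarith [ht.1]
      simp only [this]; push_cast; ring
  have hR : ∫ t in (0:ℝ)..1, (w t : ℂ) * Complex.exp (Complex.I * v * t)
     = ((1 - ((1:ℝ):ℂ)) * Complex.exp (Complex.I * v * (1:ℝ)) / (Complex.I * v) + Complex.exp (Complex.I * v * (1:ℝ)) / (Complex.I * v)^2)
      - ((1 - ((0:ℝ):ℂ)) * Complex.exp (Complex.I * v * (0:ℝ)) / (Complex.I * v) + Complex.exp (Complex.I * v * (0:ℝ)) / (Complex.I * v)^2) := by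
    rw [intervalIntegral.integral_congr (g := fun t : ℝ => (1 - (t:ℂ)) * Complex.exp (Complex.I * v * t))]
    · refine intervalIntegral.integral_eq_sub_of_hasDerivAt
        (f := fun t : ℝ => (1 - (t:ℂ)) * Complex.exp (Complex.I * v * t) / (Complex.I * v) + Complex.exp (Complex.I * v * t) / (Complex.I * v)^2) (fun t _ => ?_)
        (Continuous.intervalIntegrable (by fun_prop) _ _)
      have h2 : HasDerivAt (fun t : ℝ => (1 - (t:ℂ))) (-1) t := by
        simpa using (hasDerivAt_id (t:ℂ)).comp_ofReal.const_sub 1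
      have h3 := ((h2.mul (hE t)).div_const (Complex.I * v)).add ((hE t).div_const ((Complex.I * v)^2))
      refine h3.congr_deriv ?_
      field_simp
      ring
    · intro t ht
      rw [uIcc_of_le (by norm_num)] at ht
      have : w t = 1 - t := by
        unfold w; rw [abs_of_nonneg ht.1, max_eq_left]; linarith [ht.2]
      simp only [this]; push_cast; ring
  rw [hL, hR]
  have hcos : ((Real.cos v : ℝ) : ℂ) = (Complex.exp (Complex.I * v) + Complex.exp (-(Complex.I * v))) / 2 := by
    rw [Complex.ofReal_cos, Complex.cos]; congr 2 <;> ring_nf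
  unfold K
  push_cast
  rw [← Complex.ofReal_cos, hcos]
  simp only [mul_zero, Complex.exp_zero, mul_one, mul_neg]
  field_simp
  ring_nf
  simp only [Complex.I_sq, Complex.I_pow_three]
  ring

lemma fejer_eps {l : ℝ} (hl : 0 < l) (y : ℝ) {e : ℝ} (he : 0 < e) :
    ∫ u : ℝ, ((b u * Real.exp (-e * u) * K (l * (y - u)) : ℝ) : ℂ)
     = ∫ t : ℝ, (w t : ℂ) * Complex.exp (Complex.I * (l * y) * t) * g (1 + e + Complex.I * (l * t)) := by
  have hw1 : ∀ t : ℝ, g (1 + e + Complex.I * (l * t))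
     = ∫ u : ℝ, (b u : ℂ) * Complex.exp (-(e + Complex.I * (l * t)) * u) := by
    intro t
    rw [← laplace_b (by simp [he])]
    congr 1; ext u; congr 2; ring
  simp only [hw1, ← integral_const_mul]
  rw [integral_integral_swap]
  · apply integral_congr_ae
    have : ∀ᵐ u : ℝ, u ≠ y := by
      simp [ae_iff]
    filter_upwards [this] with u hu
    have hv : l * (y - u) ≠ 0 := mul_ne_zero hl.ne' (sub_ne_zero.mpr hu.symm)
    push_cast
    rw [← K_eq hv, ← integral_const_mul]
    congr 1; ext t
    push_cast
    have : ∀ A B C D E : ℂ, Complex.exp A * Complex.exp B = Complex.exp C * Complex.exp D →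
      E * Complex.exp A * ((w t : ℂ) * Complex.exp B) = w t * Complex.exp C * (E * Complex.exp D) := by
      intro A B C D E h
      linear_combination E * w t * h
    apply this
    rw [← Complex.exp_add, ← Complex.exp_add]; congr 1; ring
  · have hb : Integrable (fun u : ℝ => |b u| * Real.exp (-e * u)) := by
      have := (b_exp_int (w := (e:ℂ)) (by simpa using he)).norm
      refine this.congr (ae_of_all _ fun u => ?_)
      simp [Complex.norm_exp]
    have hm : AEStronglyMeasurable (Function.uncurry fun (t u : ℝ) => (w t : ℂ) * Complex.exp (Complex.I * (l * y) * t)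
        * ((b u : ℂ) * Complex.exp (-(e + Complex.I * (l * t)) * u))) (volume.prod volume) := by
      apply Measurable.aestronglyMeasurable
      have := w_cont.measurable
      have := b_meas
      unfold Function.uncurry
      fun_prop
    refine (w_int.mul_prod hb).mono' hm (ae_of_all _ fun p => ?_)
    simp only [Function.uncurry, norm_mul, Complex.norm_exp, Complex.norm_real, Real.norm_eq_abs, abs_of_nonneg (w_nonneg _)]
    simp

lemma fejer {l : ℝ} (hl : 0 < l) (y : ℝ) :
    ((∫ u : ℝ, b u * K (l * (y - u)) : ℝ) : ℂ)
     = ∫ t : ℝ, (w t : ℂ) * Complex.exp (Complex.I * (l * y) * t) * g (1 + Complex.I * (l * t)) := by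
  have hKi : Integrable fun u : ℝ => K (l * (y - u)) := by
    have := (K_int.comp_mul_left' hl.ne').comp_sub_left y
    exact this
  have hKm : Measurable fun u : ℝ => K (l * (y - u)) := K_meas.comp (by fun_prop)
  have L1 : Tendsto (fun n : ℕ => ∫ u : ℝ, ((b u * Real.exp (-(1 / ((n:ℝ) + 1)) * u) * K (l * (y - u)) : ℝ) : ℂ)) atTop
      (𝓝 (∫ u : ℝ, ((b u * K (l * (y - u)) : ℝ) : ℂ))) := by
    refine tendsto_integral_of_dominated_convergence (fun u => (CC + 1) * K (l * (y - u))) ?_ (hKi.const_mul _) ?_ ?_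
    · intro n
      apply Measurable.aestronglyMeasurable
      have := b_meas
      fun_prop
    · intro n
      refine ae_of_all _ fun u => ?_
      rw [Complex.norm_real, norm_mul, Real.norm_of_nonneg (K_nonneg _)]
      refine mul_le_mul_of_nonneg_right ?_ (K_nonneg _)
      rw [norm_mul]
      by_cases hu : 0 < u
      · have h1 : Real.exp (-(1 / ((n:ℝ) + 1)) * u) ≤ 1 := by
          rw [Real.exp_le_one_iff]
          have : 0 < 1 / ((n:ℝ) + 1) := by positivity
          nlinarith
        rw [Real.norm_of_nonneg (Real.exp_pos _).le]
        calc ‖b u‖ * _ ≤ ‖b u‖ * 1 := mul_le_mul_of_nonneg_left h1 (norm_nonneg _)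
          _ ≤ CC + 1 := by rw [mul_one]; exact b_le u
      · simp [b, hu]; linarith [CC_pos]
    · refine ae_of_all _ fun u => ?_
      have h2 : Tendsto (fun n : ℕ => Real.exp (-(1 / ((n:ℝ) + 1)) * u)) atTop (𝓝 1) := by
        have h3 := (tendsto_one_div_add_atTop_nhds_zero_nat (𝕜 := ℝ)).neg.mul_const u
        have h4 := (Real.continuous_exp.tendsto _).comp h3
        simpa [Function.comp_def] using h4
      have h5 := ((h2.const_mul (b u)).mul_const (K (l * (y - u))))
      rw [mul_one] at h5
      exact (Complex.continuous_ofReal.tendsto _).comp h5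
  have L2 : Tendsto (fun n : ℕ => ∫ t : ℝ, (w t : ℂ) * Complex.exp (Complex.I * (l * y) * t) * g (1 + ((1 / ((n:ℝ) + 1) : ℝ) : ℂ) + Complex.I * (l * t))) atTop
      (𝓝 (∫ t : ℝ, (w t : ℂ) * Complex.exp (Complex.I * (l * y) * t) * g (1 + Complex.I * (l * t)))) := by
    -- bound of g on compact
    have hcomp : IsCompact ((fun q : ℝ × ℝ => (1 + (q.1 : ℂ) + Complex.I * (l * q.2))) '' (Icc (0:ℝ) 1 ×ˢ Icc (-1:ℝ) 1)) :=
      (isCompact_Icc.prod isCompact_Icc).image (by fun_prop)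
    have hsub : ((fun q : ℝ × ℝ => (1 + (q.1 : ℂ) + Complex.I * (l * q.2))) '' (Icc (0:ℝ) 1 ×ˢ Icc (-1:ℝ) 1)) ⊆ {s | 1 ≤ s.re} := by
      rintro _ ⟨q, hq, rfl⟩
      have : 0 ≤ q.1 := hq.1.1
      simpa using this
    obtain ⟨M, hM⟩ := hcomp.exists_bound_of_continuousOn (g_cont.mono hsub)
    have gcont : ∀ e : ℝ, 0 ≤ e → Continuous fun t : ℝ => g (1 + (e:ℂ) + Complex.I * (l * t)) := by
      intro e he
      refine g_cont.comp_continuous (by fun_prop) ?_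
      intro t; simpa using he
    refine tendsto_integral_of_dominated_convergence (fun t => w t * M) ?_ (w_int.mul_const _) ?_ ?_
    · intro n
      apply Continuous.aestronglyMeasurable
      have := w_cont
      have := gcont (1 / ((n:ℝ) + 1)) (by positivity)
      fun_prop
    · intro n
      refine ae_of_all _ fun t => ?_
      by_cases ht : t ∈ Icc (-1:ℝ) 1
      · have h1 := hM _ (mem_image_of_mem (fun q : ℝ × ℝ => (1 + (q.1 : ℂ) + Complex.I * (l * q.2)))
          (show ((1 / ((n:ℝ) + 1)), t) ∈ Icc (0:ℝ) 1 ×ˢ Icc (-1:ℝ) 1 from ⟨⟨by positivity, by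
            rw [div_le_one (by positivity)]; linarith [(Nat.cast_nonneg n : (0:ℝ) ≤ n)]⟩, ht⟩))
        simp only [] at h1
        rw [norm_mul, norm_mul, Complex.norm_real, Real.norm_of_nonneg (w_nonneg t)]
        have h2 : ‖Complex.exp (Complex.I * (l * y) * t)‖ = 1 := by
          rw [Complex.norm_exp]; simp
        rw [h2, mul_one]
        exact mul_le_mul_of_nonneg_left h1 (w_nonneg t)
      · rw [w_zero ht]; simp
    · refine ae_of_all _ fun t => ?_
      apply Tendsto.const_mul
      have h6 : ContinuousWithinAt g {s | 1 ≤ s.re} (1 + Complex.I * (l * t)) := g_cont _ (by simp)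
      refine h6.tendsto.comp (tendsto_nhdsWithin_iff.mpr ⟨?_, ?_⟩)
      · have h3 := (Complex.continuous_ofReal.tendsto _).comp (tendsto_one_div_add_atTop_nhds_zero_nat (𝕜 := ℝ))
        have h4 := (h3.const_add 1).add_const (Complex.I * (l * t))
        simpa using h4
      · refine Eventually.of_forall fun n => ?_
        have : (0:ℝ) ≤ 1 / ((n:ℝ) + 1) := by positivity
        show (1:ℝ) ≤ _
        simp only [Complex.add_re, Complex.one_re, Complex.ofReal_re]
        simpa using this
  have heq : ∀ n : ℕ, _ := fun n : ℕ => fejer_eps hl y (e := 1 / ((n:ℝ) + 1)) (by positivity)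
  rw [← integral_complex_ofReal]
  refine tendsto_nhds_unique L1 ?_
  simp_rw [heq]
  exact L2

lemma fejer_tendsto {l : ℝ} (hl : 0 < l) :
    Tendsto (fun y : ℝ => ∫ u : ℝ, b u * K (l * (y - u))) atTop (𝓝 0) := by
  have h := Real.tendsto_integral_exp_smul_cocompact (fun t : ℝ => (w t : ℂ) * g (1 + Complex.I * (l * t)))
  have h1 : Tendsto (fun y : ℝ => -(l / (2 * Real.pi)) * y) atTop (cocompact ℝ) := by
    have : Tendsto (fun y : ℝ => -(l / (2 * Real.pi)) * y) atTop atBot :=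
      tendsto_id.const_mul_atTop_of_neg (by have := Real.pi_pos; have : 0 < l / (2 * Real.pi) := by positivity
                                            linarith)
    exact this.mono_right atBot_le_cocompact
  have h2 := h.comp h1
  have h3 : Tendsto (fun y : ℝ => ((∫ u : ℝ, b u * K (l * (y - u)) : ℝ) : ℂ)) atTop (𝓝 0) := by
    refine h2.congr fun y => ?_
    rw [fejer hl y]
    simp only [Function.comp]
    congr 1; ext t
    rw [Circle.smul_def, Real.fourierChar_apply, smul_eq_mul]
    have : (2 * Real.pi * -(t * (-(l / (2 * Real.pi)) * y))) = l * y * t := by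
      field_simp
    rw [this]
    push_cast
    rw [show (l:ℂ) * y * t * Complex.I = Complex.I * (l * y) * t by ring]
    ring
  have h4 := (Complex.continuous_re.tendsto _).comp h3
  simpa [Function.comp_def] using h4

end PB

end

section
open MeasureTheory Filter Topology Set

namespace PB

noncomputable def H (l y : ℝ) : ℝ := ∫ v : ℝ, a (y - v / l) * K v
noncomputable def kk : ℝ := ∫ v : ℝ, K v
noncomputable def kap (L : ℝ) : ℝ := ∫ v in Icc (-L) L, K v

lemma kk_pos : 0 < kk := by
  unfold kk
  rw [integral_pos_iff_support_of_nonneg K_nonneg K_int]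
  refine lt_of_lt_of_le ?_ (measure_mono (s := Ioo (1:ℝ) 2) ?_)
  · simp
  · intro v hv
    have h1 : Real.cos v < 1 := by
      have := Real.cos_lt_cos_of_nonneg_of_le_pi (x := 0) (y := v) le_rfl
        (by linarith [hv.2, Real.pi_gt_three]) (by linarith [hv.1])
      simpa using this
    have h2 : 0 < v := by linarith [hv.1]
    have : 0 < K v := by
      unfold K
      have : 0 < 1 - Real.cos v := by linarith
      positivity
    exact this.ne'

lemma kap_tendsto : Tendsto (fun n : ℕ => kap n) atTop (𝓝 kk) := by
  have h := intervalIntegral_tendsto_integral K_int (a := fun n : ℕ => -(n:ℝ)) (b := fun n : ℕ => (n:ℝ))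
    (l := atTop) (tendsto_neg_atTop_atBot.comp tendsto_natCast_atTop_atTop) tendsto_natCast_atTop_atTop
  refine h.congr fun n => ?_
  rw [intervalIntegral.integral_of_le (by linarith [(Nat.cast_nonneg n : (0:ℝ) ≤ n)]), ← integral_Icc_eq_integral_Ioc]
  rfl

lemma aK_int (l y : ℝ) : Integrable fun v : ℝ => a (y - v / l) * K v := by
  refine (K_int.const_mul CC).mono' ?_ (ae_of_all _ fun v => ?_)
  · apply Measurable.aestronglyMeasurable
    exact (a_meas.comp (by fun_prop)).mul K_meas
  · rw [norm_mul, Real.norm_of_nonneg (K_nonneg v), Real.norm_of_nonneg (a_nonneg _)]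
    exact mul_le_mul_of_nonneg_right (a_le _) (K_nonneg v)

lemma bK_int (l y : ℝ) : Integrable fun v : ℝ => b (y - v / l) * K v := by
  refine (K_int.const_mul (CC+1)).mono' ?_ (ae_of_all _ fun v => ?_)
  · apply Measurable.aestronglyMeasurable
    exact (b_meas.comp (by fun_prop)).mul K_meas
  · rw [norm_mul, Real.norm_of_nonneg (K_nonneg v)]
    exact mul_le_mul_of_nonneg_right (b_le _) (K_nonneg v)

lemma H_tendsto {l : ℝ} (hl : 0 < l) : Tendsto (H l) atTop (𝓝 kk) := by
  have h0 : Tendsto (fun y : ℝ => ∫ v : ℝ, b (y - v / l) * K v) atTop (𝓝 0) := by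
    have h := (fejer_tendsto hl).const_mul l
    rw [mul_zero] at h
    refine h.congr fun y => ?_
    have h1 := integral_sub_left_eq_self (fun u => b u * K (l * (y - u))) volume y
    rw [← h1]
    have h2 := Measure.integral_comp_div (fun v : ℝ => b (y - v / l) * K v) (1/l)
    have h3 := Measure.integral_comp_mul_left (fun v : ℝ => b (y - v / l) * K v) l
    rw [smul_eq_mul, abs_of_pos (inv_pos.mpr hl)] at h3
    have h4 : (∫ (x : ℝ), b (y - x) * K (l * (y - (y - x)))) = ∫ x : ℝ, b (y - l * x / l) * K (l * x) := by
      congr 1; ext x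
      rw [mul_div_cancel_left₀ _ hl.ne']; congr 2; ring
    rw [h4, h3]; field_simp
  have h1 : Tendsto (fun y : ℝ => ∫ v : ℝ, (if 0 < y - v / l then 1 else 0) * K v) atTop (𝓝 (∫ v, K v)) := by
    refine tendsto_integral_filter_of_dominated_convergence K ?_ ?_ K_int ?_
    · refine Eventually.of_forall fun y => Measurable.aestronglyMeasurable ?_
      refine Measurable.mul (Measurable.ite ?_ measurable_const measurable_const) K_meas
      exact measurableSet_lt measurable_const (by fun_prop)
    · refine Eventually.of_forall fun y => ae_of_all _ fun v => ?_
      rw [norm_mul, Real.norm_of_nonneg (K_nonneg v)]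
      have := K_nonneg v
      split_ifs <;> simp [this]
    · refine ae_of_all _ fun v => tendsto_const_nhds.congr' ?_
      filter_upwards [eventually_gt_atTop (v / l)] with y hy
      rw [if_pos (by linarith), one_mul]
  have h2 := h0.add h1
  rw [zero_add] at h2
  refine h2.congr fun y => ?_
  have hi : Integrable fun v : ℝ => (if 0 < y - v / l then (1:ℝ) else 0) * K v := by
    have := (aK_int l y).sub (bK_int l y)
    refine this.congr (ae_of_all _ fun v => ?_)
    simp only [Pi.sub_apply, b]
    split_ifs with h
    · ring
    · rw [a_neg (not_lt.mp h)]; ring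
  rw [← integral_add (bK_int l y) hi]
  unfold H
  congr 1; ext v
  simp only [b]
  split_ifs with h
  · ring
  · rw [a_neg (not_lt.mp h)]; ring

lemma upper {d : ℝ} (hd : 0 < d) (y : ℝ) :
    a y * Real.exp (-(2*d)) * kap (1/d) ≤ H (1/d^2) (y + d) := by
  unfold kap H
  rw [← integral_const_mul]
  calc _ ≤ ∫ v in Icc (-(1/d)) (1/d), a (y + d - v / (1/d^2)) * K v := by
        refine setIntegral_mono_on (K_int.const_mul _).integrableOn (aK_int _ _).integrableOn measurableSet_Icc fun v hv => ?_
        refine mul_le_mul_of_nonneg_right ?_ (K_nonneg v)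
        have e1 : v / (1/d^2) = v * d^2 := by field_simp
        have h1 : v * d^2 ≤ d := by
          have := mul_le_mul_of_nonneg_right hv.2 (sq_nonneg d)
          calc _ ≤ _ := this
            _ = d := by field_simp
        have h2 : -d ≤ v * d^2 := by
          have := mul_le_mul_of_nonneg_right hv.1 (sq_nonneg d)
          calc -d = _ := by field_simp
            _ ≤ _ := this
        rw [e1]
        have h3 := a_mono (show y ≤ y + d - v * d^2 by linarith)
        have h4 : Real.exp (y + d - v * d^2 - y) ≤ Real.exp (2*d) := Real.exp_le_exp.mpr (by linarith)
        calc a y * Real.exp (-(2*d)) ≤ (a (y + d - v * d^2) * Real.exp (2*d)) * Real.exp (-(2*d)) :=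
              mul_le_mul_of_nonneg_right (h3.trans (mul_le_mul_of_nonneg_left h4 (a_nonneg _))) (Real.exp_pos _).le
          _ = _ := by rw [mul_assoc, ← Real.exp_add]; simp
    _ ≤ _ := setIntegral_le_integral (aK_int _ _) (ae_of_all _ fun v => mul_nonneg (a_nonneg _) (K_nonneg v))

lemma lower {d : ℝ} (hd : 0 < d) (y : ℝ) :
    H (1/d^2) (y - d) ≤ a y * Real.exp (2*d) * kk + CC * (kk - kap (1/d)) := by
  unfold H
  rw [← integral_add_compl (measurableSet_Icc (a := -(1/d)) (b := 1/d)) (aK_int _ _)]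
  have hc : ∫ v in (Icc (-(1/d)) (1/d))ᶜ, K v = kk - kap (1/d) := by
    unfold kk kap
    rw [← integral_add_compl (measurableSet_Icc (a := -(1/d)) (b := 1/d)) K_int]; ring
  refine add_le_add ?_ ?_
  · calc _ ≤ ∫ v in Icc (-(1/d)) (1/d), a y * Real.exp (2*d) * K v := by
          refine setIntegral_mono_on (aK_int _ _).integrableOn (K_int.const_mul _).integrableOn measurableSet_Icc fun v hv => ?_
          refine mul_le_mul_of_nonneg_right ?_ (K_nonneg v)
          have e1 : v / (1/d^2) = v * d^2 := by field_simp
          have h1 : v * d^2 ≤ d := by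
            have := mul_le_mul_of_nonneg_right hv.2 (sq_nonneg d)
            calc _ ≤ _ := this
              _ = d := by field_simp
          have h2 : -d ≤ v * d^2 := by
            have := mul_le_mul_of_nonneg_right hv.1 (sq_nonneg d)
            calc -d = _ := by field_simp
              _ ≤ _ := this
          rw [e1]
          have h3 := a_mono (show y - d - v * d^2 ≤ y by linarith)
          exact h3.trans (mul_le_mul_of_nonneg_left (Real.exp_le_exp.mpr (by linarith)) (a_nonneg _))
      _ ≤ ∫ v, a y * Real.exp (2*d) * K v :=
          setIntegral_le_integral (K_int.const_mul _) (ae_of_all _ fun v => mul_nonneg (mul_nonneg (a_nonneg _) (Real.exp_pos _).le) (K_nonneg v))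
      _ = _ := by rw [integral_const_mul]; rfl
  · rw [← hc, ← integral_const_mul]
    refine setIntegral_mono_on (aK_int _ _).integrableOn (K_int.const_mul _).integrableOn measurableSet_Icc.compl fun v _ => ?_
    exact mul_le_mul_of_nonneg_right (a_le _) (K_nonneg v)

lemma a_tendsto : Tendsto a atTop (𝓝 1) := by
  have hd : Tendsto (fun n : ℕ => 1 / (n:ℝ)) atTop (𝓝 0) := tendsto_one_div_atTop_nhds_zero_nat
  have he : Tendsto (fun n : ℕ => Real.exp (2 * (1 / (n:ℝ)))) atTop (𝓝 1) := by
    have := (Real.continuous_exp.tendsto _).comp (hd.const_mul 2)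
    simpa [Function.comp_def] using this
  have he' : Tendsto (fun n : ℕ => Real.exp (-(2 * (1 / (n:ℝ))))) atTop (𝓝 1) := by
    have := (Real.continuous_exp.tendsto _).comp (hd.const_mul 2).neg
    simpa [Function.comp_def] using this
  rw [tendsto_order]
  constructor
  · intro c hc
    have h1 : Tendsto (fun n : ℕ => c * Real.exp (2 * (1 / (n:ℝ))) * kk + CC * (kk - kap n)) atTop
        (𝓝 (c * 1 * kk + CC * (kk - kk))) :=
      ((he.const_mul c).mul_const kk).add ((kap_tendsto.const_sub kk).const_mul CC)
    have h2 := (h1.eventually_lt_const (show _ < kk by have := kk_pos; nlinarith)).and (eventually_gt_atTop 0)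
    obtain ⟨n, hn, hn0⟩ := h2.exists
    have hn' : (0:ℝ) < 1 / (n:ℝ) := by positivity
    have h3 := (H_tendsto (l := 1/(1/(n:ℝ))^2) (by positivity)).comp (tendsto_atTop_add_const_right atTop (-(1/(n:ℝ))) tendsto_id)
    filter_upwards [h3.eventually_const_lt hn] with y hy
    have h4 := lower hn' y
    rw [one_div_one_div] at h4
    simp only [Function.comp, id, ← sub_eq_add_neg] at hy
    by_contra hcon
    push Not at hcon
    have : a y * Real.exp (2 * (1 / (n:ℝ))) * kk ≤ c * Real.exp (2 * (1 / (n:ℝ))) * kk := by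
      have := kk_pos
      gcongr
    linarith
  · intro c hc
    have h1 : Tendsto (fun n : ℕ => c * Real.exp (-(2 * (1 / (n:ℝ)))) * kap n) atTop (𝓝 (c * 1 * kk)) :=
      (he'.const_mul c).mul kap_tendsto
    have h2 := ((h1.eventually_const_lt (show kk < _ by have := kk_pos; nlinarith)).and (eventually_gt_atTop 0)).and (kap_tendsto.eventually_const_lt kk_pos)
    obtain ⟨n, ⟨hn, hn0⟩, hk⟩ := h2.exists
    have hn' : (0:ℝ) < 1 / (n:ℝ) := by positivity
    have h3 := (H_tendsto (l := 1/(1/(n:ℝ))^2) (by positivity)).comp (tendsto_atTop_add_const_right atTop (1/(n:ℝ)) tendsto_id)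
    filter_upwards [h3.eventually_lt_const hn] with y hy
    have h4 := upper hn' y
    rw [one_div_one_div] at h4
    simp only [Function.comp, id] at hy
    by_contra hcon
    push Not at hcon
    have : c * Real.exp (-(2 * (1 / (n:ℝ)))) * kap n ≤ a y * Real.exp (-(2 * (1 / (n:ℝ)))) * kap n := by
      gcongr
    linarith

theorem psi_tendsto : Tendsto (fun x : ℝ => Chebyshev.psi x / x) atTop (𝓝 1) := by
  refine (a_tendsto.comp Real.tendsto_log_atTop).congr' ?_
  filter_upwards [eventually_gt_atTop 0] with x hx
  simp only [Function.comp, a]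
  rw [Real.exp_neg, Real.exp_log hx]; rfl

theorem theta_tendsto : Tendsto (fun x : ℝ => Chebyshev.theta x / x) atTop (𝓝 1) := by
  have h := Chebyshev.isBigO_psi_sub_theta_sqrt
  have h1 : Asymptotics.IsLittleO atTop Real.sqrt (fun x : ℝ => x) := by
    rw [Asymptotics.isLittleO_iff_tendsto (by rintro x rfl; simp)]
    simp only [Real.sqrt_div_self]
    exact tendsto_inv_atTop_zero.comp Real.tendsto_sqrt_atTop
  have h2 := (h.trans_isLittleO h1).tendsto_div_nhds_zero
  have h3 := psi_tendsto.sub h2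
  rw [sub_zero] at h3
  refine h3.congr fun x => ?_
  simp only [Pi.sub_apply]; ring

end PB

end

section
open Filter Topology Set

namespace PB

lemma meas_finite (β κ : ℝ) (hκ : 0 ≤ κ)
    (h : ∃ Q : ℕ, ∀ q : ℕ, Q ≤ q → 0 < q → ∀ p : ℤ, (q:ℝ) ^ (-κ) ≤ |β - p / q|) :
    {pq : ℤ × ℕ+ | |β - (pq.1 : ℝ) / ((pq.2 : ℕ) : ℝ)| < ((pq.2 : ℕ) : ℝ) ^ (-κ)}.Finite := by
  obtain ⟨Q, hQ⟩ := h
  set P : ℤ := ⌈(|β| + 1) * Q⌉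
  have hfin : ((fun x : ℤ × ℕ+ => (x.1, (x.2 : ℕ))) ⁻¹' ((Icc (-P) P : Set ℤ) ×ˢ (Icc 0 Q : Set ℕ))).Finite := by
    refine Set.Finite.preimage ?_ ((finite_Icc _ _).prod (finite_Icc _ _))
    rintro ⟨x1, x2⟩ _ ⟨y1, y2⟩ _ hxy
    simp only [Prod.mk.injEq] at hxy
    exact Prod.ext hxy.1 (PNat.coe_injective hxy.2)
  refine hfin.subset ?_
  rintro ⟨p, q⟩ hpq
  simp only [mem_ofPred_eq] at hpq
  have hq : (q : ℕ) < Q := by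
    by_contra hcon
    exact absurd hpq (not_lt.mpr (hQ q (not_lt.mp hcon) q.pos p))
  have hq1 : (1:ℝ) ≤ ((q:ℕ):ℝ) := by exact_mod_cast q.pos
  have h1 : ((q : ℕ) : ℝ) ^ (-κ) ≤ 1 := Real.rpow_le_one_of_one_le_of_nonpos hq1 (by linarith)
  have h2 : |(p:ℝ) / ((q:ℕ):ℝ)| ≤ |β| + 1 := by
    have h3 := abs_sub_abs_le_abs_sub ((p:ℝ) / ((q:ℕ):ℝ)) β
    rw [abs_sub_comm] at h3
    linarith
  rw [abs_div, abs_of_pos (by linarith : (0:ℝ) < ((q:ℕ):ℝ)), div_le_iff₀ (by linarith)] at h2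
  have h4 : |(p:ℝ)| ≤ P := by
    have : (q:ℕ) ≤ (Q:ℝ) := by exact_mod_cast hq.le
    have h5 : (|β| + 1) * ((q:ℕ):ℝ) ≤ (|β| + 1) * Q := by
      have := abs_nonneg β; gcongr
    exact (h2.trans h5).trans (Int.le_ceil _)
  have h6 : |p| ≤ P := by exact_mod_cast h4
  rw [abs_le] at h6
  exact ⟨h6, Nat.zero_le _, hq.le⟩

theorem meas_lemma (β κ τ σ ρ : ℝ) (a b : ℕ → ℤ) (hτ : 0 < τ) (hσ : 0 ≤ σ) (hρ : 0 ≤ ρ)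
    (h1 : 1 + σ / τ < κ) (h2 : ρ / τ < κ)
    (hL : ∀ᶠ m : ℕ in atTop, |b m * β - a m| ≤ Real.exp (-τ * m))
    (hb : ∀ᶠ m : ℕ in atTop, |(b m : ℝ)| ≤ Real.exp (σ * m))
    (hl : ∀ᶠ m : ℕ in atTop, 0 < |(b m : ℝ)| ∧ Real.exp (-ρ * m) * |(b m : ℝ)| ≤ |b m * β - a m|) :
    {pq : ℤ × ℕ+ | |β - (pq.1 : ℝ) / ((pq.2 : ℕ) : ℝ)| < ((pq.2 : ℕ) : ℝ) ^ (-κ)}.Finite := by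
  have hst : 0 ≤ σ / τ := by positivity
  apply meas_finite _ _ (by linarith)
  obtain ⟨M, hM⟩ := eventually_atTop.mp (hL.and (hb.and hl))
  -- q conditions
  have hlog : Tendsto (fun q : ℕ => Real.log q) atTop atTop := Real.tendsto_log_atTop.comp tendsto_natCast_atTop_atTop
  have e1 := hlog.eventually_ge_atTop (τ * M)
  have e2 := (hlog.const_mul_atTop (sub_pos.mpr h1)).eventually_gt_atTop (Real.log 2 + σ * (Real.log 2 / τ + 1))
  have e3 := (hlog.const_mul_atTop (sub_pos.mpr h2)).eventually_ge_atTop (ρ * (Real.log 2 / τ + 1))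
  obtain ⟨Q, hQ⟩ := eventually_atTop.mp (e1.and (e2.and e3))
  refine ⟨Q, fun q hqQ hq p => ?_⟩
  obtain ⟨e1, e2, e3⟩ := hQ q hqQ
  have hq' : (0:ℝ) < q := by exact_mod_cast hq
  have hl2 : 0 < Real.log 2 := Real.log_pos (by norm_num)
  set m := ⌈(Real.log 2 + Real.log q) / τ⌉₊ with hm
  have hm1 : (Real.log 2 + Real.log q) / τ ≤ m := Nat.le_ceil _
  have hm2 : (m:ℝ) < (Real.log 2 + Real.log q) / τ + 1 := by
    apply Nat.ceil_lt_add_one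
    have : 0 ≤ τ * M := by positivity
    apply div_nonneg _ hτ.le; linarith
  have hmM : M ≤ m := by
    have : (M:ℝ) ≤ m := by
      refine le_trans ?_ hm1
      rw [le_div_iff₀ hτ]; linarith
    exact_mod_cast this
  obtain ⟨hL, hb, hb0, hl⟩ := hM m hmM
  have hqk : (q:ℝ) ^ (-κ) = Real.exp (-κ * Real.log q) := by
    rw [Real.rpow_def_of_pos hq']; ring_nf
  by_contra hcon
  push Not at hcon
  have hkey : |(b m : ℝ)| * |β - p / q| < |(b m : ℝ)| * (q:ℝ) ^ (-κ) := mul_lt_mul_of_pos_left hcon hb0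
  by_cases hz : b m * p - a m * q = 0
  · have hz' : (a m : ℝ) = b m * (p / q) := by
      have : (b m : ℝ) * p - a m * q = 0 := by exact_mod_cast hz
      field_simp; linarith
    rw [hz', ← mul_sub, abs_mul, mul_comm (Real.exp _)] at hl
    have h3 : Real.exp (-ρ * m) < (q:ℝ) ^ (-κ) := lt_of_mul_lt_mul_left (hl.trans_lt hkey) hb0.le
    rw [hqk, Real.exp_lt_exp] at h3
    have h4 : ρ * m ≤ ρ * ((Real.log 2 + Real.log q) / τ + 1) := by gcongr
    have h5 : ρ * ((Real.log 2 + Real.log q) / τ + 1) = ρ * (Real.log 2 / τ + 1) + ρ / τ * Real.log q := by ring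
    linarith
  · have h3 : (1:ℝ) ≤ |(b m : ℝ) * p - a m * q| := by
      have : 1 ≤ |b m * p - a m * q| := Int.one_le_abs hz
      exact_mod_cast this
    have h4 : |(b m : ℝ) * p - a m * q| ≤ q * (|(b m : ℝ)| * |β - p / q| + |b m * β - a m|) := by
      have : (b m : ℝ) * p - a m * q = q * (-(b m * (β - p / q)) + (b m * β - a m)) := by
        field_simp; ring
      rw [this, abs_mul, abs_of_pos hq']
      refine mul_le_mul_of_nonneg_left ?_ hq'.le
      refine (abs_add_le _ _).trans ?_
      rw [abs_neg, abs_mul]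
    have h5 : |b m * β - a m| ≤ 1 / (2 * q) := by
      refine hL.trans ?_
      rw [show 1 / (2 * (q:ℝ)) = Real.exp (-(Real.log 2 + Real.log q)) by
        rw [Real.exp_neg, Real.exp_add, Real.exp_log (by norm_num), Real.exp_log hq', one_div]]
      rw [Real.exp_le_exp]
      rw [div_le_iff₀ hτ] at hm1; linarith
    have h6 : |(b m : ℝ)| * (q:ℝ) ^ (-κ) < 1 / (2 * q) := by
      calc _ ≤ Real.exp (σ * m) * (q:ℝ) ^ (-κ) := by gcongr
        _ = Real.exp (σ * m - κ * Real.log q) := by rw [hqk, ← Real.exp_add]; ring_nf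
        _ < Real.exp (-(Real.log 2 + Real.log q)) := by
          rw [Real.exp_lt_exp]
          have h4 : σ * m ≤ σ * ((Real.log 2 + Real.log q) / τ + 1) := by gcongr
          have h5 : σ * ((Real.log 2 + Real.log q) / τ + 1) = σ * (Real.log 2 / τ + 1) + σ / τ * Real.log q := by ring
          linarith
        _ = _ := by rw [Real.exp_neg, Real.exp_add, Real.exp_log (by norm_num), Real.exp_log hq', one_div]
    have h7 : q * (|(b m : ℝ)| * |β - p / q| + |b m * β - a m|) < q * (1 / (2 * q) + 1 / (2 * q)) :=
      mul_lt_mul_of_pos_left (by linarith) hq'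
    have h8 : (q:ℝ) * (1 / (2 * q) + 1 / (2 * q)) = 1 := by field_simp; norm_num
    linarith

end PB

end

section
open Filter Topology Set MeasureTheory Finset

namespace PB

noncomputable def cf (Q : Polynomial ℂ) (l : ℕ) : ℂ :=
  ∑ i ∈ range (l+1), (((-1)^(l-i) * (l.choose i : ℤ) : ℤ) : ℂ) * Q.eval (i:ℂ)

lemma cf_eq (Q : Polynomial ℂ) (l : ℕ) : cf Q l = (fwdDiff (1:ℂ))^[l] (fun x => Q.eval x) 0 := by
  rw [fwdDiff_iter_eq_sum_shift]
  unfold cf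
  refine Finset.sum_congr rfl fun i _ => ?_
  simp

lemma newton (Q : Polynomial ℂ) {N : ℕ} (hQ : Q.natDegree < N) (n : ℕ) :
    Q.eval (n:ℂ) = ∑ l ∈ range N, (n.choose l : ℂ) * cf Q l := by
  have h := shift_eq_sum_fwdDiff_iter (1:ℂ) (fun x => Q.eval x) n 0
  simp only [zero_add, nsmul_eq_mul, mul_one] at h
  rw [h]
  simp only [← cf_eq]
  have h1 : ∑ l ∈ range (n+1), (n.choose l : ℂ) * cf Q l = ∑ l ∈ range (n+1+N), (n.choose l : ℂ) * cf Q l := by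
    refine Finset.sum_subset (by intro x; simp; omega) fun l _ hl => ?_
    rw [Nat.choose_eq_zero_of_lt (by simpa using hl)]; simp
  have h2 : ∑ l ∈ range N, (n.choose l : ℂ) * cf Q l = ∑ l ∈ range (n+1+N), (n.choose l : ℂ) * cf Q l := by
    refine Finset.sum_subset (by intro x; simp; omega) fun l _ hl => ?_
    rw [cf_eq, Polynomial.fwdDiff_iter_eq_zero_of_degree_lt]
    · simp
    · simp at hl; omega
  rw [h1, h2]

lemma choose_geom (l : ℕ) {w : ℂ} (hw : ‖w‖ < 1) :
    HasSum (fun n : ℕ => (n.choose l : ℂ) * w ^ n) (w ^ l / (1 - w) ^ (l + 1)) := by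
  have h := (hasSum_choose_mul_geometric_of_norm_lt_one l hw).mul_left (w ^ l)
  have h2 : HasSum (fun n : ℕ => ((n + l).choose l : ℂ) * w ^ (n + l)) (w ^ l / (1 - w) ^ (l + 1)) := by
    have e1 : (fun n : ℕ => ((n + l).choose l : ℂ) * w ^ (n + l)) = fun n : ℕ => w ^ l * (((n + l).choose l : ℂ) * w ^ n) := by
      ext n; rw [pow_add]; ring
    rw [e1, div_eq_mul_one_div]; exact h
  rw [← hasSum_nat_add_iff' l]
  rw [Finset.sum_eq_zero, sub_zero]; · exact h2
  intro i hi
  rw [Nat.choose_eq_zero_of_lt (by simpa using hi)]; simp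

lemma gen (Q : Polynomial ℂ) {N : ℕ} (hQ : Q.natDegree < N) {w : ℂ} (hw : ‖w‖ < 1) :
    HasSum (fun n : ℕ => Q.eval (n:ℂ) * w ^ n) (∑ l ∈ range N, cf Q l * (w ^ l / (1 - w) ^ (l + 1))) := by
  have h : HasSum (fun n : ℕ => ∑ l ∈ range N, cf Q l * ((n.choose l : ℂ) * w ^ n))
      (∑ l ∈ range N, cf Q l * (w ^ l / (1 - w) ^ (l + 1))) :=
    hasSum_sum fun l _ => (choose_geom l hw).mul_left _
  convert h using 1
  ext n
  rw [newton Q hQ n, Finset.sum_mul]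
  refine Finset.sum_congr rfl fun l _ => by ring

noncomputable def th : ℝ := Real.pi / 3
noncomputable def xx : ℂ := Complex.exp (th * Complex.I)

lemma xx_eq : xx = 1/2 + (Real.sqrt 3 / 2 : ℝ) * Complex.I := by
  unfold xx th
  rw [Complex.exp_mul_I, ← Complex.ofReal_cos, ← Complex.ofReal_sin, Real.cos_pi_div_three, Real.sin_pi_div_three]
  push_cast; ring

lemma s3 : ((Real.sqrt 3 : ℝ) : ℂ) ^ 2 = 3 := by
  rw [← Complex.ofReal_pow, Real.sq_sqrt (by norm_num)]; norm_num

lemma xx_sq : xx ^ 2 = xx - 1 := by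
  rw [xx_eq]; push_cast
  have h := s3
  have hI := Complex.I_sq
  linear_combination (1/4 * Complex.I^2) * h + 3/4 * hI

lemma xx_ne : xx ≠ 0 := Complex.exp_ne_zero _

lemma one_sub_xx : 1 - xx = xx⁻¹ := by
  have := xx_ne
  field_simp
  linear_combination -xx_sq

lemma th_pos : 0 < th := by unfold th; positivity
lemma th_2pi : 2 * Real.pi = 6 * th := by unfold th; ring

noncomputable def Ec (k : ℕ) : ℂ := ∑' n : ℤ, 1 / ((th : ℂ) + 2 * Real.pi * n) ^ (k+1)

lemma arg_ge (n : ℤ) : th * ((1/6) * |(n:ℝ)| ) ≤ |th + 2 * Real.pi * n| ∧ th ≤ |th + 2 * Real.pi * n| := by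
  have h : th + 2 * Real.pi * n = th * (1 + 6 * n) := by rw [th_2pi]; ring
  rw [h, abs_mul, abs_of_pos th_pos]
  have h1 : (1:ℝ) ≤ |1 + 6 * (n:ℝ)| := by
    have : 1 ≤ |1 + 6 * n| := Int.one_le_abs (by omega)
    exact_mod_cast this
  have h2 : (1/6) * |(n:ℝ)| ≤ |1 + 6 * (n:ℝ)| := by
    have h3 := abs_sub_abs_le_abs_sub (6 * (n:ℝ)) (-1)
    rw [abs_mul, abs_neg, abs_one, sub_neg_eq_add, add_comm (6 * (n:ℝ))] at h3
    norm_num at h3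
    rcases eq_or_ne n 0 with rfl | hn
    · simp
    have : (1:ℝ) ≤ |(n:ℝ)| := by exact_mod_cast Int.one_le_abs hn
    linarith
  constructor
  · exact mul_le_mul_of_nonneg_left h2 th_pos.le
  · nlinarith [th_pos]

lemma bound_summable {k : ℕ} (hk : 1 ≤ k) : Summable fun n : ℤ => 1 / |th + 2 * Real.pi * n| ^ (k+1) := by
  have h := ((Real.summable_one_div_int_pow (p := k+1)).mpr (by omega)).abs.mul_left (1 / (th * (1/6)) ^ (k+1))
  refine Summable.of_norm_bounded_eventually h ?_
  have : ∀ᶠ n : ℤ in cofinite, n ≠ 0 := by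
    exact (Set.finite_singleton (0:ℤ)).compl_mem_cofinite
  filter_upwards [this] with n hn
  have hn' : 0 < |(n:ℝ)| := by positivity
  have := th_pos
  have h1 := (arg_ge n).1
  rw [Real.norm_of_nonneg (by positivity), abs_div, abs_one, abs_pow, div_mul_div_comm, one_mul, ← mul_pow]
  apply one_div_le_one_div_of_le (by positivity)
  gcongr
  linarith

lemma Ec_eq {k N : ℕ} (hk : 1 ≤ k) (hN : k < N) :
    (k.factorial : ℂ) * Ec k = (-Complex.I) ^ (k+1) * ∑ l ∈ range N, cf (Polynomial.X ^ k) l * xx ^ (2*l+1) := by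
  have hpi := Real.pi_pos
  have hpc : (Real.pi : ℂ) ≠ 0 := by exact_mod_cast hpi.ne'
  -- sequence
  set ep : ℕ → ℝ := fun j => 1 / ((j:ℝ) + 1) with hep
  have hep0 : Tendsto ep atTop (𝓝 0) := tendsto_one_div_add_atTop_nhds_zero_nat
  have hepp : ∀ j, 0 < ep j := fun j => by simp only [hep]; positivity
  have L1 : Tendsto (fun j : ℕ => ∑' n : ℤ, 1 / (((th : ℂ) + ep j * Complex.I) + 2 * Real.pi * n) ^ (k+1)) atTop (𝓝 (Ec k)) := by
    refine tendsto_tsum_of_dominated_convergence (bound_summable hk) ?_ ?_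
    · intro n
      have hne : ((th : ℂ) + 2 * Real.pi * n) ^ (k+1) ≠ 0 := by
        apply pow_ne_zero
        have h1 := (arg_ge n).2
        have h2 : 0 < |th + 2 * Real.pi * n| := lt_of_lt_of_le th_pos h1
        have h3 := abs_pos.mp h2
        exact_mod_cast h3
      have hc : Tendsto (fun j : ℕ => (((th : ℂ) + ep j * Complex.I) + 2 * Real.pi * n) ^ (k+1)) atTop (𝓝 (((th : ℂ) + 2 * Real.pi * n) ^ (k+1))) := by
        have h4 := (Complex.continuous_ofReal.tendsto _).comp hep0
        have h5 := (((h4.mul_const Complex.I).const_add (th:ℂ)).add_const (2 * Real.pi * n : ℂ)).pow (k+1)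
        simpa using h5
      exact tendsto_const_nhds.div hc hne
    · refine Eventually.of_forall fun j n => ?_
      rw [norm_div, norm_one, norm_pow]
      have h1 : |th + 2 * Real.pi * n| ≤ ‖((th : ℂ) + ep j * Complex.I) + 2 * Real.pi * n‖ := by
        have h2 := Complex.abs_re_le_norm (((th : ℂ) + ep j * Complex.I) + 2 * Real.pi * n)
        simpa using h2
      have h2 : 0 < |th + 2 * Real.pi * n| := lt_of_lt_of_le th_pos (arg_ge n).2
      apply one_div_le_one_div_of_le (by positivity)
      gcongr
  have hw0 : Tendsto (fun j : ℕ => Complex.exp (((th : ℂ) + ep j * Complex.I) * Complex.I)) atTop (𝓝 xx) := by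
    have h4 := (Complex.continuous_ofReal.tendsto _).comp hep0
    have h5 := ((h4.mul_const Complex.I).const_add (th:ℂ)).mul_const Complex.I
    have h6 := (Complex.continuous_exp.tendsto _).comp h5
    simpa [Function.comp_def, xx] using h6
  have L2 : Tendsto (fun j : ℕ => (-Complex.I) ^ (k+1) * ∑ l ∈ range N, cf (Polynomial.X ^ k) l *
      (Complex.exp (((th : ℂ) + ep j * Complex.I) * Complex.I) ^ l /
        (1 - Complex.exp (((th : ℂ) + ep j * Complex.I) * Complex.I)) ^ (l+1))) atTop
      (𝓝 ((-Complex.I) ^ (k+1) * ∑ l ∈ range N, cf (Polynomial.X ^ k) l * xx ^ (2*l+1))) := by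
    refine Tendsto.const_mul _ (tendsto_finsetSum _ fun l _ => Tendsto.const_mul _ ?_)
    have h1 : xx ^ (2*l+1) = xx ^ l / (1 - xx) ^ (l+1) := by
      rw [one_sub_xx, inv_pow, div_inv_eq_mul, ← pow_add]; congr 1; ring
    rw [h1]
    refine (hw0.pow l).div ((hw0.const_sub 1).pow (l+1)) ?_
    rw [one_sub_xx]; exact pow_ne_zero _ (inv_ne_zero xx_ne)
  refine tendsto_nhds_unique (L1.const_mul (k.factorial : ℂ)) (L2.congr fun j => ?_)
  set z : UpperHalfPlane := ⟨((th : ℂ) + ep j * Complex.I) / (2 * Real.pi), by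
    have : (((th : ℂ) + ep j * Complex.I) / (2 * Real.pi)).im = ep j / (2 * Real.pi) := by
      rw [show (2 * (Real.pi:ℂ)) = ((2 * Real.pi : ℝ) : ℂ) by push_cast; ring, Complex.div_ofReal_im]
      simp
    rw [this]; have := hepp j; positivity⟩ with hz
  have hzc : (z : ℂ) = ((th : ℂ) + ep j * Complex.I) / (2 * Real.pi) := rfl
  have hq := EisensteinSeries.qExpansion_identity hk z
  have he : Complex.exp (2 * Real.pi * Complex.I * z) = Complex.exp (((th : ℂ) + ep j * Complex.I) * Complex.I) := by
    rw [hzc]; congr 1; field_simp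
  rw [he] at hq
  have hwn : ‖Complex.exp (((th : ℂ) + ep j * Complex.I) * Complex.I)‖ < 1 := by
    rw [Complex.norm_exp]
    simp only [Complex.mul_re, Complex.add_re, Complex.add_im, Complex.ofReal_re, Complex.ofReal_im, Complex.I_re, Complex.I_im, Complex.mul_im]
    rw [Real.exp_lt_one_iff]
    have := hepp j
    simp; exact this
  have hg := (gen (Polynomial.X ^ k) (N := N) (by simpa using hN) hwn).tsum_eq
  simp only [Polynomial.eval_pow, Polynomial.eval_X] at hg
  rw [hg] at hq
  have hs : ∑' n : ℤ, 1 / (((th : ℂ) + ep j * Complex.I) + 2 * Real.pi * n) ^ (k+1)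
      = (1 / (2 * Real.pi : ℂ) ^ (k+1)) * ∑' (n : ℤ), 1 / ((z:ℂ) + n) ^ (k + 1) := by
    rw [← tsum_mul_left]
    congr 1; ext n
    rw [div_mul_div_comm, one_mul, ← mul_pow, hzc]; congr 2
    field_simp
  rw [hs, hq]
  rw [show (-2 * (Real.pi:ℂ) * Complex.I) = (2 * Real.pi) * (-Complex.I) by ring, mul_pow (2 * (Real.pi:ℂ)) (-Complex.I)]
  have hf : (k.factorial : ℂ) ≠ 0 := by exact_mod_cast k.factorial_ne_zero
  generalize (∑ l ∈ range N, _ : ℂ) = S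
  generalize (-Complex.I) ^ (k+1) = V
  have hp2 : (2 * (Real.pi:ℂ)) ^ (k+1) ≠ 0 := pow_ne_zero _ (mul_ne_zero two_ne_zero hpc)
  generalize (2 * (Real.pi:ℂ)) ^ (k+1) = W at *
  field_simp

end PB

end

section
open Filter Topology Set MeasureTheory Finset

namespace PB

lemma hs_congr {ι : Type*} {f g : ι → ℝ} {x : ℝ} (h : ∀ k, f k = g k) (hg : HasSum g x) : HasSum f x := by
  rw [show f = g from funext h]; exact hg

lemma mono_integral (j : ℕ) {c : ℝ} (hc : 0 < c) :
    ∫ y in Ioi (0:ℝ), y ^ j * Real.exp (-c * y) = j.factorial / c ^ (j+1) := by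
  have h := Real.integral_rpow_mul_exp_neg_mul_Ioi (a := (j:ℝ) + 1) (by positivity) hc
  rw [Real.Gamma_nat_eq_factorial] at h
  rw [show (j.factorial : ℝ) / c ^ (j+1) = (1 / c) ^ ((j:ℝ)+1) * j.factorial by
    rw [show (j:ℝ) + 1 = ((j+1 : ℕ) : ℝ) by push_cast; ring, Real.rpow_natCast, div_pow, one_pow]; ring]
  rw [← h]
  refine setIntegral_congr_fun measurableSet_Ioi fun y hy => ?_
  simp [Real.rpow_natCast]

lemma mono_integrable (j : ℕ) {c : ℝ} (hc : 0 < c) :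
    IntegrableOn (fun y : ℝ => y ^ j * Real.exp (-c * y)) (Ioi 0) := by
  have h := integrableOn_rpow_mul_exp_neg_mul_rpow (p := 1) (s := j) (b := c) (by linarith [(Nat.cast_nonneg j : (0:ℝ) ≤ j)]) one_pos hc
  simpa [Real.rpow_natCast] using h

noncomputable def pp (k : ℕ) : ℝ := th + 2 * Real.pi * k
noncomputable def qq (k : ℕ) : ℝ := 2 * Real.pi * (k + 1) - th
lemma pp_pos (k : ℕ) : 0 < pp k := by
  have := th_pos; have := Real.pi_pos; unfold pp; positivity
lemma qq_pos (k : ℕ) : 0 < qq k := by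
  have := th_pos
  unfold qq; rw [th_2pi]; nlinarith [mul_nonneg this.le (Nat.cast_nonneg k : (0:ℝ) ≤ k)]
lemma qq_pp (k : ℕ) : qq k < pp (k+1) := by
  have := th_pos
  unfold qq pp; push_cast; linarith

noncomputable def Er (k : ℕ) : ℝ := ∑' n : ℤ, 1 / (th + 2 * Real.pi * n) ^ (k+1)

lemma Er_Ec (k : ℕ) : (Er k : ℂ) = Ec k := by
  unfold Er Ec
  rw [Complex.ofReal_tsum]
  congr 1; ext n; push_cast; rfl

lemma sum_p {k : ℕ} (hk : 1 ≤ k) : Summable fun n : ℕ => 1 / pp n ^ (k+1) := by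
  have h := (bound_summable hk).comp_injective Nat.cast_injective
  refine h.congr fun n => ?_
  simp only [Function.comp, pp, Int.cast_natCast]
  rw [abs_of_pos]; exact pp_pos n
lemma sum_q {k : ℕ} (hk : 1 ≤ k) : Summable fun n : ℕ => 1 / qq n ^ (k+1) := by
  have h := (bound_summable hk).comp_injective (i := fun n : ℕ => -((n:ℤ)+1)) (by intro a b h; simp at h; exact h)
  refine h.congr fun n => ?_
  simp only [Function.comp, qq]
  push_cast
  rw [show th + 2 * Real.pi * (-((n:ℝ) + 1)) = - (2 * Real.pi * (n+1) - th) by ring, abs_neg, abs_of_pos]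
  exact qq_pos n

lemma Er_eq {k : ℕ} (hk : 1 ≤ k) :
    Er k = ∑' n : ℕ, 1 / pp n ^ (k+1) + (-1) ^ (k+1) * ∑' n : ℕ, 1 / qq n ^ (k+1) := by
  refine (HasSum.of_nat_of_neg_add_one (f := fun n : ℤ => 1 / (th + 2 * Real.pi * n) ^ (k+1)) ?_ ?_).tsum_eq
  · have := (sum_p hk).hasSum
    simpa [pp] using this
  · have := (sum_q hk).hasSum.mul_left ((-1) ^ (k+1))
    refine hs_congr (fun n => ?_) this
    push_cast
    rw [show th + 2 * Real.pi * (-((n:ℝ) + 1)) = - (2 * Real.pi * (n+1) - th) by ring]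
    rw [neg_pow]
    unfold qq
    rcases neg_one_pow_eq_or ℝ (k+1) with h | h <;> rw [h] <;> simp [neg_div, div_neg]

noncomputable def Bker (y : ℝ) : ℝ := (Real.exp (-th * y) + Real.exp (-(2 * Real.pi - th) * y)) / (1 - Real.exp (-(2 * Real.pi) * y))
noncomputable def Iker (y : ℝ) : ℝ := 2 * Real.pi ^ 2 * (Real.exp (th * y) - Real.exp (-th * y)) *
  (Real.exp (-(2 * Real.pi) * y) / (1 - Real.exp (-(2 * Real.pi) * y)) ^ 2)

lemma r_lt {y : ℝ} (hy : 0 < y) : Real.exp (-(2 * Real.pi) * y) < 1 := by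
  rw [Real.exp_lt_one_iff]; have := Real.pi_pos; nlinarith [mul_pos this hy]

lemma Bker_hasSum {y : ℝ} (hy : 0 < y) :
    HasSum (fun k : ℕ => Real.exp (-pp k * y) + Real.exp (-qq k * y)) (Bker y) := by
  have h := hasSum_geometric_of_lt_one (Real.exp_pos _).le (r_lt hy)
  have h1 := h.mul_left (Real.exp (-th * y) + Real.exp (-(2 * Real.pi - th) * y))
  unfold Bker
  rw [div_eq_mul_inv]
  refine hs_congr (fun k => ?_) h1
  rw [← Real.exp_nat_mul, add_mul, ← Real.exp_add, ← Real.exp_add]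
  unfold pp qq
  congr 2 <;> ring

lemma Iker_hasSum {y : ℝ} (hy : 0 < y) :
    HasSum (fun k : ℕ => 2 * Real.pi ^ 2 * (k + 1) * (Real.exp (-qq k * y) - Real.exp (-pp (k+1) * y))) (Iker y) := by
  have h := hasSum_coe_mul_geometric_of_norm_lt_one (r := Real.exp (-(2 * Real.pi) * y))
    (by rw [Real.norm_of_nonneg (Real.exp_pos _).le]; exact r_lt hy)
  rw [← hasSum_nat_add_iff' 1] at h
  simp only [Finset.range_one, Finset.sum_singleton, Nat.cast_zero, zero_mul, sub_zero] at h
  have h1 := h.mul_left (2 * Real.pi ^ 2 * (Real.exp (th * y) - Real.exp (-th * y)))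
  unfold Iker
  refine hs_congr (fun k => ?_) h1
  push_cast
  rw [← Real.exp_nat_mul]
  have e1 : Real.exp (-qq k * y) = Real.exp (th * y) * Real.exp (((k + 1 : ℕ):ℝ) * (-(2 * Real.pi) * y)) := by
    rw [← Real.exp_add]; unfold qq; congr 1; push_cast; ring
  have e2 : Real.exp (-pp (k+1) * y) = Real.exp (-th * y) * Real.exp (((k + 1 : ℕ):ℝ) * (-(2 * Real.pi) * y)) := by
    rw [← Real.exp_add]; unfold pp; congr 1; push_cast; ring
  rw [e1, e2]; ring

lemma B_mono {j : ℕ} (hj : 1 ≤ j) (hodd : Odd j) :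
    IntegrableOn (fun y : ℝ => y ^ j * Bker y) (Ioi 0) ∧
    ∫ y in Ioi (0:ℝ), y ^ j * Bker y = j.factorial * Er j := by
  set F : ℕ → ℝ → ℝ := fun k y => y ^ j * Real.exp (-pp k * y) + y ^ j * Real.exp (-qq k * y)
  have hFi : ∀ k, IntegrableOn (F k) (Ioi 0) := fun k => (mono_integrable j (pp_pos k)).add (mono_integrable j (qq_pos k))
  have hF : ∀ k, ∫ y in Ioi (0:ℝ), F k y = j.factorial * (1 / pp k ^ (j+1)) + j.factorial * (1 / qq k ^ (j+1)) := by
    intro k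
    simp only [F]
    rw [integral_add (mono_integrable j (pp_pos k)) (mono_integrable j (qq_pos k)), mono_integral j (pp_pos k), mono_integral j (qq_pos k)]
    ring
  have hFn : ∀ k, ∫ y in Ioi (0:ℝ), ‖F k y‖ = ∫ y in Ioi (0:ℝ), F k y := by
    intro k
    refine setIntegral_congr_fun measurableSet_Ioi fun y hy => ?_
    have hy : (0:ℝ) < y := hy
    simp only [F]
    rw [Real.norm_of_nonneg (by positivity)]
  have hs : HasSum (fun k => ∫ y in Ioi (0:ℝ), F k y) (j.factorial * Er j) := by
    simp only [hF]
    rw [Er_eq hj, (Odd.add_one hodd).neg_one_pow, one_mul, mul_add]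
    exact ((sum_p hj).hasSum.mul_left _).add ((sum_q hj).hasSum.mul_left _)
  have hsum : Summable fun k => ∫ y in Ioi (0:ℝ), ‖F k y‖ := by
    simp only [hFn]; exact hs.summable
  have hpt : ∀ y ∈ Ioi (0:ℝ), HasSum (fun k => F k y) (y ^ j * Bker y) := by
    intro y hy
    have := (Bker_hasSum hy).mul_left (y ^ j)
    simpa [F, mul_add] using this
  have hae : (fun y : ℝ => ∑' k, F k y) =ᵐ[volume.restrict (Ioi 0)] fun y => y ^ j * Bker y := by
    filter_upwards [ae_restrict_mem measurableSet_Ioi] with y hy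
    exact (hpt y hy).tsum_eq
  constructor
  · refine not_imp_comm.mp integral_undef ?_
    rw [← integral_congr_ae hae, (hasSum_integral_of_summable_integral_norm hFi hsum).unique hs]
    have h1 : 0 < Er j := by
      rw [Er_eq hj, (Odd.add_one hodd).neg_one_pow, one_mul]
      refine add_pos ((sum_p hj).tsum_pos (fun n => ?_) 0 ?_) ((sum_q hj).tsum_pos (fun n => ?_) 0 ?_)
      · have := pp_pos n; positivity
      · have := pp_pos 0; positivity
      · have := qq_pos n; positivity
      · have := qq_pos 0; positivity
    positivity
  · rw [← integral_congr_ae hae]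
    exact (hasSum_integral_of_summable_integral_norm hFi hsum).unique hs

lemma I_mono {j : ℕ} (hj : 2 ≤ j) (hodd : Odd j) :
    IntegrableOn (fun y : ℝ => y ^ j * Iker y) (Ioi 0) ∧
    ∫ y in Ioi (0:ℝ), y ^ j * Iker y = Real.pi * (j.factorial * (th * Er j - Er (j-1))) := by
  have hth := th_pos
  set F : ℕ → ℝ → ℝ := fun k y => 2 * Real.pi ^ 2 * (k + 1) * (y ^ j * Real.exp (-qq k * y) - y ^ j * Real.exp (-pp (k+1) * y))
  have hFi : ∀ k, IntegrableOn (F k) (Ioi 0) := fun k => ((mono_integrable j (qq_pos k)).sub (mono_integrable j (pp_pos (k+1)))).const_mul _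
  have hF : ∀ k, ∫ y in Ioi (0:ℝ), F k y = Real.pi * j.factorial * ((1 / qq k ^ j + th * (1 / qq k ^ (j+1))) - (1 / pp (k+1) ^ j - th * (1 / pp (k+1) ^ (j+1)))) := by
    intro k
    simp only [F]
    rw [integral_const_mul, integral_sub (mono_integrable j (qq_pos k)) (mono_integrable j (pp_pos (k+1))), mono_integral j (qq_pos k), mono_integral j (pp_pos (k+1))]
    have h1 : 2 * Real.pi * (k+1) = qq k + th := by unfold qq; ring
    have h2 : 2 * Real.pi * (k+1) = pp (k+1) - th := by unfold pp; push_cast; ring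
    have hq := qq_pos k
    have hp := pp_pos (k+1)
    have h3 : 2 * Real.pi * (k+1) / qq k ^ (j+1) = 1 / qq k ^ j + th * (1 / qq k ^ (j+1)) := by
      rw [h1, pow_succ]; field_simp
    have h4 : 2 * Real.pi * (k+1) / pp (k+1) ^ (j+1) = 1 / pp (k+1) ^ j - th * (1 / pp (k+1) ^ (j+1)) := by
      rw [h2, pow_succ]; field_simp
    rw [← h3, ← h4]; ring
  have hFn : ∀ k, ∫ y in Ioi (0:ℝ), ‖F k y‖ = ∫ y in Ioi (0:ℝ), F k y := by
    intro k
    refine setIntegral_congr_fun measurableSet_Ioi fun y hy => ?_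
    have hy : (0:ℝ) < y := hy
    simp only [F]
    rw [Real.norm_of_nonneg]
    have : Real.exp (-pp (k+1) * y) ≤ Real.exp (-qq k * y) := Real.exp_le_exp.mpr (by nlinarith [qq_pp k])
    rw [← mul_sub]
    have : 0 ≤ Real.exp (-qq k * y) - Real.exp (-pp (k+1) * y) := by linarith
    positivity
  have hs : HasSum (fun k => ∫ y in Ioi (0:ℝ), F k y) (Real.pi * (j.factorial * (th * Er j - Er (j-1)))) := by
    simp only [hF]
    rw [Er_eq (by omega), Er_eq (k := j-1) (by omega), (Odd.add_one hodd).neg_one_pow, one_mul, show j - 1 + 1 = j by omega,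
      hodd.neg_one_pow]
    have s1 := (sum_q (k := j-1) (by omega)).hasSum
    have s2 := (sum_q (k := j) (by omega)).hasSum
    have s3 := (sum_p (k := j-1) (by omega)).hasSum
    have s4 := (sum_p (k := j) (by omega)).hasSum
    rw [show j - 1 + 1 = j by omega] at s1 s3
    rw [← hasSum_nat_add_iff' 1] at s3 s4
    have := ((s1.add (s2.mul_left th)).sub (s3.sub (s4.mul_left th))).mul_left (Real.pi * j.factorial)
    refine (congrArg (HasSum _) ?_).mp this
    simp only [Finset.range_one, Finset.sum_singleton]
    have h0 : pp 0 = th := by simp [pp]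
    rw [h0]
    have : th * (1 / th ^ (j+1)) = 1 / th ^ j := by rw [pow_succ]; field_simp
    linear_combination (-Real.pi * j.factorial) * this
  have hsum : Summable fun k => ∫ y in Ioi (0:ℝ), ‖F k y‖ := by
    simp only [hFn]; exact hs.summable
  have hpt : ∀ y ∈ Ioi (0:ℝ), HasSum (fun k => F k y) (y ^ j * Iker y) := by
    intro y hy
    have := (Iker_hasSum hy).mul_left (y ^ j)
    refine hs_congr (fun k => ?_) this
    simp only [F]; ring
  have hae : (fun y : ℝ => ∑' k, F k y) =ᵐ[volume.restrict (Ioi 0)] fun y => y ^ j * Iker y := by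
    filter_upwards [ae_restrict_mem measurableSet_Ioi] with y hy
    exact (hpt y hy).tsum_eq
  constructor
  · refine not_imp_comm.mp integral_undef ?_
    rw [← integral_congr_ae hae, (hasSum_integral_of_summable_integral_norm hFi hsum).unique hs]
    have hpos : ∀ k, 0 < ∫ y in Ioi (0:ℝ), F k y := by
      intro k
      simp only [F]
      rw [integral_const_mul, integral_sub (mono_integrable j (qq_pos k)) (mono_integrable j (pp_pos (k+1))), mono_integral j (qq_pos k), mono_integral j (pp_pos (k+1))]
      have := qq_pos k
      have h1 : (j.factorial : ℝ) / pp (k+1) ^ (j+1) < j.factorial / qq k ^ (j+1) := by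
        have := qq_pp k
        gcongr
      have h2 := Real.pi_pos
      have h3 := sub_pos.mpr h1
      positivity
    have := hs.summable.tsum_pos (fun k => (hpos k).le) 0 (hpos 0)
    rw [hs.tsum_eq] at this
    exact this.ne'
  · rw [← integral_congr_ae hae]
    exact (hasSum_integral_of_summable_integral_norm hFi hsum).unique hs

end PB

end

section
open Filter Topology Set MeasureTheory Finset Polynomial

namespace PB

lemma xx_cube : xx ^ 3 = -1 := by
  have := xx_sq
  linear_combination (xx + 1) * this

lemma xx_odd (l : ℕ) : ∃ u v : ℤ, 2 * xx ^ (2*l+1) = u + v * (Real.sqrt 3 : ℂ) * Complex.I := by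
  have h6 : xx ^ 6 = 1 := by
    rw [show xx ^ 6 = (xx ^ 3) ^ 2 by ring, xx_cube]; norm_num
  have h1 := xx_eq
  push_cast at h1
  obtain ⟨a, r, hr, rfl⟩ : ∃ a r, r < 3 ∧ l = 3 * a + r := ⟨l / 3, l % 3, Nat.mod_lt _ (by norm_num), (Nat.div_add_mod l 3).symm⟩
  have h2 : xx ^ (2 * (3 * a + r) + 1) = xx ^ (2 * r + 1) := by
    rw [show 2 * (3 * a + r) + 1 = 6 * a + (2 * r + 1) by ring, pow_add, pow_mul, h6, one_pow, one_mul]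
  rw [h2]
  interval_cases r
  · exact ⟨1, 1, by simp only [mul_zero, zero_add, pow_one]; rw [h1]; push_cast; ring⟩
  · exact ⟨-2, 0, by simp only [mul_one, Nat.reduceAdd]; rw [xx_cube]; push_cast; ring⟩
  · refine ⟨1, -1, ?_⟩
    simp only [Nat.reduceMul, Nat.reduceAdd]
    have : xx ^ 5 = 1 - xx := by
      rw [show xx ^ 5 = xx ^ 3 * xx ^ 2 by ring, xx_cube, xx_sq]; ring
    rw [this, h1]; push_cast; ring

lemma cf_int (Q : ℂ[X]) (D : ℂ) (h : ∀ n : ℕ, ∃ z : ℤ, D * Q.eval (n:ℂ) = z) (l : ℕ) : ∃ z : ℤ, D * cf Q l = z := by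
  choose f hf using h
  refine ⟨∑ i ∈ range (l+1), ((-1)^(l-i) * (l.choose i : ℤ)) * f i, ?_⟩
  unfold cf
  rw [Finset.mul_sum]
  push_cast
  refine Finset.sum_congr rfl fun i _ => ?_
  rw [← hf]; ring

lemma sum_int (Q : ℂ[X]) (D : ℂ) (h : ∀ n : ℕ, ∃ z : ℤ, D * Q.eval (n:ℂ) = z) (N : ℕ) :
    ∃ u v : ℤ, 2 * (D * ∑ l ∈ range N, cf Q l * xx ^ (2*l+1)) = u + v * (Real.sqrt 3 : ℂ) * Complex.I := by
  have h1 := fun l => cf_int Q D h l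
  choose f hf using h1
  choose u v huv using xx_odd
  refine ⟨∑ l ∈ range N, f l * u l, ∑ l ∈ range N, f l * v l, ?_⟩
  push_cast
  rw [Finset.mul_sum, Finset.mul_sum, Finset.sum_mul, Finset.sum_mul, ← Finset.sum_add_distrib]
  refine Finset.sum_congr rfl fun l _ => ?_
  rw [← hf]
  linear_combination (D * cf Q l) * huv l

lemma cf_lin (Q : ℂ[X]) (l N : ℕ) (hN : Q.natDegree < N) : cf Q l = ∑ k ∈ range N, Q.coeff k * cf (X ^ k) l := by
  unfold cf
  simp_rw [Finset.mul_sum]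
  rw [Finset.sum_comm]
  refine Finset.sum_congr rfl fun i _ => ?_
  rw [Polynomial.eval_eq_sum_range' hN, Finset.mul_sum]
  refine Finset.sum_congr rfl fun k _ => ?_
  simp; ring

lemma ab_lin (Q : ℂ[X]) (M N : ℕ) (hN : Q.natDegree < N) :
    ∑ l ∈ range M, cf Q l * xx ^ (2*l+1) = ∑ k ∈ range N, Q.coeff k * ∑ l ∈ range M, cf (X ^ k) l * xx ^ (2*l+1) := by
  simp_rw [Finset.mul_sum]
  rw [Finset.sum_comm]
  refine Finset.sum_congr rfl fun l _ => ?_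
  rw [cf_lin Q l N hN, Finset.sum_mul]
  refine Finset.sum_congr rfl fun k _ => by ring

structure TR (T : ℝ[X]) (R : ℂ[X]) (ep : ℂ) : Prop where
  coe : ∀ j, (T.coeff j : ℂ) = Complex.I * ep * Complex.I ^ j * R.coeff j
  odd : ∀ j, T.coeff j ≠ 0 → Odd j ∧ 2 ≤ j

noncomputable def Bt (T : ℝ[X]) : ℝ := ∑ j ∈ range (T.natDegree + 1), T.coeff j * (j.factorial * Er j)
noncomputable def At (T : ℝ[X]) : ℝ := ∑ j ∈ range (T.natDegree + 1), T.coeff j * (j.factorial * Er (j-1))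

lemma Bt_int {T : ℝ[X]} {R : ℂ[X]} {ep : ℂ} (h : TR T R ep) :
    IntegrableOn (fun y : ℝ => T.eval y * Bker y) (Ioi 0) ∧ ∫ y in Ioi (0:ℝ), T.eval y * Bker y = Bt T := by
  have e : (fun y : ℝ => T.eval y * Bker y) = fun y => ∑ j ∈ range (T.natDegree + 1), T.coeff j * (y ^ j * Bker y) := by
    ext y; rw [Polynomial.eval_eq_sum_range, Finset.sum_mul]
    refine Finset.sum_congr rfl fun k _ => by ring
  have hi : ∀ j ∈ range (T.natDegree + 1), IntegrableOn (fun y : ℝ => T.coeff j * (y ^ j * Bker y)) (Ioi 0) := by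
    intro j _
    by_cases hj : T.coeff j = 0
    · simp [hj]
    · exact (B_mono (by have := (h.odd j hj).2; omega) (h.odd j hj).1).1.const_mul _
  rw [e]
  refine ⟨integrable_finsetSum _ hi, ?_⟩
  rw [integral_finsetSum _ hi]
  unfold Bt
  refine Finset.sum_congr rfl fun j _ => ?_
  rw [integral_const_mul]
  by_cases hj : T.coeff j = 0
  · simp [hj]
  · rw [(B_mono (by have := (h.odd j hj).2; omega) (h.odd j hj).1).2]

lemma I_int {T : ℝ[X]} {R : ℂ[X]} {ep : ℂ} (h : TR T R ep) :
    IntegrableOn (fun y : ℝ => T.eval y * Iker y) (Ioi 0) ∧ ∫ y in Ioi (0:ℝ), T.eval y * Iker y = Real.pi * (th * Bt T - At T) := by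
  have e : (fun y : ℝ => T.eval y * Iker y) = fun y => ∑ j ∈ range (T.natDegree + 1), T.coeff j * (y ^ j * Iker y) := by
    ext y; rw [Polynomial.eval_eq_sum_range, Finset.sum_mul]
    refine Finset.sum_congr rfl fun k _ => by ring
  have hi : ∀ j ∈ range (T.natDegree + 1), IntegrableOn (fun y : ℝ => T.coeff j * (y ^ j * Iker y)) (Ioi 0) := by
    intro j _
    by_cases hj : T.coeff j = 0
    · simp [hj]
    · exact (I_mono (h.odd j hj).2 (h.odd j hj).1).1.const_mul _
  rw [e]
  refine ⟨integrable_finsetSum _ hi, ?_⟩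
  rw [integral_finsetSum _ hi]
  unfold Bt At
  rw [Finset.mul_sum, ← Finset.sum_sub_distrib, Finset.mul_sum]
  refine Finset.sum_congr rfl fun j _ => ?_
  rw [integral_const_mul]
  by_cases hj : T.coeff j = 0
  · simp [hj]
  · rw [(I_mono (h.odd j hj).2 (h.odd j hj).1).2]; ring

lemma I_cancel (j : ℕ) : Complex.I ^ j * (-Complex.I) ^ j = 1 := by
  rw [← mul_pow]; simp

lemma deg_eq {T : ℝ[X]} {R : ℂ[X]} {ep : ℂ} (h : TR T R ep) (hep : ep ≠ 0) : R.natDegree ≤ T.natDegree := by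
  rw [Polynomial.natDegree_le_iff_coeff_eq_zero]
  intro j hj
  have h1 := h.coe j
  rw [Polynomial.coeff_eq_zero_of_natDegree_lt hj] at h1
  simpa [hep] using h1.symm

lemma Bt_eq {T : ℝ[X]} {R : ℂ[X]} {ep : ℂ} (h : TR T R ep) (hep : ep ≠ 0) :
    (Bt T : ℂ) = ep * ∑ l ∈ range (T.natDegree + 1), cf R l * xx ^ (2*l+1) := by
  rw [ab_lin R _ (T.natDegree + 1) (Nat.lt_succ_of_le (deg_eq h hep)), Finset.mul_sum]
  unfold Bt
  push_cast
  refine Finset.sum_congr rfl fun j hj => ?_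
  by_cases hj0 : T.coeff j = 0
  · have h1 := h.coe j
    rw [hj0] at h1
    have : R.coeff j = 0 := by simpa [hep] using h1.symm
    simp [this, hj0]
  rw [Er_Ec, Ec_eq (N := T.natDegree + 1) (by have := (h.odd j hj0).2; omega) (by simpa using hj), h.coe, pow_succ (-Complex.I)]
  have := I_cancel j
  have hI := Complex.I_sq
  linear_combination (-Complex.I^2 * ep * R.coeff j * ∑ l ∈ range (T.natDegree + 1), cf (X ^ j) l * xx ^ (2*l+1)) * this
    - (ep * R.coeff j * ∑ l ∈ range (T.natDegree + 1), cf (X ^ j) l * xx ^ (2*l+1)) * hI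

lemma At_eq {T : ℝ[X]} {R : ℂ[X]} {ep : ℂ} (h : TR T R ep) (hep : ep ≠ 0) :
    (At T : ℂ) = Complex.I * ep * ∑ l ∈ range (T.natDegree + 1), cf (derivative R) l * xx ^ (2*l+1) := by
  have hd : (derivative R).natDegree < T.natDegree + 1 :=
    Nat.lt_succ_of_le ((natDegree_derivative_le R).trans ((Nat.sub_le _ _).trans (deg_eq h hep)))
  rw [ab_lin (derivative R) _ (T.natDegree + 1) hd, Finset.mul_sum]
  unfold At
  push_cast
  rw [Finset.sum_range_succ']
  rw [Finset.sum_range_succ (fun i => Complex.I * ep * _)]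
  have z1 : (T.coeff 0) = 0 := by
    by_contra h0; have := (h.odd 0 h0).2; omega
  have z2 : (derivative R).coeff T.natDegree = 0 := by
    rw [coeff_derivative, coeff_eq_zero_of_natDegree_lt (Nat.lt_succ_of_le (deg_eq h hep)), zero_mul]
  rw [z1, z2]
  simp only [Complex.ofReal_zero, zero_mul, mul_zero, add_zero]
  refine Finset.sum_congr rfl fun j hj => ?_
  by_cases hj0 : T.coeff (j+1) = 0
  · have h1 := h.coe (j+1)
    rw [hj0] at h1
    have : R.coeff (j+1) = 0 := by simpa [hep] using h1.symm
    simp [coeff_derivative, this, hj0]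
  rw [Nat.add_sub_cancel, Er_Ec, Nat.factorial_succ, coeff_derivative, h.coe]
  have hE := Ec_eq (k := j) (N := T.natDegree + 1) (by have := (h.odd _ hj0).2; omega) (by simp at hj; omega)
  have := I_cancel (j+1)
  push_cast
  linear_combination (Complex.I * ep * Complex.I ^ (j+1) * R.coeff (j+1) * (j+1)) * hE
   + (Complex.I * ep * R.coeff (j+1) * (j+1) * ∑ l ∈ range (T.natDegree + 1), cf (X ^ j) l * xx ^ (2*l+1)) * this

lemma lin_form {T : ℝ[X]} {R : ℂ[X]} {ep : ℂ} (h : TR T R ep) (hep : ep = 1 ∨ ep = -1)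
    (hR : ∀ n : ℕ, ∃ z : ℤ, R.eval (n:ℂ) = z) (D : ℕ) (hD : ∀ n : ℕ, ∃ z : ℤ, (D:ℂ) * (derivative R).eval (n:ℂ) = z) :
    ∃ a b : ℤ, (b:ℝ) = 2 * D * Bt T ∧
      b * (Real.sqrt 3 * Real.arctan (Real.sqrt 3 / 1)) - a = 2 * Real.sqrt 3 * D / Real.pi * ∫ y in Ioi (0:ℝ), T.eval y * Iker y := by
  have hep0 : ep ≠ 0 := by rcases hep with rfl | rfl <;> norm_num
  obtain ⟨e, he⟩ : ∃ e : ℤ, ep = e := by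
    rcases hep with rfl | rfl
    · exact ⟨1, by simp⟩
    · exact ⟨-1, by simp⟩
  obtain ⟨u, v, huv⟩ := sum_int R 1 (by simpa using hR) (T.natDegree + 1)
  obtain ⟨u', v', huv'⟩ := sum_int (derivative R) D hD (T.natDegree + 1)
  have hB := Bt_eq h hep0
  have hA := At_eq h hep0
  have hB2 : 2 * Bt T = e * u := by
    have : (2 * Bt T : ℂ) = e * (u + v * (Real.sqrt 3 : ℂ) * Complex.I) := by
      rw [hB, ← huv, he]; ring
    have := congrArg Complex.re this
    simpa using this
  have hA2 : 2 * D * At T = - e * v' * Real.sqrt 3 := by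
    have : (2 * D * At T : ℂ) = Complex.I * e * (u' + v' * (Real.sqrt 3 : ℂ) * Complex.I) := by
      rw [hA, ← huv', he]; ring
    have := congrArg Complex.re this
    simp at this
    linarith
  have h3 : Real.arctan (Real.sqrt 3 / 1) = th := by
    rw [div_one, ← Real.tan_pi_div_three, Real.arctan_tan]; · rfl
    · linarith [Real.pi_pos]
    · linarith [Real.pi_pos]
  refine ⟨- e * v' * 3, D * (e * u), ?_, ?_⟩
  · push_cast; rw [← hB2]; ring
  · rw [(I_int h).2, h3]
    push_cast
    rw [← hB2]
    have hs := Real.mul_self_sqrt (show (0:ℝ) ≤ 3 by norm_num)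
    have hpi := Real.pi_pos.ne'
    field_simp
    linear_combination (Real.sqrt 3) * hA2 - e * v' * hs

end PB

end

section
open Finset Polynomial

namespace PB

noncomputable def Th (h : ℕ) : ℝ[X] := C (1 / ((2*h+1).factorial : ℝ)) * (X * ∏ j ∈ range h, (X ^ 2 + C (((j:ℝ)+1)^2)))
noncomputable def Rh (h : ℕ) : ℂ[X] := C (1 / ((2*h+1).factorial : ℂ)) * (X * ∏ j ∈ range h, (X ^ 2 - C (((j:ℂ)+1)^2)))
noncomputable def ch (N : ℕ) : ℂ[X] := C (1 / (N.factorial : ℂ)) * ∏ i ∈ range N, (X - C (i:ℂ))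

lemma Th_map (h : ℕ) : (Th h).map Complex.ofRealHom = C (-Complex.I * (-1)^h) * (Rh h).comp (C Complex.I * X) := by
  unfold Th Rh
  simp only [Polynomial.map_mul, Polynomial.map_prod, map_C, map_X, Polynomial.map_add, Polynomial.map_pow, mul_comp, Polynomial.prod_comp, sub_comp, pow_comp, X_comp, C_comp]
  have : ∀ j ∈ range h, ((C Complex.I * X) ^ 2 - C (((j:ℂ)+1)^2) : ℂ[X]) = (-1) * (X^2 + C (((j:ℂ)+1)^2)) := by
    intro j _
    rw [mul_pow, ← C_pow, Complex.I_sq]; simp; ring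
  rw [Finset.prod_congr rfl this, Finset.prod_mul_distrib]
  simp only [prod_const, card_range]
  have h1 : C (-Complex.I * (-1)^h) * C Complex.I * (-1)^h = (1 : ℂ[X]) := by
    rw [show ((-1)^h : ℂ[X]) = C ((-1)^h) by simp, ← C_mul, ← C_mul, ← C_1]
    congr 1
    have : ((-1:ℂ)^h) * (-1)^h = 1 := by rw [← mul_pow]; simp
    linear_combination (-Complex.I^2) * this - Complex.I_sq
  have h2 : Complex.ofRealHom (1 / ((2*h+1).factorial : ℝ)) = 1 / ((2*h+1).factorial : ℂ) := by simp
  have h3 : ∏ x ∈ range h, ((X:ℂ[X]) ^ 2 + C (Complex.ofRealHom (((x:ℝ) + 1) ^ 2))) = ∏ x ∈ range h, (X ^ 2 + C (((x:ℂ) + 1) ^ 2)) := by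
    refine Finset.prod_congr rfl fun j _ => by simp
  rw [h2, h3]
  linear_combination (-(C (1 / ((2*h+1).factorial : ℂ)) * X * ∏ x ∈ range h, (X ^ 2 + C (((x:ℂ) + 1) ^ 2)))) * h1

lemma Th_neg (h : ℕ) : (Th h).comp (-X) = - Th h := by
  unfold Th
  simp only [mul_comp, Polynomial.prod_comp, add_comp, pow_comp, X_comp, C_comp, neg_sq]
  ring

noncomputable def T3 (a b c : ℕ) : ℝ[X] := Th a * Th b * Th c
noncomputable def R3 (a b c : ℕ) : ℂ[X] := Rh a * Rh b * Rh c

lemma T3_odd (a b c j : ℕ) (hj : (T3 a b c).coeff j ≠ 0) : Odd j ∧ 2 ≤ j := by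
  constructor
  · by_contra hcon
    rw [Nat.not_odd_iff_even] at hcon
    have h1 : (T3 a b c).comp (-X) = - T3 a b c := by
      unfold T3; simp only [mul_comp, Th_neg]; ring
    have h2 := congrArg (fun p => p.coeff j) h1
    have h3 : ((T3 a b c).comp (-X)).coeff j = (T3 a b c).coeff j * (-1)^j := by
      rw [show (-X : ℝ[X]) = C (-1) * X by simp, comp_C_mul_X_coeff]
    simp only [h3, hcon.neg_one_pow, coeff_neg] at h2
    apply hj; linarith
  · by_contra hcon
    apply hj
    have hd : (X:ℝ[X]) ^ 3 ∣ T3 a b c := by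
      have hx : ∀ h, (X:ℝ[X]) ∣ Th h := fun h => by
        unfold Th; exact Dvd.dvd.mul_left (Dvd.intro _ rfl) _
      rw [show (X:ℝ[X])^3 = X * X * X by ring]
      exact mul_dvd_mul (mul_dvd_mul (hx a) (hx b)) (hx c)
    exact X_pow_dvd_iff.mp hd j (by omega)

lemma T3_TR (a b c : ℕ) : TR (T3 a b c) (R3 a b c) ((-1)^(a+b+c)) where
  odd := T3_odd a b c
  coe := by
    intro j
    have h : (T3 a b c).map Complex.ofRealHom = C (Complex.I * (-1)^(a+b+c)) * (R3 a b c).comp (C Complex.I * X) := by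
      unfold T3 R3
      simp only [Polynomial.map_mul, Th_map, mul_comp]
      have : C (Complex.I * (-1)^(a+b+c)) = (C (-Complex.I * (-1)^a) * C (-Complex.I * (-1)^b) * C (-Complex.I * (-1)^c) : ℂ[X]) := by
        rw [← C_mul, ← C_mul]; congr 1
        linear_combination (Complex.I * (-1)^a*(-1)^b*(-1)^c) * Complex.I_sq
      rw [this]; ring
    have h2 := congrArg (fun p => p.coeff j) h
    simp only [coeff_map, coeff_C_mul, comp_C_mul_X_coeff] at h2
    rw [show ((T3 a b c).coeff j : ℂ) = Complex.ofRealHom ((T3 a b c).coeff j) from rfl, h2]; ring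

lemma prod_shift (h : ℕ) : ∏ i ∈ range (2*h+1), (X + C (h:ℂ) - C (i:ℂ) : ℂ[X]) = X * ∏ j ∈ range h, (X ^ 2 - C (((j:ℂ)+1)^2)) := by
  induction h with
  | zero => simp
  | succ h ih =>
    rw [show 2*(h+1)+1 = (2*h+1)+1+1 by ring, Finset.prod_range_succ _ (2*h+1+1), Finset.prod_range_succ' _ (2*h+1), Finset.prod_range_succ _ h]
    have : ∀ i ∈ range (2*h+1), (X + C ((h+1:ℕ):ℂ) - C ((i+1:ℕ):ℂ) : ℂ[X]) = X + C (h:ℂ) - C (i:ℂ) := by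
      intro i _; push_cast; simp only [C_add]; ring
    rw [Finset.prod_congr rfl this, ih]
    push_cast
    simp only [C_add, C_mul, C_pow, C_0, C_1]
    have : (C 2 : ℂ[X]) = 2 := rfl
    rw [this]
    ring

lemma Rh_eq (h : ℕ) : Rh h = (ch (2*h+1)).comp (X + C (h:ℂ)) := by
  unfold Rh ch
  simp only [mul_comp, Polynomial.prod_comp, sub_comp, X_comp, C_comp]
  rw [prod_shift]

lemma ch_succ (N : ℕ) : C ((N:ℂ)+1) * ch (N+1) = (X - C (N:ℂ)) * ch N := by
  unfold ch
  rw [Finset.prod_range_succ, Nat.factorial_succ]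
  have : C ((N:ℂ)+1) * C (1 / (((N+1) * N.factorial : ℕ):ℂ)) = (C (1 / (N.factorial:ℂ)) : ℂ[X]) := by
    rw [← C_mul]; congr 1
    have h1 : (N.factorial:ℂ) ≠ 0 := by exact_mod_cast N.factorial_ne_zero
    have h2 : (N:ℂ) + 1 ≠ 0 := by exact_mod_cast N.succ_ne_zero
    push_cast; field_simp
  linear_combination ((∏ i ∈ range N, (X - C (i:ℂ))) * (X - C (N:ℂ))) * this

lemma ch_eval (N n : ℕ) : (ch N).eval (n:ℂ) = (n.choose N : ℂ) := by
  have h1 : (N.factorial:ℂ) ≠ 0 := by exact_mod_cast N.factorial_ne_zero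
  unfold ch
  rw [eval_mul, eval_C, eval_prod]
  simp only [eval_sub, eval_X, eval_C]
  have h2 : (∏ i ∈ range N, ((n:ℂ) - i)) = (n.descFactorial N : ℂ) := by
    induction N with
    | zero => simp
    | succ N ih =>
      rw [Finset.prod_range_succ, ih (by exact_mod_cast N.factorial_ne_zero), Nat.descFactorial_succ]
      rcases le_or_gt N n with h | h
      · push_cast [Nat.cast_sub h]; ring
      · rw [Nat.descFactorial_of_lt h]; simp
  rw [h2, Nat.descFactorial_eq_factorial_mul_choose]
  push_cast; field_simp

lemma ch_deriv (N : ℕ) : derivative (ch N) = ∑ i ∈ range N, C ((-1)^(N-1-i) / ((N:ℂ) - i)) * ch i := by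
  induction N with
  | zero => simp [ch]
  | succ N ih =>
    have hN : (N:ℂ) + 1 ≠ 0 := by exact_mod_cast N.succ_ne_zero
    have hC : (C ((N:ℂ)+1) : ℂ[X]) ≠ 0 := Polynomial.C_ne_zero.mpr hN
    apply mul_left_cancel₀ hC
    have h1 := congrArg derivative (ch_succ N)
    simp only [derivative_mul, derivative_C, zero_mul, zero_add, derivative_sub, derivative_X, sub_zero, one_mul] at h1
    rw [h1, ih, Finset.mul_sum, Finset.mul_sum]
    have h2 : ∀ i ∈ range N, (X - C (N:ℂ)) * (C ((-1)^(N-1-i) / ((N:ℂ) - i)) * ch i)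
       = C ((-1)^(N-(i+1)) * ((i+1:ℕ):ℂ) / ((N:ℂ) + 1 - (i+1:ℕ))) * ch (i+1) + C ((-1)^(N-i)) * ch i := by
      intro i hi
      have hi : i < N := by simpa using hi
      have hne : (N:ℂ) - i ≠ 0 := by
        rw [sub_ne_zero]; exact_mod_cast hi.ne'
      have hs := ch_succ i
      have e1 : (-1:ℂ)^(N-i) = - (-1)^(N-1-i) := by
        rw [show N - i = (N-1-i)+1 by omega, pow_succ]; ring
      have e2 : N - (i+1) = N - 1 - i := by omega
      rw [e1, e2]
      have e3 : (N:ℂ) + 1 - ((i+1:ℕ):ℂ) = N - i := by push_cast; ring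
      rw [e3]
      have e4 : (C ((-1)^(N-1-i) * ((i+1:ℕ):ℂ) / ((N:ℂ) - i)) : ℂ[X]) = C ((-1)^(N-1-i) / ((N:ℂ) - i)) * C ((i:ℂ)+1) := by
        rw [← C_mul]; congr 1; push_cast; ring
      have e5 : (C (-(-1)^(N-1-i)) : ℂ[X]) = C ((-1)^(N-1-i) / ((N:ℂ) - i)) * (C (i:ℂ) - C (N:ℂ)) := by
        rw [← C_sub, ← C_mul]; congr 1; field_simp; ring
      rw [e4, e5]
      linear_combination (-C ((-1)^(N-1-i) / ((N:ℂ) - i))) * hs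
    rw [Finset.sum_congr rfl h2, Finset.sum_add_distrib]
    have h3 := Finset.sum_range_succ' (fun i : ℕ => C ((-1)^(N-i) * (i:ℂ) / ((N:ℂ) + 1 - i)) * ch i) N
    simp only [Nat.cast_zero, mul_zero, zero_div, C_0, zero_mul, add_zero] at h3
    rw [← h3]
    have h4 := Finset.sum_range_succ (fun i : ℕ => C ((-1:ℂ)^(N-i)) * ch i) N
    simp only [Nat.sub_self, pow_zero, C_1, one_mul] at h4
    have h5 : ∑ i ∈ range N, C ((-1:ℂ)^(N-i)) * ch i = ∑ i ∈ range (N+1), C ((-1:ℂ)^(N-i)) * ch i - ch N := by rw [h4]; ring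
    rw [h5]
    have h6 : ∑ i ∈ range (N+1), C ((-1)^(N-i) * (i:ℂ) / ((N:ℂ) + 1 - i)) * ch i + ∑ i ∈ range (N+1), C ((-1:ℂ)^(N-i)) * ch i
      = ∑ i ∈ range (N+1), C ((N:ℂ)+1) * (C ((-1)^(N+1-1-i) / (((N+1:ℕ):ℂ) - i)) * ch i) := by
      rw [← Finset.sum_add_distrib]
      refine Finset.sum_congr rfl fun i hi => ?_
      have hi : i < N + 1 := by simpa using hi
      have hne : (N:ℂ) + 1 - i ≠ 0 := by
        rw [sub_ne_zero]; exact_mod_cast hi.ne'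
      rw [← add_mul, ← C_add, ← mul_assoc, ← C_mul]
      congr 2
      rw [Nat.add_sub_cancel]
      push_cast; field_simp; ring
    linear_combination h6

lemma Rh_eval (h n : ℕ) : (Rh h).eval (n:ℂ) = ((n+h).choose (2*h+1) : ℂ) := by
  rw [Rh_eq, eval_comp]
  have := ch_eval (2*h+1) (n+h)
  push_cast at this
  simpa using this

lemma Rh_deriv_eval (h n : ℕ) : (derivative (Rh h)).eval (n:ℂ) =
    ∑ i ∈ range (2*h+1), (-1)^(2*h-i) / (((2*h+1-i : ℕ)):ℂ) * ((n+h).choose i : ℂ) := by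
  rw [Rh_eq, derivative_comp]
  simp only [derivative_add, derivative_X, derivative_C, add_zero, eval_comp, one_mul, eval_add, eval_X, eval_C]
  rw [ch_deriv, eval_finsetSum]
  refine Finset.sum_congr rfl fun i hi => ?_
  have hi : i < 2*h+1 := by simpa using hi
  have h1 := ch_eval i (n+h)
  push_cast at h1
  rw [eval_mul, eval_C, h1, Nat.cast_sub hi.le]
  rfl

end PB

end

section
open Finset Polynomial

namespace PB

lemma lucas_dvd (p a N : ℕ) (hp : p.Prime) (h : a % p < N % p) : p ∣ a.choose N := by
  have := Fact.mk hp
  have h1 := Choose.choose_modEq_choose_mod_mul_choose_div_nat (n := a) (k := N) (p := p)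
  rw [Nat.choose_eq_zero_of_lt h, zero_mul] at h1
  exact (Nat.modEq_zero_iff_dvd).mp h1

lemma term1 (h n w L : ℕ) (hL : 2*h+1 ≤ L) :
    ∃ z : ℤ, (Nat.lcmUpto L : ℂ) * ((derivative (Rh h)).eval (n:ℂ) * w) = z ∧
      ∀ p : ℕ, p.Prime → p ≤ L → ((n+h) % p < (2*h+1) % p ∨ p ∣ w) → (p:ℤ) ∣ z := by
  set d := Nat.lcmUpto L with hd
  have hk : ∀ k, 1 ≤ k → k ≤ L → k ∣ d := fun k h1 h2 =>
    Finset.dvd_lcm (f := id) (s := Icc 1 L) (by simp; omega)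
  refine ⟨∑ i ∈ range (2*h+1), (-1)^(2*h-i) * (((d / (2*h+1-i) * (n+h).choose i * w : ℕ)) : ℤ), ?_, ?_⟩
  · rw [Rh_deriv_eval, Int.cast_sum]
    rw [Finset.sum_mul, Finset.mul_sum]
    refine Finset.sum_congr rfl fun i hi => ?_
    have hi : i < 2*h+1 := by simpa using hi
    have h0 : ((2*h+1-i : ℕ):ℂ) ≠ 0 := by exact_mod_cast (by omega : 2*h+1-i ≠ 0)
    obtain ⟨e, he⟩ := hk (2*h+1-i) (by omega) (by omega)
    have h2 : d / (2*h+1-i) = e := by rw [he]; exact Nat.mul_div_cancel_left _ (by omega)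
    have h3 : (d:ℂ) = ((2*h+1-i : ℕ):ℂ) * e := by exact_mod_cast he
    rw [h2, h3]
    push_cast
    field_simp
  · intro p hp hpL hor
    refine Finset.dvd_sum fun i hi => ?_
    have hi : i < 2*h+1 := by simpa using hi
    refine Dvd.dvd.mul_left ?_ _
    rw [Int.natCast_dvd_natCast]
    by_cases hpk : p ∣ 2*h+1-i
    · rcases hor with hor | hor
      · refine Dvd.dvd.mul_right (Dvd.dvd.mul_left (lucas_dvd p _ _ hp ?_) _) _
        have : (2*h+1) % p = i % p := by
          exact ((Nat.modEq_iff_dvd' hi.le).mpr hpk).symm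
        omega
      · exact Dvd.dvd.mul_left hor _
    · refine Dvd.dvd.mul_right (Dvd.dvd.mul_right ?_ _) _
      have h1 := hk (2*h+1-i) (by omega) (by omega)
      have h2 : p ∣ (2*h+1-i) * (d / (2*h+1-i)) := by
        rw [Nat.mul_div_cancel' h1]; exact hk p hp.one_lt.le hpL
      exact (hp.dvd_mul.mp h2).resolve_left hpk

def goodp (m p : ℕ) : Prop := p.Prime ∧ p ≤ 14*m+1 ∧ ∀ n : ℕ, (n+3*m) % p < (2*(3*m)+1) % p ∨
  (n+5*m) % p < (2*(5*m)+1) % p ∨ (n+7*m) % p < (2*(7*m)+1) % p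

open Classical in
noncomputable def GG (m : ℕ) : Finset ℕ := (range (14*m+2)).filter (goodp m)

lemma mem_GG (m p : ℕ) : p ∈ GG m ↔ goodp m p := by
  classical
  unfold GG
  simp only [mem_filter, mem_range, and_iff_right_iff_imp]
  intro h; have := h.2.1; omega

noncomputable def DD (m : ℕ) : ℕ := Nat.lcmUpto (14*m+1) / ∏ p ∈ GG m, p

lemma GG_dvd (m : ℕ) : ∏ p ∈ GG m, p ∣ Nat.lcmUpto (14*m+1) := by
  refine Finset.prod_primes_dvd _ (fun p hp => ((mem_GG m p).mp hp).1.prime) fun p hp => ?_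
  have h := (mem_GG m p).mp hp
  exact Finset.dvd_lcm (f := id) (s := Icc 1 (14*m+1)) (by simp; exact ⟨h.1.one_lt.le, h.2.1⟩)

lemma DD_mul (m : ℕ) : DD m * ∏ p ∈ GG m, p = Nat.lcmUpto (14*m+1) := Nat.div_mul_cancel (GG_dvd m)

lemma DD_pos (m : ℕ) : 0 < DD m := by
  have := DD_mul m
  have h := Nat.lcmUpto_pos (14*m+1)
  rw [← this] at h
  exact Nat.pos_of_mul_pos_right h

lemma R3_int (a b c n : ℕ) : ∃ z : ℤ, (R3 a b c).eval (n:ℂ) = z := by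
  unfold R3
  rw [eval_mul, eval_mul, Rh_eval, Rh_eval, Rh_eval]
  exact ⟨((n+a).choose (2*a+1) * (n+b).choose (2*b+1) * (n+c).choose (2*c+1) : ℕ), by push_cast; ring⟩

lemma DD_int (m n : ℕ) : ∃ z : ℤ, (DD m : ℂ) * (derivative (R3 (3*m) (5*m) (7*m))).eval (n:ℂ) = z := by
  obtain ⟨z1, h1, g1⟩ := term1 (3*m) n ((n+5*m).choose (2*(5*m)+1) * (n+7*m).choose (2*(7*m)+1)) (14*m+1) (by omega)
  obtain ⟨z2, h2, g2⟩ := term1 (5*m) n ((n+3*m).choose (2*(3*m)+1) * (n+7*m).choose (2*(7*m)+1)) (14*m+1) (by omega)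
  obtain ⟨z3, h3, g3⟩ := term1 (7*m) n ((n+3*m).choose (2*(3*m)+1) * (n+5*m).choose (2*(5*m)+1)) (14*m+1) (by omega)
  have hz : (Nat.lcmUpto (14*m+1) : ℂ) * (derivative (R3 (3*m) (5*m) (7*m))).eval (n:ℂ) = ((z1+z2+z3 : ℤ) : ℂ) := by
    push_cast
    rw [← h1, ← h2, ← h3]
    unfold R3
    simp only [derivative_mul, eval_add, eval_mul, Rh_eval]
    push_cast; ring
  have hdvd : ((∏ p ∈ GG m, p : ℕ) : ℤ) ∣ z1 + z2 + z3 := by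
    rw [Int.natCast_dvd]
    refine Finset.prod_primes_dvd _ (fun p hp => ((mem_GG m p).mp hp).1.prime) fun p hp => ?_
    have h := (mem_GG m p).mp hp
    rw [← Int.natCast_dvd]
    have c1 : (n+3*m) % p < (2*(3*m)+1) % p → p ∣ (n+3*m).choose (2*(3*m)+1) := lucas_dvd _ _ _ h.1
    have c2 : (n+5*m) % p < (2*(5*m)+1) % p → p ∣ (n+5*m).choose (2*(5*m)+1) := lucas_dvd _ _ _ h.1
    have c3 : (n+7*m) % p < (2*(7*m)+1) % p → p ∣ (n+7*m).choose (2*(7*m)+1) := lucas_dvd _ _ _ h.1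
    refine dvd_add (dvd_add (g1 p h.1 h.2.1 ?_) (g2 p h.1 h.2.1 ?_)) (g3 p h.1 h.2.1 ?_)
    · rcases h.2.2 n with k | k | k
      · exact Or.inl k
      · exact Or.inr (Dvd.dvd.mul_right (c2 k) _)
      · exact Or.inr (Dvd.dvd.mul_left (c3 k) _)
    · rcases h.2.2 n with k | k | k
      · exact Or.inr (Dvd.dvd.mul_right (c1 k) _)
      · exact Or.inl k
      · exact Or.inr (Dvd.dvd.mul_left (c3 k) _)
    · rcases h.2.2 n with k | k | k
      · exact Or.inr (Dvd.dvd.mul_right (c1 k) _)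
      · exact Or.inr (Dvd.dvd.mul_left (c2 k) _)
      · exact Or.inl k
  obtain ⟨z, hz'⟩ := hdvd
  refine ⟨z, ?_⟩
  have hP : ((∏ p ∈ GG m, p : ℕ) : ℂ) ≠ 0 := by
    rw [Nat.cast_ne_zero, Finset.prod_ne_zero_iff]
    exact fun p hp => ((mem_GG m p).mp hp).1.ne_zero
  apply mul_left_cancel₀ hP
  rw [hz', ← DD_mul] at hz
  push_cast at hz ⊢
  rw [← hz]; ring

lemma log_DD (m : ℕ) : Real.log (DD m) = Chebyshev.psi ((14*m+1 : ℕ):ℝ) - ∑ p ∈ GG m, Real.log p := by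
  rw [Chebyshev.psi_eq_log_lcmUpto, ← DD_mul]
  have hP : ((∏ p ∈ GG m, p : ℕ) : ℝ) ≠ 0 := by
    rw [Nat.cast_ne_zero, Finset.prod_ne_zero_iff]
    exact fun p hp => ((mem_GG m p).mp hp).1.ne_zero
  have hD : (DD m : ℝ) ≠ 0 := by exact_mod_cast (DD_pos m).ne'
  rw [Nat.cast_mul, Real.log_mul hD hP, Nat.cast_prod, Real.log_prod]
  · ring
  · intro p hp; exact_mod_cast ((mem_GG m p).mp hp).1.ne_zero

end PB

end

section
open Finset Filter Topology

namespace PB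

lemma pairK (c c' m p K r e e' n : ℕ) (hp : 0 < p) (hm : 2*m = K*p+r)
    (h1 : e*p ≤ (2*c+1)*r+1) (h2 : (2*c+1)*r+1 < (e+1)*p)
    (h3 : e'*p ≤ (2*c'+1)*r+1) (h4 : (2*c'+1)*r+1 < (e'+1)*p)
    (hodd : (e+e') % 2 = 1) (hg : (e+e'+1)*p ≤ (2*c+1)*r+1+((2*c'+1)*r+1)+1) :
    (n+(2*c+1)*m) % p < (2*((2*c+1)*m)+1) % p ∨ (n+(2*c'+1)*m) % p < (2*((2*c'+1)*m)+1) % p := by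
  have key : ∀ c e : ℕ, e*p ≤ (2*c+1)*r+1 → (2*c+1)*r+1 < (e+1)*p →
      (2*((2*c+1)*m)+1) % p = (2*c+1)*r+1 - e*p := by
    intro c e h1 h2
    have : 2*((2*c+1)*m)+1 = ((2*c+1)*r+1 - e*p) + p * ((2*c+1)*K+e) := by
      zify [h1]
      have : (2*m:ℤ) = K*p+r := by exact_mod_cast hm
      linear_combination (2*c+1:ℤ) * this
    rw [this, Nat.add_mul_mod_self_left]
    apply Nat.mod_eq_of_lt
    have : (e+1)*p = e*p+p := by ring
    omega
  rw [key c e h1 h2, key c' e' h3 h4]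
  by_contra hcon
  push Not at hcon
  obtain ⟨k1, k2⟩ := hcon
  have d1 := Nat.div_add_mod (n+(2*c+1)*m) p
  have d2 := Nat.div_add_mod (n+(2*c'+1)*m) p
  have l1 := Nat.mod_lt (n+(2*c+1)*m) hp
  have l2 := Nat.mod_lt (n+(2*c'+1)*m) hp
  set q1 := (n+(2*c+1)*m) / p
  set q2 := (n+(2*c'+1)*m) / p
  set s1 := (n+(2*c+1)*m) % p
  set s2 := (n+(2*c'+1)*m) % p
  zify [h1, h3] at *
  obtain ⟨w, hw⟩ : ∃ w : ℤ, (2*(q1:ℤ) - 2*q2 - (2*c-2*c')*K - e + e') = 2*w+1 := by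
    obtain ⟨t, ht⟩ : ∃ t : ℤ, (e:ℤ) + e' = 2*t+1 := ⟨((e:ℤ)+e')/2, by omega⟩
    exact ⟨q1 - q2 - (c-c')*K - e + t, by linear_combination ht⟩
  have eq2 : (2*w+1) * p + (2*s1 - ((2*c+1)*r+1-e*p)) - (2*s2 - ((2*c'+1)*r+1-e'*p)) = 0 := by
    rw [← hw]
    linear_combination 2*d1 - 2*d2 + (2*c-2*c':ℤ)*hm
  rcases lt_or_ge w 0 with hw0 | hw0
  · have : (2*w+1)*p ≤ (-1) * p := mul_le_mul_of_nonneg_right (by omega) (by omega)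
    nlinarith
  · have : 1 * (p:ℤ) ≤ (2*w+1)*p := mul_le_mul_of_nonneg_right (by omega) (by omega)
    nlinarith

lemma good_of (m p K r : ℕ) (hp : p.Prime) (hm : 2*m = K*p+r)
    (hr : (p ≤ 6*r ∧ 3*r+3 < p) ∨ (p ≤ 3*r ∧ 7*r+7 < 3*p) ∨ (p ≤ 2*r ∧ 3*r+3 < 2*p) ∨ (2*p ≤ 3*r ∧ 7*r+7 < 5*p) ∨
      (3*p ≤ 4*r ∧ 7*r+7 < 6*p)) : goodp m p := by
  have hp2 := hp.two_le
  have hrm : r ≤ 2*m := by rw [hm]; omega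
  refine ⟨hp, by omega, fun n => ?_⟩
  have P12 : ∀ e e' : ℕ, e*p ≤ 3*r+1 → 3*r+1 < (e+1)*p → e'*p ≤ 5*r+1 → 5*r+1 < (e'+1)*p → (e+e')%2=1 →
     (e+e'+1)*p ≤ 3*r+1+(5*r+1)+1 → (n+3*m) % p < (2*(3*m)+1) % p ∨ (n+5*m) % p < (2*(5*m)+1) % p :=
    fun e e' a1 a2 a3 a4 a5 a6 => pairK 1 2 m p K r e e' n (by omega) hm a1 a2 a3 a4 a5 a6
  have P13 : ∀ e e' : ℕ, e*p ≤ 3*r+1 → 3*r+1 < (e+1)*p → e'*p ≤ 7*r+1 → 7*r+1 < (e'+1)*p → (e+e')%2=1 →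
     (e+e'+1)*p ≤ 3*r+1+(7*r+1)+1 → (n+3*m) % p < (2*(3*m)+1) % p ∨ (n+7*m) % p < (2*(7*m)+1) % p :=
    fun e e' a1 a2 a3 a4 a5 a6 => pairK 1 3 m p K r e e' n (by omega) hm a1 a2 a3 a4 a5 a6
  have P23 : ∀ e e' : ℕ, e*p ≤ 5*r+1 → 5*r+1 < (e+1)*p → e'*p ≤ 7*r+1 → 7*r+1 < (e'+1)*p → (e+e')%2=1 →
     (e+e'+1)*p ≤ 5*r+1+(7*r+1)+1 → (n+5*m) % p < (2*(5*m)+1) % p ∨ (n+7*m) % p < (2*(7*m)+1) % p :=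
    fun e e' a1 a2 a3 a4 a5 a6 => pairK 2 3 m p K r e e' n (by omega) hm a1 a2 a3 a4 a5 a6
  rcases hr with ⟨h1, h2⟩ | ⟨h1, h2⟩ | ⟨h1, h2⟩ | ⟨h1, h2⟩ | ⟨h1, h2⟩
  · rcases lt_or_ge (5*r+1) p with c1 | c1
    · have := P23 0 1 (by omega) (by omega) (by omega) (by omega) (by omega) (by omega); tauto
    rcases lt_or_ge (7*r+1) (2*p) with c2 | c2
    · have := P13 0 1 (by omega) (by omega) (by omega) (by omega) (by omega) (by omega); tauto
    · have := P12 0 1 (by omega) (by omega) (by omega) (by omega) (by omega) (by omega); tauto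
  · rcases lt_or_ge (5*r+1) (2*p) with c4 | c4
    · have := P23 1 2 (by omega) (by omega) (by omega) (by omega) (by omega) (by omega); tauto
    · have := P13 1 2 (by omega) (by omega) (by omega) (by omega) (by omega) (by omega); tauto
  · rcases lt_or_ge (5*r+1) (3*p) with c1 | c1
    · have := P12 1 2 (by omega) (by omega) (by omega) (by omega) (by omega) (by omega); tauto
    · have := P13 1 4 (by omega) (by omega) (by omega) (by omega) (by omega) (by omega); tauto
  · have := P23 3 4 (by omega) (by omega) (by omega) (by omega) (by omega) (by omega); tauto
  · rcases lt_or_ge (5*r+1) (4*p) with c1 | c1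
    · have := P12 2 3 (by omega) (by omega) (by omega) (by omega) (by omega) (by omega); tauto
    · have := P13 2 5 (by omega) (by omega) (by omega) (by omega) (by omega) (by omega); tauto

def uv (u v : ℝ) : Prop := (u = 1/6 ∧ v = 1/3) ∨ (u = 1/3 ∧ v = 3/7) ∨ (u = 1/2 ∧ v = 2/3) ∨ (u = 2/3 ∧ v = 5/7) ∨ (u = 3/4 ∧ v = 6/7)

-- generic: primes with n/p in the range
lemma range_good (m p K : ℕ) (u v : ℝ) (hp : p.Prime)
    (huv : uv u v)
    (hlo : (2*m+1 : ℝ) / (K+v) < p) (hhi : (p:ℝ) ≤ 2*m / (K+u)) : goodp m p := by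
  have hK : (0:ℝ) ≤ K := Nat.cast_nonneg K
  have huv0 : 0 < u ∧ 0 < v := by
    rcases huv with ⟨h, h'⟩ | ⟨h, h'⟩ | ⟨h, h'⟩ | ⟨h, h'⟩ | ⟨h, h'⟩ <;> rw [h, h'] <;> norm_num
  obtain ⟨hu, hv⟩ := huv0
  rw [div_lt_iff₀ (by linarith)] at hlo
  rw [le_div_iff₀ (by linarith)] at hhi
  have hp0 : (0:ℝ) < p := by exact_mod_cast hp.pos
  have hle : K*p ≤ 2*m := by
    have : (K*p:ℝ) ≤ 2*m := by nlinarith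
    exact_mod_cast this
  refine good_of m p K (2*m - K*p) hp (by omega) ?_
  obtain ⟨r, hr⟩ : ∃ r, 2*m - K*p = r := ⟨_, rfl⟩
  rw [hr]
  have hr2 : (2*m:ℝ) = K*p + r := by exact_mod_cast (by omega : 2*m = K*p+r)
  rcases huv with ⟨h, h'⟩ | ⟨h, h'⟩ | ⟨h, h'⟩ | ⟨h, h'⟩ | ⟨h, h'⟩ <;> subst h <;> subst h'
  · left; constructor
    · have : (p:ℝ) ≤ 6*r := by linarith
      exact_mod_cast this
    · have : (3:ℝ)*r+3 < p := by linarith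
      exact_mod_cast this
  · right; left; constructor
    · have : (p:ℝ) ≤ 3*r := by linarith
      exact_mod_cast this
    · have : (7:ℝ)*r+7 < 3*p := by linarith
      exact_mod_cast this
  · right; right; left; constructor
    · have : (p:ℝ) ≤ 2*r := by linarith
      exact_mod_cast this
    · have : (3:ℝ)*r+3 < 2*p := by linarith
      exact_mod_cast this
  · right; right; right; left; constructor
    · have : (2:ℝ)*p ≤ 3*r := by linarith
      exact_mod_cast this
    · have : (7:ℝ)*r+7 < 5*p := by linarith
      exact_mod_cast this
  · right; right; right; right; constructor
    · have : (3:ℝ)*p ≤ 4*r := by linarith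
      exact_mod_cast this
    · have : (7:ℝ)*r+7 < 6*p := by linarith
      exact_mod_cast this

noncomputable def FG (m : ℕ) (x : ℝ) : ℝ := ∑ p ∈ (GG m).filter (fun p : ℕ => x < (p:ℝ)), Real.log p

lemma FG_mono (m : ℕ) {x y : ℝ} (h : y ≤ x) : FG m x ≤ FG m y := by
  unfold FG
  refine Finset.sum_le_sum_of_subset_of_nonneg ?_ fun p _ _ => Real.log_natCast_nonneg p
  intro p hp
  simp only [mem_filter] at hp ⊢
  exact ⟨hp.1, by linarith⟩

lemma FG_le (m : ℕ) (x : ℝ) : FG m x ≤ ∑ p ∈ GG m, Real.log p :=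
  Finset.sum_le_sum_of_subset_of_nonneg (Finset.filter_subset _ _) fun p _ _ => Real.log_natCast_nonneg p

lemma FG_nonneg (m : ℕ) (x : ℝ) : 0 ≤ FG m x := Finset.sum_nonneg fun p _ => Real.log_natCast_nonneg p

lemma FG_step (m : ℕ) (x lo hi : ℝ) (h0 : 0 ≤ lo) (h1 : lo ≤ x) (h2 : hi ≤ x)
    (hg : ∀ p : ℕ, p.Prime → lo < p → (p:ℝ) ≤ hi → goodp m p) :
    FG m x + (Chebyshev.theta hi - Chebyshev.theta lo) ≤ FG m lo := by
  rcases le_or_gt hi lo with h | h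
  · have := Chebyshev.theta_mono h
    have := FG_mono m h1
    linarith
  · have h3 : Chebyshev.theta hi - Chebyshev.theta lo = ∑ p ∈ (Ioc ⌊lo⌋₊ ⌊hi⌋₊).filter Nat.Prime, Real.log p := by
      unfold Chebyshev.theta
      have hfl : ⌊lo⌋₊ ≤ ⌊hi⌋₊ := Nat.floor_mono h.le
      rw [← Finset.Ioc_union_Ioc_eq_Ioc (Nat.zero_le _) hfl, Finset.filter_union, Finset.sum_union]
      · ring
      · rw [Finset.disjoint_left]
        intro p hp hp'
        simp only [mem_filter, mem_Ioc] at hp hp'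
        omega
    rw [h3]
    unfold FG
    rw [← Finset.sum_union]
    · refine Finset.sum_le_sum_of_subset_of_nonneg ?_ fun p _ _ => Real.log_natCast_nonneg p
      intro p hp
      simp only [mem_union, mem_filter, mem_Ioc, mem_GG] at hp ⊢
      rcases hp with hp | hp
      · exact ⟨hp.1, by linarith⟩
      · have a1 : lo < p := (Nat.floor_lt h0).mp hp.1.1
        have a2 : (p:ℝ) ≤ hi := (Nat.le_floor_iff (by linarith)).mp hp.1.2
        exact ⟨hg p hp.2 a1 a2, a1⟩
    · rw [Finset.disjoint_left]
      intro p hp hp'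
      simp only [mem_filter, mem_Ioc] at hp hp'
      have a2 : (p:ℝ) ≤ hi := (Nat.le_floor_iff (by linarith)).mp hp'.1.2
      linarith [hp.2]

noncomputable def thd (m : ℕ) (K : ℕ) (u v : ℝ) : ℝ :=
  Chebyshev.theta (2*m/(K+u)) - Chebyshev.theta ((2*m+1)/(K+v))

noncomputable def thd5 (m K : ℕ) : ℝ := thd m K (1/6) (1/3) + thd m K (1/3) (3/7) + thd m K (1/2) (2/3) + thd m K (2/3) (5/7) + thd m K (3/4) (6/7)

lemma FG_sum (m M : ℕ) : ∑ K ∈ range M, thd5 m K ≤ FG m ((2*m+1)/((M:ℝ) - 1 + 6/7)) ∨ M = 0 := by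
  have hm : (0:ℝ) ≤ m := Nat.cast_nonneg m
  have dle : ∀ c d s : ℝ, 0 < d → d ≤ c → 0 ≤ s → s ≤ 2*m+1 → s/c ≤ (2*m+1)/d := by
    intro c d s hd hc _ hs
    exact div_le_div₀ (by linarith) hs hd hc
  have step : ∀ (K : ℕ) (x u v : ℝ), uv u v →
      0 < v → (2*m+1)/((K:ℝ)+v) ≤ x → 2*m/((K:ℝ)+u) ≤ x → FG m x + thd m K u v ≤ FG m ((2*m+1)/((K:ℝ)+v)) := by
    intro K x u v huv hv h1 h2
    exact FG_step m x _ _ (by positivity) h1 h2 fun p hp a1 a2 => range_good m p K u v hp huv a1 a2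
  have block : ∀ (K : ℕ) (x : ℝ), (2*m+1)/((K:ℝ)+1/3) ≤ x → 2*m/((K:ℝ)+1/6) ≤ x →
      FG m x + thd5 m K ≤ FG m ((2*m+1)/((K:ℝ)+6/7)) := by
    intro K x h1 h2
    unfold thd5
    have hK : (0:ℝ) ≤ K := Nat.cast_nonneg K
    have s1 := step K x (1/6) (1/3) (by simp [uv]) (by norm_num) h1 h2
    have s2 := step K ((2*m+1)/((K:ℝ)+1/3)) (1/3) (3/7) (by unfold uv; tauto) (by norm_num)
      (dle _ _ _ (by linarith) (by linarith) (by linarith) (by linarith)) (dle _ _ _ (by linarith) (by linarith) (by linarith) (by linarith))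
    have s3 := step K ((2*m+1)/((K:ℝ)+3/7)) (1/2) (2/3) (by unfold uv; tauto) (by norm_num)
      (dle _ _ _ (by linarith) (by linarith) (by linarith) (by linarith)) (dle _ _ _ (by linarith) (by linarith) (by linarith) (by linarith))
    have s4 := step K ((2*m+1)/((K:ℝ)+2/3)) (2/3) (5/7) (by unfold uv; tauto) (by norm_num)
      (dle _ _ _ (by linarith) (by linarith) (by linarith) (by linarith)) (dle _ _ _ (by linarith) (by linarith) (by linarith) (by linarith))
    have s5 := step K ((2*m+1)/((K:ℝ)+5/7)) (3/4) (6/7) (by unfold uv; tauto) (by norm_num)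
      (dle _ _ _ (by linarith) (by linarith) (by linarith) (by linarith)) (dle _ _ _ (by linarith) (by linarith) (by linarith) (by linarith))
    linarith
  induction M with
  | zero => right; rfl
  | succ M ih =>
    left
    rw [Finset.sum_range_succ]
    have e : ((M+1:ℕ):ℝ) - 1 + 6/7 = M + 6/7 := by push_cast; ring
    rw [e]
    rcases Nat.eq_zero_or_pos M with h0 | h0
    · subst h0
      have := block 0 (12*m+6) (by push_cast; rw [div_le_iff₀ (by norm_num)]; linarith)
        (by push_cast; rw [div_le_iff₀ (by norm_num)]; linarith)
      have := FG_nonneg m (12*m+6)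
      simp only [range_zero, sum_empty, zero_add]
      linarith
    · have ih' := ih.resolve_right (by omega)
      have hM : (1:ℝ) ≤ M := by exact_mod_cast h0
      have hpos : 0 < (M:ℝ) - 1 + 6/7 := by linarith
      have := block M ((2*m+1)/((M:ℝ) - 1 + 6/7)) 
        (dle _ _ _ (by linarith) (by linarith) (by linarith) (by linarith)) (dle _ _ _ (by linarith) (by linarith) (by linarith) (by linarith))
      linarith

lemma thd_tendsto (K : ℕ) (u v : ℝ) (hu : 0 < u) (hv : 0 < v) :
    Tendsto (fun m : ℕ => thd m K u v / m) atTop (𝓝 (2/(K+u) - 2/(K+v))) := by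
  have hK : (0:ℝ) ≤ K := Nat.cast_nonneg K
  have gen : ∀ (c d : ℝ), 0 < c → Tendsto (fun m : ℕ => Chebyshev.theta ((2*m+d)/c) / m) atTop (𝓝 (2/c)) := by
    intro c d hc
    have t1 : Tendsto (fun m : ℕ => (2*(m:ℝ)+d)/c) atTop atTop := by
      apply Tendsto.atTop_div_const hc
      apply tendsto_atTop_add_const_right
      exact tendsto_natCast_atTop_atTop.const_mul_atTop (by norm_num)
    have t2 := theta_tendsto.comp t1
    have t3 : Tendsto (fun m : ℕ => 2/c + d/c * (1/(m:ℝ))) atTop (𝓝 (2/c + d/c*0)) :=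
      tendsto_const_nhds.add (tendsto_one_div_atTop_nhds_zero_nat.const_mul _)
    have t4 := t2.mul t3
    simp only [mul_zero, add_zero, one_mul] at t4
    refine t4.congr' ?_
    filter_upwards [t1.eventually_gt_atTop 0, eventually_gt_atTop 0] with m h1 h2
    have h2 : (m:ℝ) ≠ 0 := by exact_mod_cast h2.ne'
    simp only [Function.comp]
    have : 2/c + d/c * (1/(m:ℝ)) = ((2*m+d)/c) / m := by field_simp
    rw [this]
    rw [div_mul_div_comm, mul_comm ((2*(m:ℝ)+d)/c) (m:ℝ), mul_div_mul_right _ _ h1.ne']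
  have h := (gen (K+u) 0 (by linarith)).sub (gen (K+v) 1 (by linarith))
  refine h.congr fun m => ?_
  unfold thd
  rw [add_zero]; ring

lemma logDD_le (M : ℕ) (hM : M ≠ 0) (ε : ℝ) (hε : 0 < ε) : ∀ᶠ m : ℕ in atTop, Real.log (DD m) ≤
    (14 - ∑ K ∈ range M, ((2/((K:ℝ)+1/6) - 2/(K+3/7)) + (2/((K:ℝ)+1/2) - 2/(K+5/7)) + (2/((K:ℝ)+3/4) - 2/(K+6/7))) + ε) * m := by
  have t1 : Tendsto (fun m : ℕ => ∑ K ∈ range M, thd5 m K / m) atTop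
     (𝓝 (∑ K ∈ range M, ((2/((K:ℝ)+1/6) - 2/(K+3/7)) + (2/((K:ℝ)+1/2) - 2/(K+5/7)) + (2/((K:ℝ)+3/4) - 2/(K+6/7))))) := by
    refine tendsto_finsetSum _ fun K _ => ?_
    have T := fun u v => thd_tendsto K u v
    have t := ((((T (1/6) (1/3) (by norm_num) (by norm_num)).add (T (1/3) (3/7) (by norm_num) (by norm_num))).add
      (T (1/2) (2/3) (by norm_num) (by norm_num))).add (T (2/3) (5/7) (by norm_num) (by norm_num))).add
      (T (3/4) (6/7) (by norm_num) (by norm_num))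
    rw [show (2/((K:ℝ)+1/6) - 2/(K+3/7)) + (2/((K:ℝ)+1/2) - 2/(K+5/7)) + (2/((K:ℝ)+3/4) - 2/(K+6/7)) =
      2/((K:ℝ)+1/6) - 2/(K+1/3) + (2/((K:ℝ)+1/3) - 2/(K+3/7)) + (2/((K:ℝ)+1/2) - 2/(K+2/3)) + (2/((K:ℝ)+2/3) - 2/(K+5/7))
       + (2/((K:ℝ)+3/4) - 2/(K+6/7)) by ring]
    refine t.congr fun m => ?_
    unfold thd5; ring
  have t2 : Tendsto (fun m : ℕ => Chebyshev.psi ((14*m+1 : ℕ):ℝ) / m) atTop (𝓝 14) := by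
    have s1 : Tendsto (fun m : ℕ => ((14*m+1 : ℕ):ℝ)) atTop atTop := by
      refine tendsto_natCast_atTop_atTop.comp (tendsto_atTop_mono (fun m => ?_) tendsto_id)
      simp; omega
    have s2 := psi_tendsto.comp s1
    have s3 : Tendsto (fun m : ℕ => 14 + 1/(m:ℝ)) atTop (𝓝 (14+0)) :=
      tendsto_const_nhds.add tendsto_one_div_atTop_nhds_zero_nat
    have s4 := s2.mul s3
    rw [add_zero, one_mul] at s4
    refine s4.congr' ?_
    filter_upwards [eventually_gt_atTop 0] with m h2
    have h2 : (m:ℝ) ≠ 0 := by exact_mod_cast h2.ne'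
    have h3 : (14*(m:ℝ)+1) ≠ 0 := by positivity
    simp only [Function.comp]
    push_cast
    field_simp
  have t3 := t2.sub t1
  filter_upwards [t3.eventually_lt_const (lt_add_of_pos_right _ hε), eventually_gt_atTop 0] with m h h0
  have h0 : (0:ℝ) < m := by exact_mod_cast h0
  rw [← Finset.sum_div, ← sub_div, div_lt_iff₀ h0] at h
  rw [log_DD]
  have h1 := (FG_sum m M).resolve_right hM
  have h2 := FG_le m ((2*m+1)/((M:ℝ) - 1 + 6/7))
  linarith

end PB

end

section
open Finset Filter Topology

namespace PB

noncomputable def sK (K : ℕ) : ℝ := ((2/((K:ℝ)+1/6) - 2/(K+3/7)) + (2/((K:ℝ)+1/2) - 2/(K+5/7)) + (2/((K:ℝ)+3/4) - 2/(K+6/7)))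

lemma sK_eq (K : ℕ) : sK K = 22/((6*K+1)*(7*K+3)) + 6/((2*K+1)*(7*K+5)) + 6/((4*K+3)*(7*K+6)) := by
  have hK : (0:ℝ) ≤ K := Nat.cast_nonneg K
  unfold sK
  have h1 : (K:ℝ)+1/6 ≠ 0 := by positivity
  have h2 : (K:ℝ)+3/7 ≠ 0 := by positivity
  have h3 : (K:ℝ)+1/2 ≠ 0 := by positivity
  have h4 : (K:ℝ)+5/7 ≠ 0 := by positivity
  have h5 : (K:ℝ)+3/4 ≠ 0 := by positivity
  have h6 : (K:ℝ)+6/7 ≠ 0 := by positivity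
  rw [show (6*(K:ℝ)+1)*(7*K+3) = 42 * ((K+1/6)*(K+3/7)) by ring,
    show (2*(K:ℝ)+1)*(7*K+5) = 14 * ((K+1/2)*(K+5/7)) by ring,
    show (4*(K:ℝ)+3)*(7*K+6) = 28 * ((K+3/4)*(K+6/7)) by ring]
  congr 1
  · congr 1
    · rw [div_sub_div _ _ h1 h2, div_eq_div_iff (by positivity) (by positivity)]; ring
    · rw [div_sub_div _ _ h3 h4, div_eq_div_iff (by positivity) (by positivity)]; ring
  · rw [div_sub_div _ _ h5 h6, div_eq_div_iff (by positivity) (by positivity)]; ring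

lemma sK_ge (j : ℕ) : 7/6/((j:ℝ)+40+3/500) - 7/6/((j:ℝ)+1+40+3/500) ≤ sK (40+j) := by
  rw [sK_eq]
  push_cast
  have ht : (0:ℝ) ≤ j := Nat.cast_nonneg j
  generalize (j:ℝ) = t at *
  rw [div_sub_div _ _ (by positivity) (by positivity), div_add_div _ _ (by positivity) (by positivity),
    div_add_div _ _ (by positivity) (by positivity), div_le_div_iff₀ (by positivity) (by positivity), ← sub_nonneg]
  ring_nf
  positivity

lemma sK_tel (j : ℕ) : 7/6/((40:ℝ)+3/500) - 7/6/((j:ℝ)+40+3/500) ≤ ∑ i ∈ range j, sK (40+i) := by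
  induction j with
  | zero => simp
  | succ j ih =>
    rw [Finset.sum_range_succ]
    have := sK_ge j
    push_cast
    linarith

lemma sK_40 : (9.99020411:ℝ) - 7/6/((40:ℝ)+3/500) ≤ ∑ i ∈ range 40, sK i := by
  simp only [sK_eq]
  norm_num [Finset.sum_range_succ]

lemma logDD (ε : ℝ) (hε : 0 < ε) : ∀ᶠ m : ℕ in atTop, Real.log (DD m) ≤ (4.009796 + ε) * m := by
  obtain ⟨L, hL⟩ : ∃ L : ℕ, (100000000:ℝ) ≤ L := exists_nat_ge _
  have h := logDD_le (40+L) (by omega) ε hε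
  filter_upwards [h] with m hm
  refine hm.trans ?_
  have h1 : (9.990204:ℝ) ≤ ∑ K ∈ range (40+L), sK K := by
    rw [Finset.sum_range_add]
    have a1 := sK_tel L
    have a2 := sK_40
    have a3 : 7/6/((L:ℝ)+40+3/500) ≤ 0.0000001 := by
      rw [div_le_iff₀ (by linarith)]; linarith
    linarith
  unfold sK at h1
  gcongr
  linarith

end PB

end

section
open Finset Polynomial

namespace PB

noncomputable def Gt (y t : ℝ) : ℝ := t * Real.log (y^2+t^2) - 2*t + 2*y*Real.arctan (t/y)

lemma Gt_deriv (y t : ℝ) (hy : 0 < y) : HasDerivAt (Gt y) (Real.log (y^2+t^2)) t := by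
  have hp : y^2+t^2 ≠ 0 := by positivity
  have h1 : HasDerivAt (fun t : ℝ => y^2+t^2) (2*t) t := by
    simpa using (hasDerivAt_pow 2 t).const_add (y^2)
  have h2 := (hasDerivAt_id t).mul (h1.log hp)
  have h3 := ((hasDerivAt_id t).div_const y).arctan.const_mul (2*y)
  have h4 := (h2.sub ((hasDerivAt_id t).const_mul 2)).add h3
  refine (h4.congr_deriv ?_)
  simp only [id]
  have : 1 + (t/y)^2 = (y^2+t^2)/y^2 := by field_simp
  rw [this]
  field_simp
  ring

lemma Gt_step (y t : ℝ) (hy : 0 < y) (ht : 0 ≤ t) :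
    Real.log (y^2+t^2) ≤ Gt y (t+1) - Gt y t ∧ Gt y (t+1) - Gt y t ≤ Real.log (y^2+(t+1)^2) := by
  obtain ⟨c, hc, h⟩ := exists_hasDerivAt_eq_slope (Gt y) (fun t => Real.log (y^2+t^2)) (show t < t+1 by linarith)
    (fun x _ => (Gt_deriv y x hy).continuousAt.continuousWithinAt) (fun x _ => Gt_deriv y x hy)
  rw [show t + 1 - t = 1 by ring, div_one] at h
  rw [← h]
  have h1 := hc.1
  have h2 := hc.2
  constructor
  · apply Real.log_le_log (by positivity); nlinarith
  · apply Real.log_le_log (by positivity); nlinarith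

lemma prod_lower (y : ℝ) (hy : 0 < y) (h : ℕ) : Real.exp (Gt y h) ≤ ∏ j ∈ range h, (y^2+((j:ℝ)+1)^2) := by
  induction h with
  | zero => simp [Gt]
  | succ h ih =>
    rw [Finset.prod_range_succ]
    have h1 := (Gt_step y h hy (Nat.cast_nonneg h)).2
    have : Real.exp (Gt y ((h+1:ℕ):ℝ)) ≤ Real.exp (Gt y h) * (y^2+((h:ℝ)+1)^2) := by
      rw [← Real.exp_log (show 0 < y^2+((h:ℝ)+1)^2 by positivity), ← Real.exp_add]
      apply Real.exp_le_exp.mpr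
      push_cast; linarith
    exact this.trans (mul_le_mul_of_nonneg_right ih (by positivity))

lemma prod_upper0 (y : ℝ) (hy : 0 < y) (h : ℕ) : ∏ j ∈ range h, (y^2+((j:ℝ)+1)^2) ≤ Real.exp (Gt y (h+1) - Gt y 1) := by
  induction h with
  | zero => simp
  | succ h ih =>
    rw [Finset.prod_range_succ]
    have h1 := (Gt_step y (h+1) hy (by positivity)).1
    have : Real.exp (Gt y (h+1) - Gt y 1) * (y^2+((h:ℝ)+1)^2) ≤ Real.exp (Gt y (((h+1:ℕ):ℝ)+1) - Gt y 1) := by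
      have e := Real.exp_log (show 0 < y^2+((h:ℝ)+1)^2 by positivity)
      calc Real.exp (Gt y (h+1) - Gt y 1) * (y^2+((h:ℝ)+1)^2) = Real.exp (Gt y (h+1) - Gt y 1 + Real.log (y^2+((h:ℝ)+1)^2)) := by
            rw [Real.exp_add, e]
        _ ≤ _ := by apply Real.exp_le_exp.mpr; push_cast; linarith
    exact (mul_le_mul_of_nonneg_right ih (by positivity)).trans this

lemma prod_upper (y : ℝ) (hy : 0 < y) (h : ℕ) :
    ∏ j ∈ range h, (y^2+((j:ℝ)+1)^2) ≤ Real.exp 2 * (y^2+((h:ℝ)+1)^2) * Real.exp (Gt y h) := by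
  refine (prod_upper0 y hy h).trans ?_
  have h1 := (Gt_step y h hy (Nat.cast_nonneg h)).2
  have h2 : -2 ≤ Gt y 1 := by
    unfold Gt
    have a1 : 0 ≤ Real.log (y^2+1^2) := Real.log_nonneg (by nlinarith)
    have a2 : 0 ≤ Real.arctan (1/y) := Real.arctan_nonneg.mpr (by positivity)
    have a3 : 0 ≤ 2*y*Real.arctan (1/y) := by positivity
    rw [one_mul, mul_one]
    generalize Real.log (y^2+1^2) = A at *
    generalize 2*y*Real.arctan (1/y) = B at *
    linarith
  have e := Real.exp_log (show 0 < y^2+((h:ℝ)+1)^2 by positivity)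
  calc Real.exp (Gt y (h+1) - Gt y 1) ≤ Real.exp (2 + Real.log (y^2+((h:ℝ)+1)^2) + Gt y h) := by
        apply Real.exp_le_exp.mpr; linarith
    _ = _ := by rw [Real.exp_add, Real.exp_add, e]

noncomputable def phi (y h : ℝ) : ℝ := h * Real.log (y^2+h^2) + 2*y*Real.arctan (h/y) - 2*h*Real.log (2*h)

lemma fac_lower (n : ℕ) (hn : 0 < n) : Real.exp (n * Real.log n - n) ≤ n.factorial := by
  have h := Real.pow_div_factorial_le_exp (n:ℝ) (by positivity) n
  have hf : (0:ℝ) < n.factorial := by exact_mod_cast n.factorial_pos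
  rw [div_le_iff₀ hf] at h
  have hn' : (0:ℝ) < n := by exact_mod_cast hn
  rw [Real.exp_sub, div_le_iff₀ (Real.exp_pos _), mul_comm (n:ℝ) (Real.log n), Real.exp_mul, Real.exp_log hn', Real.rpow_natCast]
  linarith

lemma fac_upper (n : ℕ) (hn : 0 < n) : (n.factorial : ℝ) ≤ n * Real.exp (n * Real.log n - n + 1) := by
  induction n, hn using Nat.le_induction with
  | base => simp
  | succ n hn ih =>
    have hn' : (0:ℝ) < n := by exact_mod_cast hn
    rw [Nat.factorial_succ]
    push_cast
    refine mul_le_mul_of_nonneg_left (ih.trans ?_) (by positivity)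
    have h1 := Real.log_le_sub_one_of_pos (show 0 < (n:ℝ)/(n+1) by positivity)
    rw [Real.log_div hn'.ne' (by positivity)] at h1
    have h2 : ((n:ℝ)+1) * (Real.log n - Real.log (n+1)) ≤ ((n:ℝ)+1) * (n/(n+1) - 1) :=
      mul_le_mul_of_nonneg_left h1 (by positivity)
    have h3 : ((n:ℝ)+1) * (n/(n+1) - 1) = -1 := by field_simp; ring
    rw [h3] at h2
    calc (n:ℝ) * Real.exp (n * Real.log n - n + 1) = Real.exp (Real.log n + (n * Real.log n - n + 1)) := by
          rw [Real.exp_add (Real.log n), Real.exp_log hn']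
      _ ≤ _ := by apply Real.exp_le_exp.mpr; linarith

lemma Th_eval (h : ℕ) (y : ℝ) : (Th h).eval y = y * (∏ j ∈ range h, (y^2+((j:ℝ)+1)^2)) / (2*h+1).factorial := by
  unfold Th
  simp only [eval_mul, eval_C, eval_X, eval_prod, eval_add, eval_pow]
  ring

lemma phi_eq (y : ℝ) (h : ℕ) : phi y h = Gt y h - (((2*h:ℕ):ℝ) * Real.log ((2*h:ℕ):ℝ) - ((2*h:ℕ):ℝ)) := by
  unfold phi Gt; push_cast; ring

lemma Th_upper (h : ℕ) (hh : 0 < h) (y : ℝ) (hy : 0 < y) :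
    (Th h).eval y ≤ Real.exp 2 * (y * (y^2+((h:ℝ)+1)^2)) * Real.exp (phi y h) := by
  rw [Th_eval, phi_eq, Real.exp_sub]
  have h1 := prod_upper y hy h
  have h2 := fac_lower (2*h) (by omega)
  have h3 : ((2*h).factorial : ℝ) ≤ (2*h+1).factorial := by exact_mod_cast Nat.factorial_le (by omega)
  have h4 : y * (∏ j ∈ range h, (y^2+((j:ℝ)+1)^2)) ≤ y * (Real.exp 2 * (y^2+((h:ℝ)+1)^2) * Real.exp (Gt y h)) :=
    mul_le_mul_of_nonneg_left h1 hy.le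
  refine (div_le_div₀ (by positivity) h4 (Real.exp_pos _) (h2.trans h3)).trans (le_of_eq ?_)
  ring

lemma Th_lower (h : ℕ) (hh : 0 < h) (y : ℝ) (hy : 1 ≤ y) :
    Real.exp (phi y h) / ((2*h+1) * (2*h*Real.exp 1)) ≤ (Th h).eval y := by
  rw [Th_eval, phi_eq, Real.exp_sub]
  have h1 := prod_lower y (by linarith) h
  have h2 := fac_upper (2*h) (by omega)
  rw [Real.exp_add] at h2
  have h3 : (((2*h+1).factorial:ℕ) : ℝ) ≤ (2*h+1) * ((2*h:ℕ) * (Real.exp ((2*h:ℕ) * Real.log (2*h:ℕ) - (2*h:ℕ)) * Real.exp 1)) := by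
    rw [Nat.factorial_succ]; push_cast at h2 ⊢
    exact mul_le_mul_of_nonneg_left h2 (by positivity)
  have hp : (0:ℝ) < (2*h+1).factorial := by exact_mod_cast Nat.factorial_pos _
  have hP : 0 ≤ ∏ j ∈ range h, (y^2+((j:ℝ)+1)^2) := Finset.prod_nonneg fun j _ => by positivity
  have h4 : Real.exp (Gt y h) ≤ y * ∏ j ∈ range h, (y^2+((j:ℝ)+1)^2) := by nlinarith
  refine le_trans (le_of_eq ?_) (div_le_div₀ (by positivity) h4 hp h3)
  rw [div_div]
  push_cast
  congr 1
  ring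

lemma Th_nonneg (h : ℕ) (y : ℝ) (hy : 0 ≤ y) : 0 ≤ (Th h).eval y := by
  rw [Th_eval]; positivity

lemma phi_deriv (y h : ℝ) (hy : 0 < y) : HasDerivAt (fun y => phi y h) (2*Real.arctan (h/y)) y := by
  have hp : y^2+h^2 ≠ 0 := by positivity
  have h1 : HasDerivAt (fun y : ℝ => y^2+h^2) (2*y) y := by
    simpa using (hasDerivAt_pow 2 y).add_const (h^2)
  have h2 := (h1.log hp).const_mul h
  have h3 : HasDerivAt (fun y : ℝ => h / y) (-h/y^2) y := by
    have := (hasDerivAt_inv hy.ne').const_mul h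
    refine (this.congr_deriv ?_)
    ring
  have h4 := ((hasDerivAt_id y).const_mul 2).mul h3.arctan
  have h5 := (h2.add h4).sub_const (2*h*Real.log (2*h))
  refine (h5.congr_deriv ?_)
  simp only [id]
  have : 1 + (h/y)^2 = (y^2+h^2)/y^2 := by field_simp
  rw [this]
  field_simp
  ring

lemma phi_tangent (y y0 h : ℝ) (hy : 0 < y) (hy0 : 0 < y0) (hh : 0 ≤ h) :
    phi y h ≤ phi y0 h + 2*Real.arctan (h/y0) * (y - y0) := by
  have key : ∀ a b : ℝ, 0 < a → a < b → ∃ c ∈ Set.Ioo a b, 2*Real.arctan (h/c) * (b-a) = phi b h - phi a h := by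
    intro a b ha hab
    obtain ⟨c, hc, e⟩ := exists_hasDerivAt_eq_slope (fun y => phi y h) (fun y => 2*Real.arctan (h/y)) hab
      (fun x hx => (phi_deriv x h (lt_of_lt_of_le ha hx.1)).continuousAt.continuousWithinAt)
      (fun x hx => phi_deriv x h (lt_trans ha hx.1))
    refine ⟨c, hc, ?_⟩
    rw [e, div_mul_cancel₀ _ (by linarith)]
  rcases lt_trichotomy y y0 with h1 | h1 | h1
  · obtain ⟨c, hc, e⟩ := key y y0 hy h1
    have : Real.arctan (h/y0) ≤ Real.arctan (h/c) := Real.arctan_strictMono.monotone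
      (div_le_div_of_nonneg_left hh (by linarith [hc.1]) hc.2.le)
    nlinarith
  · subst h1; simp
  · obtain ⟨c, hc, e⟩ := key y0 y hy0 h1
    have : Real.arctan (h/c) ≤ Real.arctan (h/y0) := Real.arctan_strictMono.monotone
      (div_le_div_of_nonneg_left hh hy0 hc.1.le)
    nlinarith

lemma phi_mono (y y0 h : ℝ) (hy0 : 0 < y0) (hy : y0 ≤ y) (hh : 0 ≤ h) : phi y0 h ≤ phi y h := by
  have := phi_tangent y0 y h hy0 (by linarith) hh
  have h2 : 0 ≤ Real.arctan (h/y) := Real.arctan_nonneg.mpr (div_nonneg hh (by linarith))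
  nlinarith

noncomputable def vv (η c : ℝ) : ℝ := c * Real.log ((η^2+c^2)/(4*c^2))

lemma phi_scale (η c m : ℝ) (hη : 0 < η) (hc : 0 < c) (hm : 0 < m) :
    phi (η*m) (c*m) = m * vv η c + 2*Real.arctan (c/η) * (η*m) := by
  unfold phi vv
  rw [mul_div_mul_right _ _ hm.ne', show (η*m)^2+(c*m)^2 = m^2*(η^2+c^2) by ring,
    Real.log_mul (by positivity) (by positivity), Real.log_div (by positivity) (by positivity),
    show 2*(c*m) = 2*c*m by ring, Real.log_mul (by positivity) hm.ne', show 4*c^2 = (2*c)^2 by ring, Real.log_pow, Real.log_pow]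
  push_cast; ring

noncomputable def VV (η : ℝ) : ℝ := vv η 3 + vv η 5 + vv η 7
noncomputable def dP (η : ℝ) : ℝ := 2*(Real.arctan (3/η) + Real.arctan (5/η) + Real.arctan (7/η))

noncomputable def TT (m : ℕ) : ℝ[X] := T3 (3*m) (5*m) (7*m)

lemma TT_nonneg (m : ℕ) (y : ℝ) (hy : 0 ≤ y) : 0 ≤ (TT m).eval y := by
  unfold TT T3; rw [eval_mul, eval_mul]
  have := Th_nonneg (3*m) y hy
  have := Th_nonneg (5*m) y hy
  have := Th_nonneg (7*m) y hy
  positivity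

lemma TT_upper (η : ℝ) (hη : 0 < η) (m : ℕ) (hm : 0 < m) (y : ℝ) (hy : 0 < y) :
    (TT m).eval y ≤ Real.exp 6 * (7*m+1)^6 * (y^3*(y^2+1)^3) * Real.exp (m * VV η + dP η * y) := by
  have hm' : (0:ℝ) < m := by exact_mod_cast hm
  have hm1 : (1:ℝ) ≤ m := by exact_mod_cast hm
  have key : ∀ c : ℕ, 0 < c → c ≤ 7 → (Th (c*m)).eval y ≤ Real.exp 2 * (7*m+1)^2 * (y*(y^2+1)) *
      Real.exp (m * vv η c + 2*Real.arctan (c/η)*y) := by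
    intro c hc hc7
    have hc' : (0:ℝ) < c := by exact_mod_cast hc
    have hc7' : (c:ℝ) ≤ 7 := by exact_mod_cast hc7
    have h1 := Th_upper (c*m) (by positivity) y hy
    have h2 := phi_tangent y (η*m) (c*m) hy (by positivity) (by positivity)
    rw [phi_scale η c m hη hc' hm', mul_div_mul_right _ _ hm'.ne'] at h2
    push_cast at h1
    refine h1.trans ?_
    have h3 : Real.exp (phi y (c*m)) ≤ Real.exp (m * vv η c + 2*Real.arctan (c/η)*y) :=
      Real.exp_le_exp.mpr (by linarith)
    have h4 : y^2 + ((c:ℝ)*m+1)^2 ≤ (7*m+1)^2*(y^2+1) := by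
      have a1 : (c:ℝ)*m+1 ≤ 7*m+1 := by nlinarith
      have a2 : ((c:ℝ)*m+1)^2 ≤ (7*m+1)^2 := by gcongr
      have a3 : (1:ℝ) ≤ (7*m+1)^2 := by nlinarith
      nlinarith [sq_nonneg y]
    calc Real.exp 2 * (y*(y^2 + ((c:ℝ)*m+1)^2)) * Real.exp (phi y (c*m))
        ≤ Real.exp 2 * (y*((7*m+1)^2*(y^2+1))) * Real.exp (m * vv η c + 2*Real.arctan (c/η)*y) := by gcongr
      _ = _ := by ring
  have k3 := key 3 (by norm_num) (by norm_num)
  have k5 := key 5 (by norm_num) (by norm_num)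
  have k7 := key 7 (by norm_num) (by norm_num)
  unfold TT T3; rw [eval_mul, eval_mul]
  have n3 := Th_nonneg (3*m) y hy.le
  have n5 := Th_nonneg (5*m) y hy.le
  have n7 := Th_nonneg (7*m) y hy.le
  refine (mul_le_mul (mul_le_mul k3 k5 n5 (by positivity)) k7 n7 (by positivity)).trans (le_of_eq ?_)
  have e1 : Real.exp 6 = Real.exp 2 * Real.exp 2 * Real.exp 2 := by rw [← Real.exp_add, ← Real.exp_add]; norm_num
  have e2 : Real.exp (m * VV η + dP η * y) = Real.exp (m * vv η 3 + 2*Real.arctan (3/η)*y) *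
     Real.exp (m * vv η 5 + 2*Real.arctan (5/η)*y) * Real.exp (m * vv η 7 + 2*Real.arctan (7/η)*y) := by
    rw [← Real.exp_add, ← Real.exp_add]; unfold VV dP; congr 1; ring
  rw [e1, e2]
  push_cast; ring

lemma TT_lower (η : ℝ) (hη : 0 < η) (m : ℕ) (hm : 0 < m) (y : ℝ) (hy1 : 1 ≤ y) (hy : η*m ≤ y) :
    Real.exp (m * VV η + dP η * (η*m)) / (((14*m+1) * (14*m*Real.exp 1))^3) ≤ (TT m).eval y := by
  have hm' : (0:ℝ) < m := by exact_mod_cast hm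
  have key : ∀ c : ℕ, 0 < c → c ≤ 7 → Real.exp (m * vv η c + 2*Real.arctan (c/η)*(η*m)) / ((14*m+1) * (14*m*Real.exp 1)) ≤ (Th (c*m)).eval y := by
    intro c hc hc7
    have hc' : (0:ℝ) < c := by exact_mod_cast hc
    have hc7' : (c:ℝ) ≤ 7 := by exact_mod_cast hc7
    refine le_trans ?_ (Th_lower (c*m) (by positivity) y hy1)
    have h2 := phi_mono y (η*m) (c*m) (by positivity) hy (by positivity)
    rw [phi_scale η c m hη hc' hm'] at h2
    push_cast
    refine div_le_div₀ (Real.exp_pos _).le (Real.exp_le_exp.mpr h2) (by positivity) ?_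
    have a1 : 2*((c:ℝ)*m) ≤ 14*m := by nlinarith
    gcongr
  have k3 := key 3 (by norm_num) (by norm_num)
  have k5 := key 5 (by norm_num) (by norm_num)
  have k7 := key 7 (by norm_num) (by norm_num)
  unfold TT T3; rw [eval_mul, eval_mul]
  have n3 := Th_nonneg (3*m) y (by linarith)
  have n5 := Th_nonneg (5*m) y (by linarith)
  refine le_trans (le_of_eq ?_) (mul_le_mul (mul_le_mul k3 k5 (by positivity) n3) k7 (by positivity) (by positivity))
  have e2 : Real.exp (m * VV η + dP η * (η*m)) = Real.exp (m * vv η 3 + 2*Real.arctan (3/η)*(η*m)) *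
     Real.exp (m * vv η 5 + 2*Real.arctan (5/η)*(η*m)) * Real.exp (m * vv η 7 + 2*Real.arctan (7/η)*(η*m)) := by
    rw [← Real.exp_add, ← Real.exp_add]; unfold VV dP; congr 1; ring
  rw [e2]
  push_cast
  rw [div_mul_div_comm, div_mul_div_comm]
  congr 1; ring

end PB

end

section
open Filter Topology MeasureTheory Set Polynomial

namespace PB

lemma poly_exp (C δ : ℝ) (hδ : 0 < δ) (k : ℕ) : ∀ᶠ m : ℕ in atTop, C * (m:ℝ)^k ≤ Real.exp (δ*m) := by
  have hf : (0:ℝ) < (k+1).factorial := by exact_mod_cast Nat.factorial_pos _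
  obtain ⟨M, hM⟩ := exists_nat_ge (C * (k+1).factorial / δ^(k+1))
  filter_upwards [eventually_ge_atTop M] with m hm
  have hm' : C * (k+1).factorial / δ^(k+1) ≤ m := hM.trans (by exact_mod_cast hm)
  rw [div_le_iff₀ (by positivity)] at hm'
  refine le_trans ?_ (Real.pow_div_factorial_le_exp (δ*m) (by positivity) (k+1))
  rw [le_div_iff₀ hf]
  calc C * (m:ℝ)^k * (k+1).factorial = (C * (k+1).factorial) * (m:ℝ)^k := by ring
    _ ≤ (m * δ^(k+1)) * (m:ℝ)^k := by gcongr
    _ = (δ*m)^(k+1) := by ring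

lemma one_sub_exp (x : ℝ) (hx : 0 < x) : 0 < 1 - Real.exp (-x) ∧ x/(1+x) ≤ 1 - Real.exp (-x) := by
  have h2 : x/(1+x) ≤ 1 - Real.exp (-x) := by
    have h := Real.add_one_le_exp x
    have : Real.exp (-x) ≤ 1/(1+x) := by
      rw [Real.exp_neg, ← one_div]
      exact one_div_le_one_div_of_le (by linarith) (by linarith)
    have e : x/(1+x) = 1 - 1/(1+x) := by field_simp; ring
    linarith
  exact ⟨lt_of_lt_of_le (by positivity) h2, h2⟩

lemma th_bd : 1 < th ∧ th < 1.1 := by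
  unfold th
  constructor <;> linarith [Real.pi_gt_d2, Real.pi_lt_d2]

lemma Iker_bd (y : ℝ) (hy : 0 < y) : 0 ≤ Iker y ∧ Iker y ≤ 25*((1+y)^2/y^2)*Real.exp (-(2*Real.pi-th)*y) := by
  have hpi := Real.pi_pos
  have hth := th_bd
  obtain ⟨h1, h2⟩ := one_sub_exp (2*Real.pi*y) (by positivity)
  rw [← neg_mul] at h1 h2
  have h3 : 0 ≤ Real.exp (th*y) - Real.exp (-th*y) := by
    have : Real.exp (-th*y) ≤ Real.exp (th*y) := Real.exp_le_exp.mpr (by nlinarith [hth.1])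
    linarith
  unfold Iker
  refine ⟨by positivity, ?_⟩
  have h4 : Real.exp (th*y) - Real.exp (-th*y) ≤ Real.exp (th*y) := by linarith [Real.exp_pos (-th*y)]
  have h5 : Real.exp (-(2*Real.pi)*y)/(1 - Real.exp (-(2*Real.pi)*y))^2 ≤ Real.exp (-(2*Real.pi)*y) / (2*Real.pi*y/(1+2*Real.pi*y))^2 := by
    gcongr
  have h6 : Real.exp (-(2*Real.pi-th)*y) = Real.exp (th*y) * Real.exp (-(2*Real.pi)*y) := by
    rw [← Real.exp_add]; congr 1; ring
  calc 2*Real.pi^2*(Real.exp (th*y) - Real.exp (-th*y))*(Real.exp (-(2*Real.pi)*y)/(1 - Real.exp (-(2*Real.pi)*y))^2)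
      ≤ 2*Real.pi^2*Real.exp (th*y) * (Real.exp (-(2*Real.pi)*y) / (2*Real.pi*y/(1+2*Real.pi*y))^2) := by gcongr
    _ = (1/2*(1+2*Real.pi*y)^2/y^2) * Real.exp (-(2*Real.pi-th)*y) := by rw [h6]; field_simp
    _ ≤ _ := by
      refine mul_le_mul_of_nonneg_right ?_ (Real.exp_pos _).le
      rw [← mul_div_assoc]
      refine div_le_div_of_nonneg_right ?_ (by positivity)
      have : 1+2*Real.pi*y ≤ 7*(1+y) := by nlinarith [Real.pi_lt_d2]
      have : (1+2*Real.pi*y)^2 ≤ (7*(1+y))^2 := by gcongr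
      nlinarith [sq_nonneg (1+y)]

lemma Bker_bd (y : ℝ) (hy : 0 < y) : 0 ≤ Bker y ∧ Bker y ≤ 25*((1+y)^2/y^2)*Real.exp (-th*y) := by
  have hpi := Real.pi_gt_d2
  have hth := th_bd
  obtain ⟨h1, h2⟩ := one_sub_exp (2*Real.pi*y) (by positivity)
  rw [← neg_mul] at h1 h2
  unfold Bker
  refine ⟨by positivity, ?_⟩
  have h3 : Real.exp (-(2*Real.pi-th)*y) ≤ Real.exp (-th*y) := Real.exp_le_exp.mpr (by nlinarith [hth.2])
  calc (Real.exp (-th*y) + Real.exp (-(2*Real.pi-th)*y))/(1 - Real.exp (-(2*Real.pi)*y))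
      ≤ (Real.exp (-th*y) + Real.exp (-th*y)) / (2*Real.pi*y/(1+2*Real.pi*y)) := by gcongr
    _ = ((1+2*Real.pi*y)/(Real.pi*y)) * Real.exp (-th*y) := by
        have := Real.pi_pos
        field_simp; ring
    _ ≤ _ := by
      gcongr
      rw [← mul_div_assoc, div_le_div_iff₀ (by positivity) (by positivity)]
      have a1 : 1+2*Real.pi*y ≤ 7*(1+y) := by nlinarith [Real.pi_lt_d2]
      have a2 : (1+2*Real.pi*y)*y^2 ≤ 7*(1+y)*y^2 := by gcongr
      have a3 : 3*y ≤ Real.pi*y := by nlinarith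
      have a4 : 25*(1+y)^2*(3*y) ≤ 25*(1+y)^2*(Real.pi*y) := by gcongr
      nlinarith [mul_pos hy hy, mul_pos hy (mul_pos hy hy)]

lemma int_upper (k : ℝ → ℝ) (lam η : ℝ) (hη : 0 < η)
    (hk : ∀ y, 0 < y → 0 ≤ k y ∧ k y ≤ 25*((1+y)^2/y^2)*Real.exp (-lam*y))
    (hint : ∀ m : ℕ, IntegrableOn (fun y => (TT m).eval y * k y) (Ioi 0))
    (hd : dP η < lam) (δ : ℝ) (hδ : 0 < δ) (A : ℝ) (hA : 0 < A) :
    ∀ᶠ m : ℕ in atTop, A * ∫ y in Ioi (0:ℝ), (TT m).eval y * k y ≤ Real.exp ((VV η + δ)*m) := by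
  set e := (lam - dP η)/2 with he
  have he0 : 0 < e := by rw [he]; linarith
  set C0 : ℝ := (9:ℕ).factorial / e^9 * Real.exp e with hC0
  have hC0p : 0 < C0 := by positivity
  set J : ℝ := ∫ y in Ioi (0:ℝ), Real.exp (-e*y) with hJ
  have hJi := exp_neg_integrableOn_Ioi 0 he0
  have hpoly : ∀ y : ℝ, 0 < y → y*(y^2+1)^3*(1+y)^2 * Real.exp (-(2*e)*y) ≤ C0 * Real.exp (-e*y) := by
    intro y hy
    have h1 : y*(y^2+1)^3*(1+y)^2 ≤ (1+y)^9 := by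
      have a1 : y ≤ 1+y := by linarith
      have a2 : y^2+1 ≤ (1+y)^2 := by nlinarith
      calc y*(y^2+1)^3*(1+y)^2 ≤ (1+y)*((1+y)^2)^3*(1+y)^2 := by gcongr
        _ = (1+y)^9 := by ring
    have h2 := Real.pow_div_factorial_le_exp (e*(1+y)) (by positivity) 9
    rw [div_le_iff₀ (by positivity)] at h2
    have h3 : (1+y)^9 ≤ C0 * Real.exp (e*y) := by
      have : (1+y)^9 = (e*(1+y))^9/e^9 := by field_simp
      rw [this, hC0]
      calc (e*(1+y))^9/e^9 ≤ (Real.exp (e*(1+y)) * (9:ℕ).factorial)/e^9 := by gcongr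
        _ = _ := by rw [mul_add, mul_one, Real.exp_add]; ring
    calc y*(y^2+1)^3*(1+y)^2 * Real.exp (-(2*e)*y) ≤ (C0 * Real.exp (e*y)) * Real.exp (-(2*e)*y) := by
          exact mul_le_mul_of_nonneg_right (h1.trans h3) (Real.exp_pos _).le
      _ = C0 * Real.exp (-e*y) := by rw [mul_assoc, ← Real.exp_add]; congr 2; ring
  have hmain : ∀ m : ℕ, 0 < m → ∫ y in Ioi (0:ℝ), (TT m).eval y * k y ≤ (Real.exp 6*25*C0*J) * (7*m+1)^6 * Real.exp (m*VV η) := by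
    intro m hm
    have : (Real.exp 6*25*C0*J) * (7*m+1)^6 * Real.exp (m*VV η) = ∫ y in Ioi (0:ℝ), (Real.exp 6*25*C0 * (7*m+1)^6 * Real.exp (m*VV η)) * Real.exp (-e*y) := by
      rw [integral_const_mul]; ring
    rw [this]
    refine setIntegral_mono_on (hint m) (hJi.const_mul _) measurableSet_Ioi fun y hy => ?_
    have hy : 0 < y := hy
    obtain ⟨k0, k1⟩ := hk y hy
    have t1 := TT_upper η hη m hm y hy
    calc (TT m).eval y * k y ≤ (Real.exp 6 * (7*m+1)^6 * (y^3*(y^2+1)^3) * Real.exp (m * VV η + dP η * y)) * (25*((1+y)^2/y^2)*Real.exp (-lam*y)) := by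
          apply mul_le_mul t1 k1 k0 (by positivity)
      _ = (Real.exp 6*25* (7*m+1)^6 * Real.exp (m*VV η)) * (y*(y^2+1)^3*(1+y)^2 * Real.exp (-(2*e)*y)) := by
          have e1 : Real.exp (m * VV η + dP η * y) * Real.exp (-lam*y) = Real.exp (m*VV η) * Real.exp (-(2*e)*y) := by
            rw [← Real.exp_add, ← Real.exp_add]; congr 1; rw [he]; ring
          have e2 : y^3*((1+y)^2/y^2) = y*(1+y)^2 := by field_simp
          calc _ = Real.exp 6 * 25*(7*m+1)^6*(y^2+1)^3*(y^3*((1+y)^2/y^2))*(Real.exp (m * VV η + dP η * y) * Real.exp (-lam*y)) := by ring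
            _ = _ := by rw [e1, e2]; ring
      _ ≤ (Real.exp 6*25* (7*m+1)^6 * Real.exp (m*VV η)) * (C0 * Real.exp (-e*y)) :=
          mul_le_mul_of_nonneg_left (hpoly y hy) (by positivity)
      _ = _ := by ring
  have hJ0 : 0 ≤ J := setIntegral_nonneg measurableSet_Ioi fun y _ => (Real.exp_pos _).le
  filter_upwards [poly_exp (A*(Real.exp 6*25*C0*J)*8^6) δ hδ 6, eventually_gt_atTop 0] with m h1 h2
  have hm1 : (1:ℝ) ≤ m := by exact_mod_cast h2
  calc A * ∫ y in Ioi (0:ℝ), (TT m).eval y * k y ≤ A * ((Real.exp 6*25*C0*J) * (7*m+1)^6 * Real.exp (m*VV η)) := by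
        gcongr; exact hmain m h2
    _ ≤ A * ((Real.exp 6*25*C0*J) * (8*m)^6 * Real.exp (m*VV η)) := by
        gcongr; linarith
    _ = (A*(Real.exp 6*25*C0*J)*8^6*(m:ℝ)^6) * Real.exp (m*VV η) := by ring
    _ ≤ Real.exp (δ*m) * Real.exp (m*VV η) := by gcongr
    _ = _ := by rw [← Real.exp_add]; congr 1; ring

lemma int_lower0 (k : ℝ → ℝ) (lam η c : ℝ) (hη : 0 < η) (hlam : 0 < lam) (hc : 0 < c)
    (hk0 : ∀ y, 0 < y → 0 ≤ k y) (hk : ∀ y, 1 ≤ y → c * Real.exp (-lam*y) ≤ k y)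
    (m : ℕ) (hm : 0 < m) (hint : IntegrableOn (fun y => (TT m).eval y * k y) (Ioi 0)) :
    Real.exp (m * VV η + dP η * (η*m)) / (((14*m+1) * (14*m*Real.exp 1))^3) * (c * Real.exp (-lam*(η*m+2))) ≤
      ∫ y in Ioi (0:ℝ), (TT m).eval y * k y := by
  have hm' : (0:ℝ) < m := by exact_mod_cast hm
  have hsub : Ioc (η*m+1) (η*m+2) ⊆ Ioi (0:ℝ) := fun y hy => by
    have := hy.1; have : 0 < η*m := by positivity
    simp only [mem_Ioi]; linarith
  have h1 : ∫ y in Ioc (η*m+1) (η*m+2), (TT m).eval y * k y ≤ ∫ y in Ioi (0:ℝ), (TT m).eval y * k y := by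
    refine setIntegral_mono_set hint ?_ hsub.eventuallyLE
    refine (ae_restrict_iff' measurableSet_Ioi).mpr (ae_of_all _ fun y hy => ?_)
    exact mul_nonneg (TT_nonneg m y (le_of_lt hy)) (hk0 y hy)
  refine le_trans ?_ h1
  set E := Real.exp (m * VV η + dP η * (η*m)) / (((14*m+1) * (14*m*Real.exp 1))^3) * (c * Real.exp (-lam*(η*m+2)))
  have h2 : E = ∫ y in Ioc (η*m+1) (η*m+2), E := by
    rw [setIntegral_const]
    simp only [Measure.real, Real.volume_Ioc]
    rw [show η*m+2-(η*m+1) = 1 by ring]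
    simp
  rw [h2]
  refine setIntegral_mono_on (integrableOn_const (by simp)) (hint.mono_set hsub) measurableSet_Ioc fun y hy => ?_
  have hp : 0 < η*m := by positivity
  have hy1 : 1 ≤ y := by linarith [hy.1]
  have t := TT_lower η hη m hm y hy1 (by linarith [hy.1])
  refine mul_le_mul t (le_trans ?_ (hk y hy1)) (by positivity) (TT_nonneg m y (by linarith))
  gcongr 2
  nlinarith [hy.2]

lemma int_lower (k : ℝ → ℝ) (lam η c : ℝ) (hη : 0 < η) (hlam : 0 < lam) (hc : 0 < c)
    (hk0 : ∀ y, 0 < y → 0 ≤ k y) (hk : ∀ y, 1 ≤ y → c * Real.exp (-lam*y) ≤ k y)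
    (hint : ∀ m : ℕ, IntegrableOn (fun y => (TT m).eval y * k y) (Ioi 0)) (hd : lam ≤ dP η) (δ : ℝ) (hδ : 0 < δ) (A : ℝ) (hA : 0 < A) :
    ∀ᶠ m : ℕ in atTop, A * Real.exp ((VV η - δ)*m) ≤ ∫ y in Ioi (0:ℝ), (TT m).eval y * k y := by
  filter_upwards [poly_exp (A*(15*14*Real.exp 1)^3/(c*Real.exp (-lam*2))) δ hδ 6, eventually_gt_atTop 0] with m h1 h2
  have hm1 : (1:ℝ) ≤ m := by exact_mod_cast h2
  refine le_trans ?_ (int_lower0 k lam η c hη hlam hc hk0 hk m h2 (hint m))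
  have e0 : 0 ≤ (dP η - lam)*(η*m) := by
    apply mul_nonneg (by linarith); positivity
  have e1 : Real.exp (m*VV η) * Real.exp (-lam*2) ≤ Real.exp (m * VV η + dP η * (η*m)) * Real.exp (-lam*(η*m+2)) := by
    rw [← Real.exp_add, ← Real.exp_add]; apply Real.exp_le_exp.mpr; linarith
  have e2 : (((14*m+1) * (14*m*Real.exp 1))^3 : ℝ) ≤ (15*14*Real.exp 1)^3 * (m:ℝ)^6 := by
    calc (((14*m+1) * (14*m*Real.exp 1))^3 : ℝ) ≤ ((15*m) * (14*m*Real.exp 1))^3 := by gcongr; linarith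
      _ = _ := by ring
  rw [div_mul_eq_mul_div, le_div_iff₀ (by positivity)]
  rw [div_mul_eq_mul_div, div_le_iff₀ (by positivity)] at h1
  calc A * Real.exp ((VV η - δ)*m) * (((14*m+1) * (14*m*Real.exp 1))^3)
      ≤ A * Real.exp ((VV η - δ)*m) * ((15*14*Real.exp 1)^3 * (m:ℝ)^6) := by gcongr
    _ = Real.exp ((VV η - δ)*m) * (A*(15*14*Real.exp 1)^3 * (m:ℝ)^6) := by ring
    _ ≤ Real.exp ((VV η - δ)*m) * (Real.exp (δ*m) * (c*Real.exp (-lam*2))) := by gcongr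
    _ = c * (Real.exp (m*VV η) * Real.exp (-lam*2)) := by
        have : Real.exp (m*VV η) = Real.exp ((VV η - δ)*m) * Real.exp (δ*m) := by rw [← Real.exp_add]; congr 1; ring
        rw [this]; ring
    _ ≤ c * (Real.exp (m * VV η + dP η * (η*m)) * Real.exp (-lam*(η*m+2))) := by gcongr
    _ = _ := by ring

lemma Iker_low (y : ℝ) (hy : 1 ≤ y) : 1 * Real.exp (-(2*Real.pi-th)*y) ≤ Iker y := by
  have hpi := Real.pi_gt_three
  have hth := th_bd
  obtain ⟨h1, _⟩ := one_sub_exp (2*Real.pi*y) (by positivity)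
  rw [← neg_mul] at h1
  have h6 : Real.exp (-(2*Real.pi-th)*y) = Real.exp (th*y) * Real.exp (-(2*Real.pi)*y) := by
    rw [← Real.exp_add]; congr 1; ring
  have h2 : 2 * Real.exp (-th*y) ≤ Real.exp (th*y) := by
    have a := Real.add_one_le_exp (2*th*y)
    have : Real.exp (th*y) = Real.exp (2*th*y) * Real.exp (-th*y) := by rw [← Real.exp_add]; congr 1; ring
    rw [this]
    have : (2:ℝ) ≤ Real.exp (2*th*y) := by nlinarith [hth.1]
    gcongr
  have h3 : Real.exp (-(2*Real.pi)*y) ≤ Real.exp (-(2*Real.pi)*y)/(1 - Real.exp (-(2*Real.pi)*y))^2 := by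
    rw [le_div_iff₀ (by positivity)]
    have : (1 - Real.exp (-(2*Real.pi)*y))^2 ≤ 1 := by
      have := Real.exp_pos (-(2*Real.pi)*y); nlinarith
    nlinarith [Real.exp_pos (-(2*Real.pi)*y)]
  unfold Iker
  have h5 : (0:ℝ) ≤ Real.exp (th*y) - Real.exp (-th*y) := by linarith [Real.exp_pos (-th*y)]
  calc 1 * Real.exp (-(2*Real.pi-th)*y) = Real.exp (th*y) * Real.exp (-(2*Real.pi)*y) := by rw [h6, one_mul]
    _ ≤ (2*Real.pi^2*(Real.exp (th*y) - Real.exp (-th*y))) * Real.exp (-(2*Real.pi)*y) := by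
        refine mul_le_mul_of_nonneg_right ?_ (Real.exp_pos _).le
        have h8 : (18:ℝ) ≤ 2*Real.pi^2 := by nlinarith
        have h9 := mul_le_mul_of_nonneg_right h8 h5
        linarith [Real.exp_pos (th*y)]
    _ ≤ _ := by gcongr

lemma Bker_low (y : ℝ) (hy : 1 ≤ y) : 1 * Real.exp (-th*y) ≤ Bker y := by
  have hpi := Real.pi_gt_three
  obtain ⟨h1, _⟩ := one_sub_exp (2*Real.pi*y) (by positivity)
  rw [← neg_mul] at h1
  unfold Bker
  rw [le_div_iff₀ h1]
  nlinarith [Real.exp_pos (-th*y), Real.exp_pos (-(2*Real.pi)*y), Real.exp_pos (-(2*Real.pi-th)*y)]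

end PB

end

section
open Filter Topology MeasureTheory Set Polynomial

namespace PB

lemma log_bd (x L U : ℝ) (n : ℕ) (hx : |x| < 1)
    (hL : L ≤ -(∑ i ∈ Finset.range n, x^(i+1)/((i:ℝ)+1)) - |x|^(n+1)/(1-|x|))
    (hU : -(∑ i ∈ Finset.range n, x^(i+1)/((i:ℝ)+1)) + |x|^(n+1)/(1-|x|) ≤ U) :
    L ≤ Real.log (1-x) ∧ Real.log (1-x) ≤ U := by
  have h := Real.abs_log_sub_add_sum_range_le hx n
  rw [abs_le] at h
  constructor <;> linarith [h.1, h.2]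

lemma lg_p3 : 0*Real.log 2 + (-389022456/1000000000) ≤ Real.log (((1962007/500000:ℝ)^2+3^2)/(4*3^2)) ∧ Real.log (((1962007/500000:ℝ)^2+3^2)/(4*3^2)) ≤ 0*Real.log 2 + (-389022453/1000000000) := by
  have h := log_bd (2900528531951/9000000000000) (-389022456/1000000000) (-389022453/1000000000) 20 (by norm_num [abs_lt]) (by norm_num [Finset.sum_range_succ, abs_of_pos, abs_of_neg]) (by norm_num [Finset.sum_range_succ, abs_of_pos, abs_of_neg])
  rw [show (((1962007/500000:ℝ)^2+3^2)/(4*3^2)) = 2^0 * (1 - (2900528531951/9000000000000)) by norm_num]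
  rw [Real.log_mul (by norm_num) (by norm_num), Real.log_pow]
  push_cast
  constructor <;> linarith [h.1, h.2]

lemma lg_p5 : -1*Real.log 2 + (-213245553/1000000000) ≤ Real.log (((1962007/500000:ℝ)^2+5^2)/(4*5^2)) ∧ Real.log (((1962007/500000:ℝ)^2+5^2)/(4*5^2)) ≤ -1*Real.log 2 + (-213245550/1000000000) := by
  have h := log_bd (2400528531951/12500000000000) (-213245553/1000000000) (-213245550/1000000000) 20 (by norm_num [abs_lt]) (by norm_num [Finset.sum_range_succ, abs_of_pos, abs_of_neg]) (by norm_num [Finset.sum_range_succ, abs_of_pos, abs_of_neg])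
  rw [show (((1962007/500000:ℝ)^2+5^2)/(4*5^2)) = (1 - (2400528531951/12500000000000))/2^1 by norm_num]
  rw [Real.log_div (by norm_num) (by norm_num), Real.log_pow]
  push_cast
  constructor <;> linarith [h.1, h.2]

lemma lg_p7 : -2*Real.log 2 + (273260505/1000000000) ≤ Real.log (((1962007/500000:ℝ)^2+7^2)/(4*7^2)) ∧ Real.log (((1962007/500000:ℝ)^2+7^2)/(4*7^2)) ≤ -2*Real.log 2 + (273260508/1000000000) := by
  have h := log_bd (-3849471468049/12250000000000) (273260505/1000000000) (273260508/1000000000) 20 (by norm_num [abs_lt]) (by norm_num [Finset.sum_range_succ, abs_of_pos, abs_of_neg]) (by norm_num [Finset.sum_range_succ, abs_of_pos, abs_of_neg])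
  rw [show (((1962007/500000:ℝ)^2+7^2)/(4*7^2)) = (1 - (-3849471468049/12250000000000))/2^2 by norm_num]
  rw [Real.log_div (by norm_num) (by norm_num), Real.log_pow]
  push_cast
  constructor <;> linarith [h.1, h.2]

lemma lg_n3 : 0*Real.log 2 + (-389022459/1000000000) ≤ Real.log (((392401399/100000000:ℝ)^2+3^2)/(4*3^2)) ∧ Real.log (((392401399/100000000:ℝ)^2+3^2)/(4*3^2)) ≤ 0*Real.log 2 + (-389022456/1000000000) := by
  have h := log_bd (116021142062842799/360000000000000000) (-389022459/1000000000) (-389022456/1000000000) 20 (by norm_num [abs_lt]) (by norm_num [Finset.sum_range_succ, abs_of_pos, abs_of_neg]) (by norm_num [Finset.sum_range_succ, abs_of_pos, abs_of_neg])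
  rw [show (((392401399/100000000:ℝ)^2+3^2)/(4*3^2)) = 2^0 * (1 - (116021142062842799/360000000000000000)) by norm_num]
  rw [Real.log_mul (by norm_num) (by norm_num), Real.log_pow]
  push_cast
  constructor <;> linarith [h.1, h.2]

lemma lg_n5 : -1*Real.log 2 + (-213245555/1000000000) ≤ Real.log (((392401399/100000000:ℝ)^2+5^2)/(4*5^2)) ∧ Real.log (((392401399/100000000:ℝ)^2+5^2)/(4*5^2)) ≤ -1*Real.log 2 + (-213245552/1000000000) := by
  have h := log_bd (96021142062842799/500000000000000000) (-213245555/1000000000) (-213245552/1000000000) 20 (by norm_num [abs_lt]) (by norm_num [Finset.sum_range_succ, abs_of_pos, abs_of_neg]) (by norm_num [Finset.sum_range_succ, abs_of_pos, abs_of_neg])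
  rw [show (((392401399/100000000:ℝ)^2+5^2)/(4*5^2)) = (1 - (96021142062842799/500000000000000000))/2^1 by norm_num]
  rw [Real.log_div (by norm_num) (by norm_num), Real.log_pow]
  push_cast
  constructor <;> linarith [h.1, h.2]

lemma lg_n7 : -2*Real.log 2 + (273260504/1000000000) ≤ Real.log (((392401399/100000000:ℝ)^2+7^2)/(4*7^2)) ∧ Real.log (((392401399/100000000:ℝ)^2+7^2)/(4*7^2)) ≤ -2*Real.log 2 + (273260507/1000000000) := by
  have h := log_bd (-153978857937157201/490000000000000000) (273260504/1000000000) (273260507/1000000000) 20 (by norm_num [abs_lt]) (by norm_num [Finset.sum_range_succ, abs_of_pos, abs_of_neg]) (by norm_num [Finset.sum_range_succ, abs_of_pos, abs_of_neg])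
  rw [show (((392401399/100000000:ℝ)^2+7^2)/(4*7^2)) = (1 - (-153978857937157201/490000000000000000))/2^2 by norm_num]
  rw [Real.log_div (by norm_num) (by norm_num), Real.log_pow]
  push_cast
  constructor <;> linarith [h.1, h.2]

lemma lg_x3 : 5*Real.log 2 + (-354799910/1000000000) ≤ Real.log (((28265057/1000000:ℝ)^2+3^2)/(4*3^2)) ∧ Real.log (((28265057/1000000:ℝ)^2+3^2)/(4*3^2)) ≤ 5*Real.log 2 + (-354799907/1000000000) := by
  have h := log_bd (344086552786751/1152000000000000) (-354799910/1000000000) (-354799907/1000000000) 20 (by norm_num [abs_lt]) (by norm_num [Finset.sum_range_succ, abs_of_pos, abs_of_neg]) (by norm_num [Finset.sum_range_succ, abs_of_pos, abs_of_neg])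
  rw [show (((28265057/1000000:ℝ)^2+3^2)/(4*3^2)) = 2^5 * (1 - (344086552786751/1152000000000000)) by norm_num]
  rw [Real.log_mul (by norm_num) (by norm_num), Real.log_pow]
  push_cast
  constructor <;> linarith [h.1, h.2]

lemma lg_x5 : 3*Real.log 2 + (29453755/1000000000) ≤ Real.log (((28265057/1000000:ℝ)^2+5^2)/(4*5^2)) ∧ Real.log (((28265057/1000000:ℝ)^2+5^2)/(4*5^2)) ≤ 3*Real.log 2 + (29453758/1000000000) := by
  have h := log_bd (-23913447213249/800000000000000) (29453755/1000000000) (29453758/1000000000) 20 (by norm_num [abs_lt]) (by norm_num [Finset.sum_range_succ, abs_of_pos, abs_of_neg]) (by norm_num [Finset.sum_range_succ, abs_of_pos, abs_of_neg])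
  rw [show (((28265057/1000000:ℝ)^2+5^2)/(4*5^2)) = 2^3 * (1 - (-23913447213249/800000000000000)) by norm_num]
  rw [Real.log_mul (by norm_num) (by norm_num), Real.log_pow]
  push_cast
  constructor <;> linarith [h.1, h.2]

lemma lg_x7 : 2*Real.log 2 + (78369542/1000000000) ≤ Real.log (((28265057/1000000:ℝ)^2+7^2)/(4*7^2)) ∧ Real.log (((28265057/1000000:ℝ)^2+7^2)/(4*7^2)) ≤ 2*Real.log 2 + (78369545/1000000000) := by
  have h := log_bd (-63913447213249/784000000000000) (78369542/1000000000) (78369545/1000000000) 20 (by norm_num [abs_lt]) (by norm_num [Finset.sum_range_succ, abs_of_pos, abs_of_neg]) (by norm_num [Finset.sum_range_succ, abs_of_pos, abs_of_neg])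
  rw [show (((28265057/1000000:ℝ)^2+7^2)/(4*7^2)) = 2^2 * (1 - (-63913447213249/784000000000000)) by norm_num]
  rw [Real.log_mul (by norm_num) (by norm_num), Real.log_pow]
  push_cast
  constructor <;> linarith [h.1, h.2]

lemma VV_p : VV 3.924014 ≤ -13.4902675 := by
  rw [show (3.924014:ℝ) = 1962007/500000 by norm_num]
  unfold VV vv
  linarith [lg_p3.2, lg_p5.2, lg_p7.2, Real.log_two_gt_d9, Real.log_two_lt_d9]

lemma VV_n : -13.4902685 ≤ VV 3.92401399 := by
  rw [show (3.92401399:ℝ) = 392401399/100000000 by norm_num]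
  unfold VV vv
  linarith [lg_n3.1, lg_n5.1, lg_n7.1, Real.log_two_gt_d9, Real.log_two_lt_d9]

lemma VV_x : VV 28.265057 ≤ 30.129933 := by
  rw [show (28.265057:ℝ) = 28265057/1000000 by norm_num]
  unfold VV vv
  linarith [lg_x3.2, lg_x5.2, lg_x7.2, Real.log_two_gt_d9, Real.log_two_lt_d9]

lemma tan30 : Real.arctan (1/Real.sqrt 3) = Real.pi/6 := by
  rw [← Real.tan_pi_div_six]
  exact Real.arctan_tan (by linarith [Real.pi_pos]) (by linarith [Real.pi_pos])

lemma sq3 : 0 < Real.sqrt 3 ∧ Real.sqrt 3 ^ 2 = 3 := ⟨by positivity, Real.sq_sqrt (by norm_num)⟩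

lemma dP_small (η : ℝ) (h0 : 3.9 < η) (h1 : η < 4) :
    dP η = 2*(Real.pi - Real.arctan ((15*η^2-105)/(71*η-η^3))) := by
  unfold dP
  have e1 : Real.arctan (3/η) + Real.arctan (5/η) = Real.arctan (8*η/(η^2-15)) := by
    have hp : 0 < η := by linarith
    rw [Real.arctan_add]
    · congr 1
      have : η^2-15 ≠ 0 := by nlinarith
      have h2 : 1 - 3/η*(5/η) = (η^2-15)/η^2 := by field_simp; norm_num
      rw [h2]; field_simp; norm_num
    · rw [div_mul_div_comm, div_lt_one (by positivity)]; nlinarith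
  have hq : 0 < η^2-15 := by nlinarith
  rw [e1, Real.arctan_add_eq_add_pi]
  · have h2 : (8*η/(η^2-15)+7/η)/(1 - 8*η/(η^2-15)*(7/η)) = -((15*η^2-105)/(71*η-η^3)) := by
      have hp : 0 < η := by linarith
      have h3 : 1 - 8*η/(η^2-15)*(7/η) = -((71-η^2)/(η^2-15)) := by field_simp; ring
      rw [h3]
      have h4 : 0 < 71-η^2 := by nlinarith
      have h5 : 71*η-η^3 = η*(71-η^2) := by ring
      rw [h5]
      field_simp; ring
    rw [h2, Real.arctan_neg]; ring
  · have hp : 0 < η := by linarith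
    rw [div_mul_div_comm, one_lt_div (by positivity)]
    nlinarith [mul_pos hp hq, mul_pos hp hp]
  · positivity

lemma dP_p : dP 3.924014 < 2*Real.pi - th := by
  rw [dP_small _ (by norm_num) (by norm_num)]
  have : Real.pi/6 < Real.arctan ((15*(3.924014:ℝ)^2-105)/(71*3.924014-3.924014^3)) := by
    rw [← tan30]
    apply Real.arctan_strictMono
    rw [div_lt_iff₀ sq3.1]
    refine lt_of_pow_lt_pow_left₀ 2 (by have := sq3.1; positivity) ?_
    rw [mul_pow, sq3.2]; norm_num
  unfold th; linarith

lemma dP_n : 2*Real.pi - th ≤ dP 3.92401399 := by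
  rw [dP_small _ (by norm_num) (by norm_num)]
  have : Real.arctan ((15*(3.92401399:ℝ)^2-105)/(71*3.92401399-3.92401399^3)) < Real.pi/6 := by
    rw [← tan30]
    apply Real.arctan_strictMono
    rw [lt_div_iff₀ sq3.1]
    refine lt_of_pow_lt_pow_left₀ 2 (by norm_num) ?_
    rw [mul_pow, sq3.2]; norm_num
  unfold th; linarith

lemma dP_x : dP 28.265057 < th := by
  unfold dP
  rw [Real.arctan_add (by norm_num), Real.arctan_add (by norm_num)]
  have : Real.arctan (((3/28.265057+5/28.265057)/(1-3/28.265057*(5/28.265057))+7/28.265057)/(1-(3/28.265057+5/28.265057)/(1-3/28.265057*(5/28.265057))*(7/28.265057:ℝ))) < Real.pi/6 := by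
    rw [← tan30]
    apply Real.arctan_strictMono
    rw [lt_div_iff₀ sq3.1]
    refine lt_of_pow_lt_pow_left₀ 2 (by norm_num) ?_
    rw [mul_pow, sq3.2]; norm_num
  unfold th; linarith

end PB

end

section
open Filter Topology MeasureTheory Set Polynomial

namespace PB

lemma TT_TR (m : ℕ) : TR (TT m) (R3 (3*m) (5*m) (7*m)) ((-1)^(3*m+5*m+7*m)) := T3_TR _ _ _

lemma forms (m : ℕ) : ∃ ab : ℤ × ℤ, (ab.2:ℝ) = 2*DD m*Bt (TT m) ∧
    (ab.2:ℝ)*(Real.sqrt 3*Real.arctan (Real.sqrt 3/1)) - ab.1 = 2*Real.sqrt 3*DD m/Real.pi * ∫ y in Ioi (0:ℝ), (TT m).eval y*Iker y := by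
  obtain ⟨a, b, h1, h2⟩ := lin_form (TT_TR m) (neg_one_pow_eq_or _ _) (fun n => R3_int _ _ _ n) (DD m) (fun n => DD_int m n)
  exact ⟨(a, b), h1, h2⟩

lemma main (κ : ℝ) (hκ : κ > 4.60106) :
      {pq : ℤ × ℕ+ |
        |Real.sqrt 3 * Real.arctan (Real.sqrt 3 / 1) -
            (pq.1 : ℝ) / ((pq.2 : ℕ) : ℝ)| <
          ((pq.2 : ℕ) : ℝ) ^ (-κ)}.Finite := by
  choose f hf1 hf2 using forms
  have hpi := Real.pi_pos
  have hs : 0 < Real.sqrt 3 := by positivity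
  have hth := th_bd
  have hp3 := Real.pi_gt_three
  have hiI : ∀ m : ℕ, IntegrableOn (fun y => (TT m).eval y * Iker y) (Ioi 0) := fun m => (I_int (TT_TR m)).1
  have hiB : ∀ m : ℕ, IntegrableOn (fun y => (TT m).eval y * Bker y) (Ioi 0) := fun m => (Bt_int (TT_TR m)).1
  have hB : ∀ m, ∫ y in Ioi (0:ℝ), (TT m).eval y * Bker y = Bt (TT m) := fun m => (Bt_int (TT_TR m)).2
  have hI0 : ∀ m, 0 ≤ ∫ y in Ioi (0:ℝ), (TT m).eval y*Iker y := fun m =>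
    setIntegral_nonneg measurableSet_Ioi fun y hy => mul_nonneg (TT_nonneg m y (le_of_lt hy)) (Iker_bd y hy).1
  have hB0 : ∀ m, 0 ≤ Bt (TT m) := fun m => by
    rw [← hB]
    exact setIntegral_nonneg measurableSet_Ioi fun y hy => mul_nonneg (TT_nonneg m y (le_of_lt hy)) (Bker_bd y hy).1
  have hDp : ∀ m, (0:ℝ) < DD m := fun m => by exact_mod_cast DD_pos m
  have hD : ∀ᶠ m : ℕ in atTop, (DD m:ℝ) ≤ Real.exp ((4.009796+1e-7)*m) := by
    filter_upwards [logDD 1e-7 (by norm_num)] with m hm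
    rw [← Real.log_le_iff_le_exp (hDp m)]
    exact hm
  refine meas_lemma _ κ 9.480471 34.13973 43.620202 (fun m => (f m).1) (fun m => (f m).2) (by norm_num) (by norm_num) (by norm_num) ?_ ?_ ?_ ?_ ?_
  · refine lt_of_le_of_lt ?_ hκ; norm_num
  · refine lt_of_le_of_lt ?_ hκ; norm_num
  · filter_upwards [hD, int_upper Iker (2*Real.pi-th) 3.924014 (by norm_num) Iker_bd hiI dP_p 1e-7 (by norm_num) (2*Real.sqrt 3/Real.pi) (by positivity)] with m h1 h2
    have hI := hI0 m
    rw [hf2, abs_of_nonneg (mul_nonneg (by have := hDp m; positivity) hI)]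
    calc 2*Real.sqrt 3*DD m/Real.pi * ∫ y in Ioi (0:ℝ), (TT m).eval y*Iker y
        = DD m * (2*Real.sqrt 3/Real.pi * ∫ y in Ioi (0:ℝ), (TT m).eval y*Iker y) := by ring
      _ ≤ Real.exp ((4.009796+1e-7)*m) * Real.exp ((VV 3.924014 + 1e-7)*m) := by
          apply mul_le_mul h1 h2 (mul_nonneg (by positivity) hI) (Real.exp_pos _).le
      _ = Real.exp (((4.009796+1e-7) + (VV 3.924014 + 1e-7))*m) := by rw [← Real.exp_add]; congr 1; ring
      _ ≤ _ := by
          apply Real.exp_le_exp.mpr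
          refine mul_le_mul_of_nonneg_right ?_ (Nat.cast_nonneg m)
          have := VV_p
          norm_num at this ⊢
          linarith
  · filter_upwards [hD, int_upper Bker th 28.265057 (by norm_num) Bker_bd hiB dP_x 1e-7 (by norm_num) 2 (by positivity)] with m h1 h2
    have hI := hB0 m
    rw [hB] at h2
    rw [hf1, abs_of_nonneg (mul_nonneg (by have := hDp m; positivity) hI)]
    calc 2*DD m*Bt (TT m) = DD m * (2*Bt (TT m)) := by ring
      _ ≤ Real.exp ((4.009796+1e-7)*m) * Real.exp ((VV 28.265057 + 1e-7)*m) := by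
          apply mul_le_mul h1 h2 (mul_nonneg (by positivity) hI) (Real.exp_pos _).le
      _ = Real.exp (((4.009796+1e-7) + (VV 28.265057 + 1e-7))*m) := by rw [← Real.exp_add]; congr 1; ring
      _ ≤ _ := by
          apply Real.exp_le_exp.mpr
          refine mul_le_mul_of_nonneg_right ?_ (Nat.cast_nonneg m)
          have := VV_x
          norm_num at this ⊢
          linarith
  · filter_upwards [eventually_gt_atTop 0, int_upper Bker th 28.265057 (by norm_num) Bker_bd hiB dP_x 1e-7 (by norm_num) 1 (by positivity),
      int_lower Iker (2*Real.pi-th) 3.92401399 1 (by norm_num) (by linarith [hth.2]) one_pos (fun y hy => (Iker_bd y hy).1) Iker_low hiI dP_n 1e-7 (by norm_num) (Real.pi/Real.sqrt 3) (by positivity)] with m h0 h2 h3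
    have hm : (0:ℝ) < m := by exact_mod_cast h0
    have hBp : 0 < Bt (TT m) := by
      rw [← hB]
      refine lt_of_lt_of_le ?_ (int_lower0 Bker th 1 1 one_pos (by linarith [hth.1]) one_pos (fun y hy => (Bker_bd y hy).1) Bker_low m h0 (hiB m))
      positivity
    rw [hB, one_mul] at h2
    have hDm := hDp m
    rw [hf2, hf1, abs_of_nonneg (mul_nonneg (by positivity) (hI0 m)), abs_of_pos (by positivity)]
    refine ⟨by positivity, ?_⟩
    calc Real.exp (-43.620202*m) * (2*DD m*Bt (TT m)) ≤ Real.exp (-43.620202*m) * (2*DD m*Real.exp ((VV 28.265057 + 1e-7)*m)) := by gcongr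
      _ = 2*DD m*Real.exp ((-43.620202 + (VV 28.265057 + 1e-7))*m) := by
          rw [add_mul (-43.620202), Real.exp_add]; ring
      _ ≤ 2*DD m*Real.exp ((VV 3.92401399 - 1e-7)*m) := by
          refine mul_le_mul_of_nonneg_left ?_ (by positivity)
          apply Real.exp_le_exp.mpr
          refine mul_le_mul_of_nonneg_right ?_ hm.le
          have := VV_x
          have := VV_n
          norm_num at *
          linarith
      _ = 2*Real.sqrt 3*DD m/Real.pi * (Real.pi/Real.sqrt 3*Real.exp ((VV 3.92401399 - 1e-7)*m)) := by
          field_simp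
      _ ≤ _ := mul_le_mul_of_nonneg_left h3 (by positivity)

end PB

end

theorem irrationality_measure_beta_18 :
    ∀ κ : ℝ, κ > 4.60106 →
      {pq : ℤ × ℕ+ |
        |Real.sqrt 3 * Real.arctan (Real.sqrt 3 / 1) -
            (pq.1 : ℝ) / ((pq.2 : ℕ) : ℝ)| <
          ((pq.2 : ℕ) : ℝ) ^ (-κ)}.Finite := by
  intro κ hκ
  exact PB.main κ hκ
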